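/- arXiv:0910.4857 — 5 statements merged into one kernel-verified Lean document; each statement's English description precedes it below -/
import Mathlib

section
/- Let ⟨A|R⟩ be an equivalence presentation satisfying the condition C(4). Then the monoid presented is right cancellative if and only if R contains no relation of the form (ra, sa) where a ∈ A and r, s are words over A with r ≠ s. -/
open FreeMonoid

/-- The congruence on the free monoid generated by a presentation `R`. -/
def presCon {A : Type*} (R : Set (FreeMonoid A × FreeMonoid A)) : Con (FreeMonoid A) :=
  conGen fun u v => (u, v) ∈ R

/-- `w` is a relation word of the presentation `R`. -/
def IsRelWord {A : Type*} (R : Set (FreeMonoid A × FreeMonoid A)) (w : FreeMonoid A) : Prop :=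
  ∃ p ∈ R, p.1 = w ∨ p.2 = w

/-- `u` is a factor of `w`. -/
def IsFactor {A : Type*} (u w : FreeMonoid A) : Prop := ∃ p q, w = p * u * q

/-- `u` is a piece of the presentation `R`: it is empty, or occurs as a factor of two
distinct relation words, or in two different (possibly overlapping) positions within
one relation word. -/
def IsPiece {A : Type*} (R : Set (FreeMonoid A × FreeMonoid A)) (u : FreeMonoid A) : Prop :=
  u = 1 ∨
  (∃ w₁ w₂, IsRelWord R w₁ ∧ IsRelWord R w₂ ∧ w₁ ≠ w₂ ∧ IsFactor u w₁ ∧ IsFactor u w₂) ∨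
  (∃ w, IsRelWord R w ∧ ∃ p q p' q', w = p * u * q ∧ w = p' * u * q' ∧ p ≠ p')

/-- The small overlap condition `C(m)`: no relation word is a product of strictly fewer
than `m` pieces. -/
def SmallOverlapC {A : Type*} (R : Set (FreeMonoid A × FreeMonoid A)) (m : ℕ) : Prop :=
  ∀ w, IsRelWord R w → ∀ l : List (FreeMonoid A),
    (∀ x ∈ l, IsPiece R x) → l.prod = w → m ≤ l.length

/-- `⟨A|R⟩` is an equivalence presentation: `R` is an equivalence relation on the set
of relation words. -/
def IsEquivPres {A : Type*} (R : Set (FreeMonoid A × FreeMonoid A)) : Prop :=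
  (∀ w, IsRelWord R w → (w, w) ∈ R) ∧
  (∀ u v, (u, v) ∈ R → (v, u) ∈ R) ∧
  (∀ u v w, (u, v) ∈ R → (v, w) ∈ R → (u, w) ∈ R)

namespace SO

variable {A : Type*}

inductive Step (E : List A → List A → Prop) : List A → List A → Prop
  | head (S S' r : List A) (h : E S S') : Step E (S ++ r) (S' ++ r)
  | cons (a : A) (x y : List A) (h : Step E x y) : Step E (a :: x) (a :: y)

inductive Chain (E : List A → List A → Prop) : ℕ → List A → List A → Prop
  | nil (x : List A) : Chain E 0 x x
  | cons (n : ℕ) (x y z : List A) (h : Step E x y) (t : Chain E n y z) : Chain E (n + 1) x z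

theorem Chain.trans {E : List A → List A → Prop} {n m : ℕ} {x y z : List A}
    (h : Chain E n x y) (h' : Chain E m y z) : Chain E (n + m) x z := by
  induction h with
  | nil x => simpa using h'
  | cons n x y w hs t ih =>
    have := Chain.cons _ _ _ _ hs (ih h')
    rwa [show n + 1 + m = n + m + 1 by omega]

theorem Chain.one {E : List A → List A → Prop} {x y : List A}
    (h : Step E x y) : Chain E 1 x y := Chain.cons 0 _ _ _ h (Chain.nil _)

theorem Step.left {E : List A → List A → Prop} (l : List A) {x y : List A}
    (h : Step E x y) : Step E (l ++ x) (l ++ y) := by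
  induction l with
  | nil => exact h
  | cons a l ih => exact Step.cons _ _ _ ih

theorem Step.right {E : List A → List A → Prop} (l : List A) {x y : List A}
    (h : Step E x y) : Step E (x ++ l) (y ++ l) := by
  induction h with
  | head S S' r h => simpa using Step.head S S' (r ++ l) h
  | cons a x y h ih => exact Step.cons _ _ _ ih

theorem Step.symm {E : List A → List A → Prop} (hE : ∀ u v, E u v → E v u) {x y : List A}
    (h : Step E x y) : Step E y x := by
  induction h with
  | head S S' r h => exact Step.head _ _ _ (hE _ _ h)
  | cons a x y h ih => exact Step.cons _ _ _ ih

theorem Chain.left {E : List A → List A → Prop} (l : List A) {n : ℕ} {x y : List A}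
    (h : Chain E n x y) : Chain E n (l ++ x) (l ++ y) := by
  induction h with
  | nil x => exact Chain.nil _
  | cons n x y w hs t ih => exact Chain.cons _ _ _ _ (hs.left l) ih

theorem Chain.right {E : List A → List A → Prop} (l : List A) {n : ℕ} {x y : List A}
    (h : Chain E n x y) : Chain E n (x ++ l) (y ++ l) := by
  induction h with
  | nil x => exact Chain.nil _
  | cons n x y w hs t ih => exact Chain.cons _ _ _ _ (hs.right l) ih

theorem Chain.symm {E : List A → List A → Prop} (hE : ∀ u v, E u v → E v u)
    {n : ℕ} {x y : List A} (h : Chain E n x y) : Chain E n y x := by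
  induction h with
  | nil x => exact Chain.nil _
  | cons n x y w hs t ih => exact ih.trans (Chain.one (hs.symm hE))

theorem Chain.decomp {E : List A → List A → Prop} {n : ℕ} {x y : List A}
    (h : Chain E n x y) (a : A) (u : List A) (hx : x = a :: u) :
    (∃ v, y = a :: v ∧ Chain E n u v) ∨
    ∃ i m u' S S' r, i + 1 + m = n ∧ Chain E i u u' ∧ a :: u' = S ++ r ∧ E S S' ∧
      Chain E m (S' ++ r) y := by
  induction h generalizing u with
  | nil x => exact Or.inl ⟨u, hx, Chain.nil _⟩
  | cons n x y w hs t ih =>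
    cases hs with
    | head S S' r h =>
      exact Or.inr ⟨0, n, u, S, S', r, by omega, Chain.nil _, hx.symm, h, t⟩
    | cons b x y h =>
      obtain ⟨rfl, rfl⟩ := List.cons.inj hx
      rcases ih y rfl with ⟨v, hv, hc⟩ | ⟨i, m, u', S, S', r, h1, h2, h3, h4, h5⟩
      · exact Or.inl ⟨v, hv, Chain.cons _ _ _ _ h hc⟩
      · exact Or.inr ⟨i + 1, m, u', S, S', r, by omega, Chain.cons _ _ _ _ h h2, h3, h4, h5⟩

structure Hyp (E : List A → List A → Prop) (P : List A → Prop) : Prop where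
  symm : ∀ u v, E u v → E v u
  trans : ∀ u v w, E u v → E v w → E u w
  nil : P []
  piece : ∀ w v l m r l' r', E w w → E v v → w = l ++ (m ++ r) → v = l' ++ (m ++ r') →
    (w ≠ v ∨ l ≠ l') → P m
  small : ∀ u v, P u → P v → ¬ E (u ++ v) (u ++ v)

theorem Hyp.small1 {E : List A → List A → Prop} {P : List A → Prop} (H : Hyp E P)
    {u : List A} (h : P u) : ¬ E u u := by
  simpa using H.small u [] h H.nil

theorem Hyp.refl {E : List A → List A → Prop} {P : List A → Prop} (H : Hyp E P)
    {u v : List A} (h : E u v) : E u u := H.trans _ _ _ h (H.symm _ _ h)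

inductive Cl (E : List A → List A → Prop) (P : List A → Prop) : List A → List A → Prop
  | base (W y : List A) (h : E W W) : Cl E P W (W ++ y)
  | step (W1 W2 U0 U q x : List A) (h : E (W1 ++ W2) (W1 ++ W2)) (hP : P W2)
      (hU : E U0 U) (hq : U0 = W2 ++ q) (hx : Cl E P U x) : Cl E P (W1 ++ W2) (W1 ++ x)

theorem Cl.split {E : List A → List A → Prop} {P : List A → Prop} (H : Hyp E P)
    {W x : List A} (h : Cl E P W x) :
    ∃ Q Z t, W = Q ++ Z ∧ x = Q ++ t ∧ P Z ∧ E W W := by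
  cases h with
  | base W y h => exact ⟨_, [], y, by simp, rfl, H.nil, h⟩
  | step W1 W2 U0 U q x h hP hU hq hx => exact ⟨W1, W2, x, rfl, rfl, hP, h⟩

theorem Cl.head_eq {E : List A → List A → Prop} {P : List A → Prop} (H : Hyp E P)
    {W x S z : List A} (h : Cl E P W x) (hS : E S S) (hx : x = S ++ z) : S = W := by
  obtain ⟨Q, Z, t, rfl, rfl, hZ, hW⟩ := h.split H
  by_contra hne
  rcases List.append_eq_append_iff.1 hx with ⟨c, rfl, rfl⟩ | ⟨c, rfl, rfl⟩
  · have := H.piece (Q ++ c) (Q ++ Z) [] Q c [] Z hS hW (by simp) (by simp) (Or.inl hne)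
    exact H.small _ _ this hZ hW
  · have := H.piece S (S ++ c ++ Z) [] S [] [] (c ++ Z) hS hW (by simp) (by simp) (Or.inl hne)
    exact H.small1 this hS

theorem Cl.pres {E : List A → List A → Prop} {P : List A → Prop} (H : Hyp E P)
    {W x : List A} (h : Cl E P W x) : ∀ (l S S' r : List A), l ≠ [] → E S S' →
      x = l ++ (S ++ r) → Cl E P W (l ++ (S' ++ r)) := by
  induction h with
  | base W y h =>
    intro l S S' r hl hS hx
    rcases List.append_eq_append_iff.1 hx with ⟨c, rfl, rfl⟩ | ⟨m, rfl, hm⟩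
    · simpa using Cl.base W (c ++ (S' ++ r)) h
    · rcases List.append_eq_append_iff.1 hm with ⟨c, rfl, rfl⟩ | ⟨q, rfl, rfl⟩
      · have := H.piece (l ++ (S ++ c)) S l S c [] [] h (H.refl hS) (by simp) (by simp)
          (Or.inr hl)
        exact absurd (H.refl hS) (H.small1 this)
      · have := H.piece (l ++ m) (m ++ q) l m [] [] q h (H.refl hS) (by simp) (by simp)
          (Or.inr hl)
        exact Cl.step l m (m ++ q) S' q _ h this hS rfl
          (Cl.base _ _ (H.refl (H.symm _ _ hS)))
  | step W1 W2 U0 U q x h hP hU hq hx' ih =>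
    intro l S S' r hl hS hx
    rcases List.append_eq_append_iff.1 hx with ⟨c, rfl, hc⟩ | ⟨m, rfl, hm⟩
    · by_cases hc0 : c = []
      · subst hc0
        have hSU := hx'.head_eq H (H.refl hS) hc
        subst hSU
        have := Cl.step W1 W2 U0 S' q (S' ++ r) h hP (H.trans _ _ _ hU hS) hq
          (Cl.base _ _ (H.refl (H.symm _ _ hS)))
        simpa using this
      · have := Cl.step W1 W2 U0 U q _ h hP hU hq (ih c S S' r hc0 hS hc)
        simpa using this
    · by_cases hm0 : m = []
      · subst hm0
        have hSU := hx'.head_eq H (H.refl hS) (z := r) (by simpa using hm.symm)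
        subst hSU
        have := Cl.step l W2 U0 S' q (S' ++ r) (by simpa using h) hP (H.trans _ _ _ hU hS) hq
          (Cl.base _ _ (H.refl (H.symm _ _ hS)))
        simpa using this
      · exfalso
        have hSS := H.refl hS
        rcases List.append_eq_append_iff.1 hm with ⟨c, rfl, hc⟩ | ⟨p, rfl, hp⟩
        · have := H.piece (l ++ (S ++ c) ++ W2) S l S (c ++ W2) [] [] h hSS (by simp) (by simp)
            (Or.inr hl)
          exact H.small1 this hSS
        · have hmP := H.piece (l ++ m ++ W2) (m ++ p) l m W2 [] p h hSS (by simp) (by simp)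
            (Or.inr hl)
          obtain ⟨Q, Z, t, rfl, rfl, hZ, hUU⟩ := hx'.split H
          rcases List.append_eq_append_iff.1 hp with ⟨c, rfl, rfl⟩ | ⟨c, rfl, rfl⟩
          · have := H.piece (m ++ (Q ++ c)) (Q ++ Z) m Q c [] Z hSS hUU (by simp) (by simp)
              (Or.inr hm0)
            exact H.small _ _ this hZ hUU
          · have := H.piece (m ++ p) (p ++ c ++ Z) m p [] [] (c ++ Z) hSS hUU (by simp) (by simp)
              (Or.inr hm0)
            exact H.small _ _ hmP this hSS

theorem Step.form {E : List A → List A → Prop} {x y : List A} (h : Step E x y) :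
    ∃ l S S' r, E S S' ∧ x = l ++ (S ++ r) ∧ y = l ++ (S' ++ r) := by
  induction h with
  | head S S' r h => exact ⟨[], S, S', r, h, rfl, rfl⟩
  | cons a x y h ih =>
    obtain ⟨l, S, S', r, h1, rfl, rfl⟩ := ih
    exact ⟨a :: l, S, S', r, h1, rfl, rfl⟩

theorem Cl.chain {E : List A → List A → Prop} {P : List A → Prop} (H : Hyp E P)
    {W : List A} {b : A} {n : ℕ} {u v : List A} (hc : Chain E n u v)
    (h : Cl E P W (b :: u)) : Cl E P W (b :: v) := by
  induction hc with
  | nil x => exact h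
  | cons n x y w hs t ih =>
    apply ih
    obtain ⟨l, S, S', r, h1, rfl, rfl⟩ := hs.form
    exact h.pres H (b :: l) S S' r (by simp) h1 rfl

theorem cancel {E : List A → List A → Prop} {P : List A → Prop} (H : Hyp E P)
    (hL : ∀ a r s, E (a :: r) (a :: s) → r = s) (n : ℕ) :
    ∀ (a : A) (u v : List A), Chain E n (a :: u) (a :: v) → ∃ m ≤ n, Chain E m u v := by
  induction n using Nat.strong_induction_on with
  | _ n IH =>
  intro a u v hc
  have IHl : ∀ (l : List A) (k : ℕ) (x y : List A), k < n → Chain E k (l ++ x) (l ++ y) →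
      ∃ m ≤ k, Chain E m x y := by
    intro l
    induction l with
    | nil => intro k x y _ h; exact ⟨k, le_rfl, h⟩
    | cons b l ihl =>
      intro k x y hk h
      obtain ⟨m, hm, h'⟩ := IH k hk b _ _ h
      obtain ⟨m', hm', h''⟩ := ihl m x y (by omega) h'
      exact ⟨m', by omega, h''⟩
  have done : ∀ k < n, Chain E k (a :: u) (a :: v) → ∃ m ≤ n, Chain E m u v := by
    intro k hk h
    obtain ⟨m, hm, h'⟩ := IH k hk a u v h
    exact ⟨m, by omega, h'⟩
  have nonnil : ∀ S S', E S S' → S ≠ [] := by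
    rintro S S' h rfl
    exact H.small1 H.nil (H.refl h)
  rcases hc.decomp a u rfl with ⟨v', hv, h⟩ | ⟨i, m, u', S, S', r, h1, h2, h3, h4, h5⟩
  · obtain ⟨_, rfl⟩ := List.cons.inj hv
    exact ⟨n, le_rfl, h⟩
  by_cases hSS : S = S'
  · subst hSS
    rw [← h3] at h5
    exact done (i + m) (by omega) ((h2.left [a]).trans h5)
  obtain ⟨a', S0, rfl⟩ := List.exists_cons_of_ne_nil (nonnil _ _ h4)
  obtain ⟨b, S0', rfl⟩ := List.exists_cons_of_ne_nil (nonnil _ _ (H.symm _ _ h4))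
  obtain ⟨rfl, rfl⟩ := List.cons.inj h3
  have hab : a ≠ b := by
    rintro rfl
    exact hSS (by rw [hL _ _ _ h4])
  rcases h5.decomp b (S0' ++ r) rfl with ⟨v', hv, h⟩ | ⟨j, k, u'', T, T', z, g1, g2, g3, g4, g5⟩
  · exact absurd (List.cons.inj hv).1 hab
  have hcl : Cl E P (b :: S0') (b :: u'') :=
    Cl.chain H g2 (Cl.base (b :: S0') r (H.refl (H.symm _ _ h4)))
  have hT := hcl.head_eq H (H.refl g4) g3
  subst hT
  obtain ⟨_, rfl⟩ := List.cons.inj g3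
  obtain ⟨j', hj', hrz⟩ := IHl S0' j r z (by omega) g2
  have c1 := h2.left [a]
  have c2 := Chain.one (Step.head _ _ r (H.trans _ _ _ h4 g4))
  have c3 := hrz.left T'
  exact done _ (by omega) (((c1.trans c2).trans c3).trans g5)

def ER (R : Set (FreeMonoid A × FreeMonoid A)) (u v : List A) : Prop :=
  (ofList u.reverse, ofList v.reverse) ∈ R

theorem hyp (R : Set (FreeMonoid A × FreeMonoid A)) (heq : IsEquivPres R)
    (hC : SmallOverlapC R 4) : Hyp (ER R) (fun u => IsPiece R (ofList u.reverse)) where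
  symm u v h := heq.2.1 _ _ h
  trans u v w h h' := heq.2.2 _ _ _ h h'
  nil := Or.inl rfl
  piece := by
    intro w v l m r l' r' hw hv ew ev hne
    have hw' : IsRelWord R (ofList w.reverse) := ⟨_, hw, Or.inl rfl⟩
    have hv' : IsRelWord R (ofList v.reverse) := ⟨_, hv, Or.inl rfl⟩
    have fw : ofList w.reverse = ofList r.reverse * ofList m.reverse * ofList l.reverse := by
      rw [ew]; simp [← ofList_append]
    have fv : ofList v.reverse = ofList r'.reverse * ofList m.reverse * ofList l'.reverse := by
      rw [ev]; simp [← ofList_append]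
    by_cases hwv : w = v
    · subst hwv
      refine Or.inr (Or.inr ⟨_, hw', _, _, _, _, fw, fv, ?_⟩)
      intro hr
      have hr' : r = r' := by simpa using hr
      subst hr'
      rcases hne with h | h
      · exact h rfl
      · rw [ew] at ev
        exact h (List.append_cancel_right ev)
    · refine Or.inr (Or.inl ⟨_, _, hw', hv', ?_, ⟨_, _, fw⟩, ⟨_, _, fv⟩⟩)
      intro h
      exact hwv (by simpa using h)
  small := by
    intro u v hu hv h
    have := hC _ ⟨_, h, Or.inl rfl⟩ [ofList v.reverse, ofList u.reverse]
      (by simpa using ⟨hv, hu⟩) (by simp [← ofList_append])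
    simp at this

theorem con_of_chain (R : Set (FreeMonoid A × FreeMonoid A)) {n : ℕ} {x y : List A}
    (h : Chain (ER R) n x y) : presCon R (ofList x.reverse) (ofList y.reverse) := by
  induction h with
  | nil x => exact (presCon R).refl _
  | cons n x y w hs t ih =>
    refine (presCon R).trans ?_ ih
    obtain ⟨l, S, S', r, h1, rfl, rfl⟩ := hs.form
    have h2 : presCon R (ofList S.reverse) (ofList S'.reverse) := ConGen.Rel.of _ _ h1
    have := (presCon R).mul ((presCon R).mul ((presCon R).refl (ofList r.reverse)) h2)
      ((presCon R).refl (ofList l.reverse))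
    simpa [← ofList_append] using this

theorem chain_of_con (R : Set (FreeMonoid A × FreeMonoid A)) (heq : IsEquivPres R)
    {x y : FreeMonoid A} (h : presCon R x y) :
    ∃ n, Chain (ER R) n (toList x).reverse (toList y).reverse := by
  have h' : ConGen.Rel (fun u v => (u, v) ∈ R) x y := h
  induction h' with
  | of x y hxy =>
    refine ⟨1, Chain.one ?_⟩
    have := Step.head (E := ER R) (toList x).reverse (toList y).reverse []
      (by simpa [ER] using hxy)
    simpa using this
  | refl x => exact ⟨0, Chain.nil _⟩
  | symm _ ih => 
    obtain ⟨n, hn⟩ := ih (by assumption)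
    exact ⟨n, hn.symm (fun u v h => heq.2.1 _ _ h)⟩
  | trans _ _ ih1 ih2 =>
    obtain ⟨n, hn⟩ := ih1 (by assumption)
    obtain ⟨m, hm⟩ := ih2 (by assumption)
    exact ⟨_, hn.trans hm⟩
  | mul _ _ ih1 ih2 =>
    obtain ⟨n, hn⟩ := ih1 (by assumption)
    obtain ⟨m, hm⟩ := ih2 (by assumption)
    have := (hm.right _).trans (hn.left _)
    exact ⟨_, by simpa [toList_mul] using this⟩

theorem Chain.eq_of_irred {E : List A → List A → Prop} {n : ℕ} {x y : List A}
    (h : Chain E n x y) (hx : ∀ l S S' r, E S S' → x ≠ l ++ (S ++ r)) : x = y := by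
  cases h with
  | nil => rfl
  | cons n x y w hs t =>
    obtain ⟨l, S, S', r, h1, h2, _⟩ := hs.form
    exact absurd h2 (hx l S S' r h1)

end SO

/-- **Theorem.** The monoid presented by a C(4) equivalence presentation `⟨A|R⟩` is
right cancellative if and only if `R` contains no relation of the form `(r a, s a)`
with `a ∈ A` and `r ≠ s`. -/
theorem statement14 {A : Type*} (R : Set (FreeMonoid A × FreeMonoid A))
    (heq : IsEquivPres R) (hC : SmallOverlapC R 4) :
    (∀ x y z : (presCon R).Quotient, y * x = z * x → y = z) ↔
      ¬ ∃ (a : A) (r s : FreeMonoid A), r ≠ s ∧ (r * of a, s * of a) ∈ R := by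
  have H := SO.hyp R heq hC
  constructor
  · rintro hcan ⟨a, r, s, hrs, h⟩
    have hm : presCon R (r * of a) (s * of a) := ConGen.Rel.of _ _ h
    have h1 : presCon R r s := by
      have := hcan (of a : FreeMonoid A) r s (by
        rw [← Con.coe_mul, ← Con.coe_mul]; exact (Con.eq _).2 hm)
      exact (Con.eq _).1 this
    obtain ⟨n, hn⟩ := SO.chain_of_con R heq h1
    apply hrs
    have : (toList r).reverse = (toList s).reverse := by
      apply hn.eq_of_irred
      intro l S S' t hS hx
      have hSS := H.refl hS
      have hra : SO.ER R (a :: (toList r).reverse) (a :: (toList r).reverse) := by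
        apply H.refl (v := a :: (toList s).reverse)
        simpa [SO.ER, ofList_append] using h
      have := H.piece _ S (a :: l) S t [] [] hra hSS (by simp [hx]) (by simp) (Or.inr (by simp))
      exact H.small1 this hSS
    simpa using this
  · intro hno
    have hL : ∀ a r s, SO.ER R (a :: r) (a :: s) → r = s := by
      intro a r s h
      by_contra hne
      refine hno ⟨a, ofList r.reverse, ofList s.reverse, by simpa using hne, ?_⟩
      simpa [SO.ER, ofList_append] using h
    intro x y z
    induction x using Con.induction_on with | _ x =>
    induction y using Con.induction_on with | _ y =>
    induction z using Con.induction_on with | _ z =>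
    intro h
    rw [← Con.coe_mul, ← Con.coe_mul] at h
    obtain ⟨n, hn⟩ := SO.chain_of_con R heq ((Con.eq _).1 h)
    rw [toList_mul, toList_mul, List.reverse_append, List.reverse_append] at hn
    have key : ∀ (l : List A) (k : ℕ) (u v : List A), SO.Chain (SO.ER R) k (l ++ u) (l ++ v) →
        ∃ m, SO.Chain (SO.ER R) m u v := by
      intro l
      induction l with
      | nil => intro k u v h; exact ⟨k, h⟩
      | cons b l ih =>
        intro k u v h
        obtain ⟨m, _, h'⟩ := SO.cancel H hL k b _ _ h
        exact ih m u v h'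
    obtain ⟨m, hm⟩ := key _ _ _ _ hn
    have := SO.con_of_chain R hm
    refine (Con.eq _).2 ?_
    simpa using this
end

section
/- Let ⟨A|R⟩ be a strongly C(4) presentation. Then the monoid presented is left cancellative if and only if R contains no relation of the form (ar, as) where a ∈ A and r, s are words over A. -/
open FreeMonoid

/-- No repeated relation words: no word occurs as a side of two distinct relations or
as both sides of a single relation. -/
def NoRepeatedRelWords {A : Type*} (R : Set (FreeMonoid A × FreeMonoid A)) : Prop :=
  (∀ p ∈ R, p.1 ≠ p.2) ∧
  (∀ p ∈ R, ∀ q ∈ R, p ≠ q → p.1 ≠ q.1 ∧ p.1 ≠ q.2 ∧ p.2 ≠ q.1 ∧ p.2 ≠ q.2)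

/-- The strong small overlap condition: C(m) together with no repeated relation words. -/
def StronglyC {A : Type*} (R : Set (FreeMonoid A × FreeMonoid A)) (m : ℕ) : Prop :=
  SmallOverlapC R m ∧ NoRepeatedRelWords R

namespace SO

variable {A : Type*} {R : Set (FreeMonoid A × FreeMonoid A)}

def Rl (R : Set (FreeMonoid A × FreeMonoid A)) (P Q : FreeMonoid A) : Prop :=
  (P, Q) ∈ R ∨ (Q, P) ∈ R

inductive Steps (R : Set (FreeMonoid A × FreeMonoid A)) :
    ℕ → FreeMonoid A → FreeMonoid A → Prop
  | refl (u) : Steps R 0 u u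
  | head (n x P Q y w) : Rl R P Q → Steps R n (x * Q * y) w → Steps R (n+1) (x * P * y) w

inductive St (R : Set (FreeMonoid A × FreeMonoid A)) : FreeMonoid A → FreeMonoid A → Prop
  | base (P t) : St R P (P * t)
  | lap (p z w W' s) : p ≠ 1 → z ≠ 1 → Rl R (z * w) W' → St R W' s → St R (p * z) (p * s)

theorem equidiv {a b c d : FreeMonoid A} (h : a * b = c * d) :
    (∃ e, a = c * e ∧ d = e * b) ∨ (∃ e, c = a * e ∧ b = e * d) := by
  have := (List.append_eq_append_iff (ws := toList a) (xs := toList b) (ys := toList c)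
    (zs := toList d)).1 h
  rcases this with ⟨e, h1, h2⟩ | ⟨e, h1, h2⟩
  · exact Or.inr ⟨ofList e, h1, h2⟩
  · exact Or.inl ⟨ofList e, h1, h2⟩

theorem eq_one_of_mul {a b : FreeMonoid A} (h : a * b = 1) : a = 1 ∧ b = 1 := by
  have : toList a ++ toList b = [] := h
  exact List.append_eq_nil_iff.1 this

theorem Rl.symm {P Q : FreeMonoid A} (h : Rl R P Q) : Rl R Q P := Or.symm h
theorem Rl.left {P Q : FreeMonoid A} (h : Rl R P Q) : IsRelWord R P := by
  rcases h with h | h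
  · exact ⟨_, h, Or.inl rfl⟩
  · exact ⟨_, h, Or.inr rfl⟩

theorem Rl.uniq (hC : StronglyC R 4) {P Q Q' : FreeMonoid A} (h : Rl R P Q) (h' : Rl R P Q') :
    Q = Q' := by
  obtain ⟨-, h1, h2⟩ := hC
  by_contra hne
  rcases h with h | h <;> rcases h' with h' | h'
  · exact (h2 _ h _ h' (by simpa using hne)).1 rfl
  · by_cases he : (P, Q) = (Q', P)
    · exact h1 _ h (by simp only [Prod.mk.injEq] at he; exact he.2.symm)
    · exact (h2 _ h _ h' he).2.1 rfl
  · by_cases he : (Q, P) = (P, Q')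
    · exact h1 _ h (by simp only [Prod.mk.injEq] at he; exact he.1)
    · exact (h2 _ h _ h' he).2.2.1 rfl
  · exact (h2 _ h _ h' (by simpa using hne)).2.2.2 rfl

/-- Two occurrences in different words or positions make a piece. -/
theorem piece_mk {u P V p q p' q' : FreeMonoid A} (hP : IsRelWord R P) (hV : IsRelWord R V)
    (h1 : P = p * u * q) (h2 : V = p' * u * q') (hne : P ≠ V ∨ p ≠ p') : IsPiece R u := by
  by_cases h : P = V
  · subst h
    exact Or.inr (Or.inr ⟨P, hP, p, q, p', q', h1, h2, by tauto⟩)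
  · exact Or.inr (Or.inl ⟨P, V, hP, hV, h, ⟨p, q, h1⟩, ⟨p', q', h2⟩⟩)

theorem not_two (hC : StronglyC R 4) {P u v : FreeMonoid A} (hP : IsRelWord R P)
    (h : P = u * v) (hu : IsPiece R u) (hv : IsPiece R v) : False := by
  have := hC.1 P hP [u, v] (by simp [hu, hv]) (by simp [h])
  simp at this

theorem not_piece (hC : StronglyC R 4) {P : FreeMonoid A} (hP : IsRelWord R P)
    (h : IsPiece R P) : False := by
  exact not_two hC hP (mul_one P).symm h (Or.inl rfl)

theorem ne_one (hC : StronglyC R 4) {P : FreeMonoid A} (hP : IsRelWord R P) : P ≠ 1 :=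
  fun h => not_piece hC hP (Or.inl h)

theorem no_inside (hC : StronglyC R 4) {P V x y : FreeMonoid A} (hP : IsRelWord R P)
    (hV : IsRelWord R V) (hx : x ≠ 1) (h : P = x * V * y) : False :=
  not_piece hC hV (piece_mk (p' := 1) (q' := 1) hP hV h (by simp) (Or.inr hx))

theorem St.pre (hC : StronglyC R 4) {P w : FreeMonoid A} (hP : IsRelWord R P) (h : St R P w) :
    ∃ p q s, P = p * q ∧ w = p * s ∧ ¬ IsPiece R p := by
  cases h with
  | base P t => exact ⟨P, 1, t, by simp, rfl, not_piece hC hP⟩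
  | lap p z w W' s hp hz hr hs =>
    refine ⟨p, z, s, rfl, rfl, fun hpp => not_two hC hP rfl hpp ?_⟩
    exact piece_mk (p := p) (q := 1) (p' := 1) (q' := w) hP hr.left (by simp) (by simp)
      (Or.inr hp)

theorem St.eq (hC : StronglyC R 4) {P V y : FreeMonoid A} (hP : IsRelWord R P)
    (hV : IsRelWord R V) (h : St R P (V * y)) : V = P := by
  obtain ⟨p, q, s, h1, h2, h3⟩ := h.pre hC hP
  by_contra hne
  rcases equidiv h2 with ⟨e, h4, h5⟩ | ⟨e, h4, h5⟩
  · exact h3 (piece_mk (p := 1) (q := q) (p' := 1) (q' := e) hP hV (by simpa using h1)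
      (by simpa using h4) (Or.inl (Ne.symm hne)))
  · exact not_piece hC hV (piece_mk (p := 1) (q := e * q) (p' := 1) (q' := 1) hP hV
      (by rw [h1, h4]; simp [mul_assoc]) (by simp) (Or.inl (Ne.symm hne)))

theorem St.step (hC : StronglyC R 4) {P w : FreeMonoid A} (h : St R P w) :
    IsRelWord R P → ∀ x V V' y, x ≠ 1 → Rl R V V' → w = x * V * y → St R P (x * V' * y) := by
  induction h with
  | base P t =>
    intro hP x V V' y hx hr hw
    rw [mul_assoc] at hw
    have key : ∀ e, x = P * e → St R P (x * V' * y) := by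
      rintro e rfl
      have := St.base (R := R) P (e * V' * y)
      simpa [mul_assoc] using this
    rcases equidiv hw with ⟨e, h1, h2⟩ | ⟨e, h1, h2⟩
    · by_cases he : e = 1
      · exact key 1 (by simp [h1, he])
      rcases equidiv h2 with ⟨f, h3, h4⟩ | ⟨f, h3, h4⟩
      · have := St.lap x e f V' (V' * y) hx he (h3 ▸ hr) (St.base _ _)
        rw [← h1, ← mul_assoc] at this
        exact this
      · exact (no_inside hC hP hr.left hx (by rw [h1, h3, mul_assoc])).elim
    · exact key e h1
  | lap p z u W' s hp hz hr' hs ih =>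
    intro hP x V V' y hx hr hw
    have hW := hr'.symm.left
    have key : ∀ e, x = p * e → s = e * (V * y) → St R (p * z) (x * V' * y) := by
      rintro e rfl hs'
      by_cases he : e = 1
      · subst he
        rw [one_mul] at hs'
        subst hs'
        have hVW := hs.eq hC hW hr.left
        subst hVW
        have := hr.uniq hC hr'.symm
        subst this
        have := St.base (R := R) (p * z) (u * y)
        simpa [mul_assoc] using this
      · have := ih hW e V V' y he hr (by rw [hs', mul_assoc])
        have := St.lap p z u W' _ hp hz hr' this
        simpa [mul_assoc] using this
    rw [mul_assoc] at hw
    rcases equidiv hw with ⟨e, h1, h2⟩ | ⟨e, h1, h2⟩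
    · by_cases he : e = 1
      · subst he
        exact key 1 (by simp [h1]) (by simpa using h2.symm)
      exfalso
      rcases equidiv h2 with ⟨f, h3, h4⟩ | ⟨f, h3, h4⟩
      · have hpe : IsPiece R e := piece_mk (p := x) (q := z) (p' := 1) (q' := f) hP hr.left
          (by rw [h1]) (by simpa using h3) (Or.inr hx)
        obtain ⟨p', q', s', h5, h6, h7⟩ := hs.pre hC hW
        rw [h4] at h6
        rcases equidiv h6 with ⟨g, h8, h9⟩ | ⟨g, h8, h9⟩
        · exact h7 (piece_mk (p := e) (q := g) (p' := 1) (q' := q') hr.left hW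
            (by rw [h3, h8, mul_assoc]) (by simpa using h5) (Or.inr he))
        · exact not_two hC hr.left h3 hpe (piece_mk (p := e) (q := 1) (p' := 1) (q' := g * q')
            hr.left hW (by simpa using h3) (by rw [h5, h8]; simp [mul_assoc]) (Or.inr he))
      · exact no_inside hC hP hr.left hx (y := f * z) (by rw [h1, h3]; simp [mul_assoc])
    · exact key e h1 h2

theorem Steps.trans {n m : ℕ} {u v w : FreeMonoid A} (h : Steps R n u v) :
    Steps R m v w → Steps R (n + m) u w := by
  induction h with
  | refl u => intro h; simpa using h
  | head n x P Q y w hr hs ih =>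
    intro h
    have := Steps.head _ x P Q y _ hr (ih h)
    rwa [Nat.add_right_comm] at this

theorem Steps.mul {n : ℕ} {u v : FreeMonoid A} (a b : FreeMonoid A) (h : Steps R n u v) :
    Steps R n (a * u * b) (a * v * b) := by
  induction h with
  | refl u => exact .refl _
  | head n x P Q y w hr hs ih =>
    have := Steps.head n (a * x) P Q (y * b) (a * w * b) hr (by simpa [mul_assoc] using ih)
    simpa [mul_assoc] using this

theorem Steps.symm {n : ℕ} {u v : FreeMonoid A} (h : Steps R n u v) : Steps R n v u := by
  induction h with
  | refl u => exact .refl _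
  | head n x P Q y w hr hs ih =>
    exact ih.trans (Steps.head 0 x Q P y _ hr.symm (.refl _))

theorem con_iff {u v : FreeMonoid A} : presCon R u v ↔ ∃ n, Steps R n u v := by
  constructor
  · intro h
    replace h : ConGen.Rel (fun u v => (u, v) ∈ R) u v := h
    induction h with
    | of x y h =>
      have := Steps.head 0 1 x y 1 _ (Or.inl h) (.refl _)
      exact ⟨1, by simpa using this⟩
    | refl x => exact ⟨0, .refl _⟩
    | symm _ ih => obtain ⟨n, h⟩ := ih; exact ⟨n, h.symm⟩
    | trans _ _ ih1 ih2 =>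
      obtain ⟨n, h⟩ := ih1
      obtain ⟨m, h'⟩ := ih2
      exact ⟨_, h.trans h'⟩
    | @mul w x y z _ _ ih1 ih2 =>
      obtain ⟨n, h⟩ := ih1
      obtain ⟨m, h'⟩ := ih2
      have h1 := h.mul 1 y
      have h2 := h'.mul x 1
      rw [one_mul, one_mul] at h1
      rw [mul_one, mul_one] at h2
      exact ⟨_, h1.trans h2⟩
  · rintro ⟨n, h⟩
    induction h with
    | refl u => exact (presCon R).refl _
    | head n x P Q y w hr hs ih =>
      refine (presCon R).trans ?_ ih
      refine (presCon R).mul ((presCon R).mul ((presCon R).refl _) ?_) ((presCon R).refl _)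
      rcases hr with hr | hr
      · exact ConGen.Rel.of _ _ hr
      · exact (presCon R).symm (ConGen.Rel.of _ _ hr)

theorem St.steps (hC : StronglyC R 4) {P : FreeMonoid A} (hP : IsRelWord R P) (a : A) {n : ℕ}
    {u v : FreeMonoid A} (h : Steps R n u v) : St R P (of a * u) → St R P (of a * v) := by
  induction h with
  | refl u => exact id
  | head n x V V' y w hr hs ih =>
    intro h
    apply ih
    have := h.step hC hP (of a * x) V V' y (fun h => by
      have := (eq_one_of_mul h).1
      exact of_ne_one a this) hr (by simp [mul_assoc])
    simpa [mul_assoc] using this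

theorem cons_cases (x : FreeMonoid A) : x = 1 ∨ ∃ a y, x = of a * y := by
  cases x using FreeMonoid.casesOn with
  | one => exact Or.inl rfl
  | of_mul a y => exact Or.inr ⟨a, y, rfl⟩

theorem cons_inj {a b : A} {x y : FreeMonoid A} (h : of a * x = of b * y) : a = b ∧ x = y := by
  have : a :: toList x = b :: toList y := h
  simp only [List.cons.injEq] at this
  exact this

theorem decomp (a : A) {n : ℕ} {u₀ w : FreeMonoid A} (h : Steps R n u₀ w) :
    ∀ u, u₀ = of a * u → (∃ w', w = of a * w' ∧ Steps R n u w') ∨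
      ∃ i k u' P P' t, n = i + 1 + k ∧ Steps R i u u' ∧ Rl R P P' ∧ of a * u' = P * t ∧
        Steps R k (P' * t) w := by
  induction h with
  | refl u₀ => rintro u rfl; exact Or.inl ⟨u, rfl, .refl _⟩
  | head n x V V' y w hr hs ih =>
    intro u hu
    rcases cons_cases x with rfl | ⟨b, x', rfl⟩
    · right
      rw [one_mul] at hu hs
      exact ⟨0, n, u, V, V', y, by omega, .refl _, hr, hu.symm, hs⟩
    · rw [mul_assoc, mul_assoc] at hu
      obtain ⟨rfl, rfl⟩ := cons_inj hu
      rw [← mul_assoc]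
      rcases ih (x' * V' * y) (by simp [mul_assoc]) with ⟨w', h1, h2⟩ |
        ⟨i, k, u', P, P', t, h1, h2, h3, h4, h5⟩
      · exact Or.inl ⟨w', h1, .head _ _ _ _ _ _ hr h2⟩
      · exact Or.inr ⟨i + 1, k, u', P, P', t, by omega, .head _ _ _ _ _ _ hr h2, h3, h4, h5⟩

theorem cancel_s15 (hC : StronglyC R 4)
    (hR : ¬ ∃ (a : A) (r s : FreeMonoid A), (of a * r, of a * s) ∈ R) (n : ℕ) :
    ∀ (a : A) (u v : FreeMonoid A), Steps R n (of a * u) (of a * v) →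
      ∃ m ≤ n, Steps R m u v := by
  induction n using Nat.strong_induction_on with
  | _ n IH =>
  have canc : ∀ (P t t' : FreeMonoid A) (j : ℕ), j < n → Steps R j (P * t) (P * t') →
      ∃ m ≤ j, Steps R m t t' := by
    intro P t t'
    induction P using FreeMonoid.inductionOn' with
    | one => intro j _ h; exact ⟨j, le_rfl, by simpa using h⟩
    | of_mul a P ih =>
      intro j hj h
      rw [mul_assoc, mul_assoc] at h
      obtain ⟨m, hm, h⟩ := IH j hj a _ _ h
      obtain ⟨m', hm', h⟩ := ih m (by omega) h
      exact ⟨m', by omega, h⟩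
  intro a u v h
  rcases decomp a h u rfl with ⟨w', h1, h2⟩ | ⟨i, k, u', P, P', t, h1, h2, h3, h4, h5⟩
  · obtain ⟨-, rfl⟩ := cons_inj h1
    exact ⟨n, le_rfl, h2⟩
  rcases cons_cases P' with hP' | ⟨b, q, hP'⟩
  · exact absurd hP' (ne_one hC h3.symm.left)
  rcases cons_cases P with hP | ⟨a', r, hP⟩
  · exact absurd hP (ne_one hC h3.left)
  have hab : b ≠ a := by
    rintro rfl
    rw [hP, mul_assoc] at h4
    obtain ⟨rfl, -⟩ := cons_inj h4
    rw [hP, hP'] at h3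
    rcases h3 with h | h <;> exact hR ⟨_, _, _, h⟩
  have e : P' * t = of b * (q * t) := by rw [hP', mul_assoc]
  rcases decomp b h5 _ e with ⟨w', g1, g2⟩ | ⟨j, l, u2, Q, Q', t', g1, g2, g3, g4, g5⟩
  · exact absurd (cons_inj g1).1.symm hab
  have hst := (e ▸ St.base (R := R) P' t : St R P' (of b * (q * t))).steps hC h3.symm.left b g2
  rw [g4] at hst
  have hQ := hst.eq hC h3.symm.left g3.left
  subst hQ
  have := g3.uniq hC h3.symm
  subst this
  have hj := g2.mul (of b) 1
  rw [mul_one, mul_one, ← e, g4] at hj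
  obtain ⟨m, hm, hj⟩ := canc _ _ _ j (by omega) hj
  have s1 := h2.mul (of a) 1
  rw [mul_one, mul_one, h4] at s1
  have s2 := hj.mul Q' 1
  rw [mul_one, mul_one] at s2
  obtain ⟨m', hm', h'⟩ := IH _ (by omega) a u v ((s1.trans s2).trans g5)
  exact ⟨m', by omega, h'⟩

theorem main_back (hC : StronglyC R 4)
    (hR : ¬ ∃ (a : A) (r s : FreeMonoid A), (of a * r, of a * s) ∈ R)
    (x y z : FreeMonoid A) (h : presCon R (x * y) (x * z)) : presCon R y z := by
  induction x using FreeMonoid.inductionOn' with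
  | one => simpa using h
  | of_mul a x ih =>
    apply ih
    rw [mul_assoc, mul_assoc] at h
    obtain ⟨n, h⟩ := con_iff.1 h
    obtain ⟨m, -, h⟩ := cancel_s15 hC hR n a _ _ h
    exact con_iff.2 ⟨m, h⟩

theorem main_fwd (hC : StronglyC R 4) (a : A) (r s : FreeMonoid A)
    (h : (of a * r, of a * s) ∈ R) (hrs : presCon R r s) : False := by
  obtain ⟨n, hn⟩ := con_iff.1 hrs
  cases hn with
  | refl => exact hC.2.1 _ h rfl
  | head n x P Q y w hr hs =>
    refine no_inside hC ⟨_, h, Or.inl rfl⟩ hr.left (x := of a * x) (y := y) ?_ ?_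
    · exact fun h => of_ne_one a (eq_one_of_mul h).1
    · simp [mul_assoc]

end SO

/-- **Corollary.** The monoid presented by a strongly C(4) presentation `⟨A|R⟩` is left
cancellative if and only if `R` contains no relation of the form `(a r, a s)` with
`a ∈ A` and `r, s` words. -/
theorem statement15 {A : Type*} (R : Set (FreeMonoid A × FreeMonoid A))
    (hC : StronglyC R 4) :
    (∀ x y z : (presCon R).Quotient, x * y = x * z → y = z) ↔
      ¬ ∃ (a : A) (r s : FreeMonoid A), (of a * r, of a * s) ∈ R := by
  constructor
  · rintro h ⟨a, r, s, hm⟩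
    refine SO.main_fwd hC a r s hm ((presCon R).eq.1 (h ((of a : FreeMonoid A) : (presCon R).Quotient) _ _ ?_))
    rw [← Con.coe_mul, ← Con.coe_mul]
    exact (presCon R).eq.2 (ConGen.Rel.of _ _ hm)
  · intro hR x y z
    induction x using Con.induction_on with | _ x =>
    induction y using Con.induction_on with | _ y =>
    induction z using Con.induction_on with | _ z =>
    intro h
    rw [← Con.coe_mul, ← Con.coe_mul] at h
    exact (presCon R).eq.2 (SO.main_back hC hR x y z ((presCon R).eq.1 h))
end

section
/- Let A be a finite alphabet with |A| ≥ 2 and let k be a positive integer. For each n, among all presentations ⟨A|R⟩ where R is a set of exactly k relations and the sum relation length is n, let p_L(n) and p_R(n) denote the proportions of those presentations whose presented monoid is left cancellative, respectively right cancellative. Then p_L(n) → ((|A|-1)/|A|)^k and p_R(n) → ((|A|-1)/|A|)^k as n → ∞. -/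
open FreeMonoid

/-- The number of `k`-relation presentations over `A` of sum relation length `n`
satisfying the predicate `P`. -/
noncomputable def presCount {A : Type*} (k n : ℕ)
    (P : Set (FreeMonoid A × FreeMonoid A) → Prop) : ℕ :=
  Nat.card {R : Finset (FreeMonoid A × FreeMonoid A) //
    R.card = k ∧ ∑ p ∈ R, (p.1.length + p.2.length) = n ∧
    P (↑R : Set (FreeMonoid A × FreeMonoid A))}


section Algebra

variable {A : Type*}

def QStep (Q : List A → List A → Prop) (W W' : List A) : Prop :=
  ∃ p u v s, Q u v ∧ W = p ++ (u ++ s) ∧ W' = p ++ (v ++ s)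

def QEq (Q : List A → List A → Prop) : List A → List A → Prop := Relation.ReflTransGen (QStep Q)

theorem QStep.app {Q : List A → List A → Prop} {x y : List A} (h : QStep Q x y) (a b : List A) :
    QStep Q (a ++ (x ++ b)) (a ++ (y ++ b)) := by
  obtain ⟨p, u, v, s, hq, rfl, rfl⟩ := h
  exact ⟨a ++ p, u, v, s ++ b, hq, by simp, by simp⟩

theorem QEq.app {Q : List A → List A → Prop} {x y : List A} (h : QEq Q x y) (a b : List A) :
    QEq Q (a ++ (x ++ b)) (a ++ (y ++ b)) := by
  induction h with
  | refl => exact Relation.ReflTransGen.refl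
  | tail _ h2 ih => exact ih.tail (h2.app a b)

theorem QEq.appl {Q : List A → List A → Prop} {x y : List A} (h : QEq Q x y) (a : List A) :
    QEq Q (a ++ x) (a ++ y) := by
  simpa using h.app a []

inductive TT (Q : List A → List A → Prop) (l : ℕ) : List A → List A → List A → Prop
  | base (v v' t t' : List A) (hv : Q v v') (ht : QEq Q t t') : TT Q l v t (v ++ t')
  | step (v v' p z w w' wb t t'' Y : List A) (hv : Q v v') (hvz : v = p ++ z) (hz : z ≠ [])
      (hzl : z.length < l) (hw : w = z ++ w') (hq : Q wb w) (hY : TT Q l wb t'' Y)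
      (ht : QEq Q t (w' ++ t'')) : TT Q l v t (p ++ Y)

structure GoodQ (Q : List A → List A → Prop) (l : ℕ) : Prop where
  symm : ∀ u v, Q u v → Q v u
  pos : 1 ≤ l
  len : ∀ u v, Q u v → 3 * l ≤ u.length
  ov : ∀ u u' w w', Q u u' → Q w w' → ∀ i j, i + l ≤ u.length → j + l ≤ w.length →
    (∀ d < l, u[i + d]? = w[j + d]?) → u = w ∧ u' = w' ∧ i = j

theorem TT.isrel {Q : List A → List A → Prop} {l : ℕ} {v t W : List A} (h : TT Q l v t W) :
    ∃ v', Q v v' := by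
  cases h <;> exact ⟨_, by assumption⟩

theorem TT.pre {Q : List A → List A → Prop} {l : ℕ} (hQ : GoodQ Q l) {v t W : List A}
    (h : TT Q l v t W) :
    ∀ d, d + l ≤ v.length → W[d]? = v[d]? := by
  have := hQ.pos
  cases h with
  | base v v' t t' hv ht =>
    intro d hd
    rw [List.getElem?_append_left (by omega)]
  | step v v' p z w w' wb t t'' Y hv hvz hz hzl hw hq hY ht =>
    intro d hd
    subst hvz
    simp at hd
    rw [List.getElem?_append_left (by omega), List.getElem?_append_left (by omega)]

theorem TT.next {Q : List A → List A → Prop} {l : ℕ} (hQ : GoodQ Q l)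
    (hh : ∀ u v, Q u v → u[0]? ≠ v[0]?) {v t W : List A}
    (h : TT Q l v t W) : ∀ W', QStep Q W W' →
      TT Q l v t W' ∨ ∃ v' t', Q v v' ∧ W' = v' ++ t' ∧ QEq Q t t' := by
  have hl := hQ.pos
  induction h with
  | base v v' t t' hv ht =>
    rintro W' ⟨α, x, x', β, hx, hW, rfl⟩
    have lx := hQ.len _ _ hx
    rcases List.append_eq_append_iff.1 hW with ⟨α', rfl, h2⟩ | ⟨z, rfl, h2⟩
    · left
      have := TT.base (l := l) v v' t (α' ++ (x' ++ β)) hv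
        (ht.tail ⟨α', x, x', β, hx, h2, rfl⟩)
      simpa using this
    · by_cases hz : l ≤ z.length
      · right
        have key : ∀ d < l, (α ++ z)[α.length + d]? = x[0 + d]? := by
          intro d hd
          have := congrArg (fun L => L[d]?) h2
          beta_reduce at this
          rw [List.getElem?_append_left (by omega), List.getElem?_append_left (by omega)] at this
          rw [List.getElem?_append_right (by omega)]
          simp [this]
        obtain ⟨h3, h4, h5⟩ := hQ.ov _ _ _ _ hv hx _ _ (by simpa using hz) (by omega) key
        have : α = [] := List.length_eq_zero_iff.1 h5
        subst this
        simp at h3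
        subst h3 h4
        have : β = t' := by simpa using h2
        subst this
        exact ⟨v', β, hv, by simp, ht⟩
      · by_cases hz0 : z = []
        · subst hz0
          left
          have := TT.base (l := l) (α ++ []) v' t (x' ++ β) hv
            (ht.tail ⟨[], x, x', β, hx, by simpa using h2.symm, rfl⟩)
          simpa using this
        · left
          rcases List.append_eq_append_iff.1 h2 with ⟨w', h3, h4⟩ | ⟨w', h3, h4⟩
          · have := congrArg List.length h3
            simp at this
            omega
          · exact TT.step (α ++ z) v' α z x w' x' t β (x' ++ β) hv rfl hz0 (by omega) h3
              (hQ.symm _ _ hx) (TT.base _ x _ _ (hQ.symm _ _ hx) Relation.ReflTransGen.refl)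
              (by rw [← h4]; exact ht)
  | step v v' p z w w' wb t t'' Y hv hvz hz hzl hw hq hY ht ih =>
    rintro W' ⟨α, x, x', β, hx, hW, rfl⟩
    have lx := hQ.len _ _ hx
    have lwb := hQ.len _ _ hq
    have hin : ∀ α', α = p ++ α' → Y = α' ++ (x ++ β) →
        TT Q l v t (α ++ (x' ++ β)) ∨ ∃ v' t', Q v v' ∧ α ++ (x' ++ β) = v' ++ t' ∧ QEq Q t t' := by
      rintro α' rfl hYe
      left
      rcases ih _ ⟨α', x, x', β, hx, hYe, rfl⟩ with h1 | ⟨w2, t3, h1, h2, h3⟩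
      · have := TT.step v v' p z w w' wb t t'' _ hv hvz hz hzl hw hq h1 ht
        simpa using this
      · obtain ⟨-, h5, -⟩ := hQ.ov _ _ _ _ hq h1 0 0 (by omega) (by omega) (fun _ _ => rfl)
        subst h5
        have := TT.base (l := l) v v' t (w' ++ t3) hv (ht.trans (h3.appl w'))
        rw [List.append_assoc, h2, hw]
        rw [hvz] at this ⊢
        simpa using this
    rcases List.append_eq_append_iff.1 hW with ⟨α', h1, h2⟩ | ⟨γ, h1, h2⟩
    · exact hin α' h1 h2
    · by_cases hγ0 : γ = []
      · subst hγ0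
        exact hin [] (by simpa using h1.symm) (by simpa using h2.symm)
      exfalso
      have hYp := hY.pre hQ
      have hγp : 0 < γ.length := List.length_pos_iff.2 hγ0
      by_cases hγ : l ≤ γ.length
      · have key : ∀ d < l, v[α.length + d]? = x[0 + d]? := by
          intro d hd
          have := congrArg (fun L => L[d]?) h2
          beta_reduce at this
          rw [List.getElem?_append_left (by omega), List.getElem?_append_left (by omega)] at this
          rw [hvz, h1, List.append_assoc, List.getElem?_append_right (by omega)]
          rw [List.getElem?_append_left (by omega)]
          simp [this]
        obtain ⟨h3, h4, h5⟩ := hQ.ov _ _ _ _ hv hx _ _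
          (by rw [hvz, h1]; simp; omega) (by omega) key
        have : α = [] := List.length_eq_zero_iff.1 h5
        subst this
        rw [← h3, hvz, h1] at h2
        have hYz : Y = z ++ β := by simpa using h2.symm
        have h6 := hYp 0 (by omega)
        apply hh _ _ hq
        have hzp : 0 < z.length := List.length_pos_iff.2 hz
        rw [← h6, hYz, hw, List.getElem?_append_left hzp, List.getElem?_append_left hzp]
      · have key : ∀ d < l, x[γ.length + d]? = wb[0 + d]? := by
          intro d hd
          have := congrArg (fun L => L[γ.length + d]?) h2
          beta_reduce at this
          rw [List.getElem?_append_left (by omega), List.getElem?_append_right (by omega)] at this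
          rw [this]
          simpa using hYp d (by omega)
        obtain ⟨h3, h4, h5⟩ := hQ.ov _ _ _ _ hx hq _ _ (by omega) (by omega) key
        omega

theorem QEq.cancel {Q : List A → List A → Prop} {l : ℕ} (hQ : GoodQ Q l)
    (hh : ∀ u v, Q u v → u[0]? ≠ v[0]?) (a : A) (y z : List A)
    (h : QEq Q (a :: y) (a :: z)) : QEq Q y z := by
  have hl := hQ.pos
  have main : ∀ W, QEq Q (a :: y) W → (∃ y', W = a :: y' ∧ QEq Q y y') ∨
      ∃ v v' vb t, v = a :: v' ∧ Q vb v ∧ TT Q l vb t W ∧ QEq Q y (v' ++ t) := by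
    intro W hW
    induction hW with
    | refl => exact Or.inl ⟨y, rfl, Relation.ReflTransGen.refl⟩
    | @tail W W' _ hs ih =>
      rcases ih with ⟨y', rfl, hy⟩ | ⟨v, v', vb, t, hv, hq, hT, hy⟩
      · obtain ⟨p, u, u', s, hu, h1, rfl⟩ := hs
        cases p with
        | nil =>
          have lu := hQ.len _ _ hu
          cases u with
          | nil => simp at lu; omega
          | cons b u =>
            simp at h1
            obtain ⟨rfl, rfl⟩ := h1
            exact Or.inr ⟨_, u, u', s, rfl, hQ.symm _ _ hu,
              TT.base _ _ _ _ (hQ.symm _ _ hu) Relation.ReflTransGen.refl, hy⟩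
        | cons b p =>
          simp at h1
          obtain ⟨rfl, rfl⟩ := h1
          exact Or.inl ⟨_, rfl, hy.tail ⟨p, u, u', s, hu, rfl, rfl⟩⟩
      · rcases hT.next hQ hh _ hs with h | ⟨v2, t', h1, h2, h3⟩
        · exact Or.inr ⟨v, v', vb, t, hv, hq, h, hy⟩
        · have lv := hQ.len _ _ hq
          obtain ⟨-, h5, -⟩ := hQ.ov _ _ _ _ hq h1 0 0 (by omega) (by omega) (fun _ _ => rfl)
          subst h5
          subst hv
          exact Or.inl ⟨v' ++ t', by simp [h2], hy.trans (h3.appl v')⟩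
  rcases main _ h with ⟨y', h1, h2⟩ | ⟨v, v', vb, t, hv, hq, hT, hy⟩
  · simp at h1
    rwa [h1]
  · exfalso
    have lv := hQ.len _ _ hq
    have := hT.pre hQ 0 (by omega)
    apply hh _ _ hq
    rw [← this, hv]
    simp

theorem QEq.irred {Q : List A → List A → Prop} {l : ℕ} (hQ : GoodQ Q l) (a : A) (u v : List A)
    (hq : ∃ w, Q (a :: u) w) (h : QEq Q u v) : u = v := by
  obtain ⟨w, hq⟩ := hq
  rcases Relation.ReflTransGen.cases_head h with h | ⟨c, ⟨p, x, x', s, hx, h1, -⟩, -⟩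
  · exact h
  · exfalso
    have lx := hQ.len _ _ hx
    have := hQ.ov _ _ _ _ hq hx (p.length + 1) 0 (by simp [h1]; omega) (by omega) (by
      intro d hd
      rw [h1, show p.length + 1 + d = (p.length + d) + 1 by omega, List.getElem?_cons_succ,
        List.getElem?_append_right (by omega), List.getElem?_append_left (by omega)]
      simp)
    omega

def PQ (R : Set (FreeMonoid A × FreeMonoid A)) (u v : List A) : Prop :=
  (FreeMonoid.ofList u, FreeMonoid.ofList v) ∈ R ∨ (FreeMonoid.ofList v, FreeMonoid.ofList u) ∈ R

theorem QEq.symm' {Q : List A → List A → Prop} (hs : ∀ u v, Q u v → Q v u) {x y : List A}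
    (h : QEq Q x y) : QEq Q y x := by
  induction h with
  | refl => exact Relation.ReflTransGen.refl
  | tail _ h2 ih =>
    obtain ⟨p, u, v, s, hq, h1, h3⟩ := h2
    exact Relation.ReflTransGen.head ⟨p, v, u, s, hs _ _ hq, h3, h1⟩ ih

theorem presCon_iff (R : Set (FreeMonoid A × FreeMonoid A)) (x y : FreeMonoid A) :
    presCon R x y ↔ QEq (PQ R) x.toList y.toList := by
  have hs : ∀ u v, PQ R u v → PQ R v u := fun u v h => h.symm
  constructor
  · intro h
    have h' : ConGen.Rel (fun u v => (u, v) ∈ R) x y := h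
    clear h
    induction h' with
    | of x y h => exact Relation.ReflTransGen.single ⟨[], x.toList, y.toList, [], Or.inl h, by simp, by simp⟩
    | refl x => exact Relation.ReflTransGen.refl
    | symm h ih => exact ih.symm' hs
    | trans h1 h2 ih1 ih2 => exact ih1.trans ih2
    | mul h1 h2 ih1 ih2 =>
      rename_i w x y z
      have e1 := ih1.app [] y.toList
      have e2 := ih2.appl x.toList
      simp only [List.nil_append, FreeMonoid.toList_mul] at e1 e2 ⊢
      exact e1.trans e2
  · intro h
    have gen : ∀ a b : List A, QEq (PQ R) a b →
        presCon R (FreeMonoid.ofList a) (FreeMonoid.ofList b) := by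
      intro a b h
      induction h with
      | refl => exact (presCon R).refl _
      | tail _ h2 ih =>
        obtain ⟨p, u, v, s, hq, rfl, rfl⟩ := h2
        refine (presCon R).trans ih ?_
        simp only [FreeMonoid.ofList_append]
        refine (presCon R).mul ((presCon R).refl _) ((presCon R).mul ?_ ((presCon R).refl _))
        rcases hq with h | h
        · exact ConGen.Rel.of _ _ h
        · exact (presCon R).symm (ConGen.Rel.of _ _ h)
    exact gen _ _ h

theorem leftCanc_iff (R : Set (FreeMonoid A × FreeMonoid A)) {l : ℕ} (hQ : GoodQ (PQ R) l)
    (hne : ∀ p ∈ R, p.1 ≠ p.2) :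
    (∀ x y z : (presCon R).Quotient, x * y = x * z → y = z) ↔
      ∀ p ∈ R, p.1.toList[0]? ≠ p.2.toList[0]? := by
  have hl := hQ.pos
  constructor
  · intro h p hp he
    have hq : PQ R p.1.toList p.2.toList := Or.inl hp
    have l1 := hQ.len _ _ hq
    have l2 := hQ.len _ _ (hQ.symm _ _ hq)
    rcases h1 : p.1.toList with _ | ⟨a, u⟩
    · simp [h1] at l1; omega
    rcases h2 : p.2.toList with _ | ⟨b, v⟩
    · simp [h2] at l2; omega
    simp [h1, h2] at he
    subst he
    have e1 : p.1 = FreeMonoid.of a * FreeMonoid.ofList u := by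
      apply FreeMonoid.toList.injective; simp [h1]
    have e2 : p.2 = FreeMonoid.of a * FreeMonoid.ofList v := by
      apply FreeMonoid.toList.injective; simp [h2]
    have := h (FreeMonoid.of a : FreeMonoid A) (FreeMonoid.ofList u : FreeMonoid A)
      (FreeMonoid.ofList v : FreeMonoid A) (by
        rw [← Con.coe_mul, ← Con.coe_mul, ← e1, ← e2]
        exact (Con.eq _).2 (ConGen.Rel.of _ _ hp))
    rw [Con.eq, presCon_iff] at this
    have := QEq.irred hQ a u v ⟨_, h1 ▸ hq⟩ this
    subst this
    exact hne p hp (e1.trans e2.symm)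
  · intro h
    have hh : ∀ u v, PQ R u v → u[0]? ≠ v[0]? := by
      rintro u v (h1 | h1)
      · exact h _ h1
      · exact (h _ h1).symm
    intro x y z
    induction x using Con.induction_on with | _ x
    induction y using Con.induction_on with | _ y
    induction z using Con.induction_on with | _ z
    rw [← Con.coe_mul, ← Con.coe_mul, Con.eq, Con.eq, presCon_iff, presCon_iff]
    simp only [FreeMonoid.toList_mul]
    generalize x.toList = x
    induction x with
    | nil => simp
    | cons a x ih =>
      intro h
      exact ih (QEq.cancel hQ hh a _ _ h)

end Algebra

section Counting

open Finset Function

theorem overlap_count {P A : Type*} [Fintype P] [DecidableEq P] [Fintype A] [DecidableEq A]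
    {l : ℕ} (g h : Fin l → P) (hi : Injective h) (hgh : ∀ d d', g d = h d' → d' < d) :
    (univ.filter (fun w : P → A => ∀ d, w (g d) = w (h d))).card * Fintype.card A ^ l ≤
      Fintype.card A ^ Fintype.card P := by
  have e1 : Fintype.card A ^ l = (univ : Finset (Fin l → A)).card := by simp
  have e2 : Fintype.card A ^ Fintype.card P = (univ : Finset (P → A)).card := by simp
  rw [e1, e2, ← card_product]
  apply card_le_card_of_injOn (fun p => extend h p.2 p.1) (by simp)
  rintro ⟨w, c⟩ hw ⟨w', c'⟩ hw' heq
  simp only [coe_product, coe_filter, mem_univ, true_and, coe_univ, Set.mem_prod, Set.mem_ofPred_eq,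
    Set.mem_univ, and_true] at hw hw' heq
  have hc : c = c' := by
    funext d
    have := congrFun heq (h d)
    rwa [hi.extend_apply, hi.extend_apply] at this
  have hoff : ∀ x, (¬ ∃ d, h d = x) → w x = w' x := by
    intro x hx
    have := congrFun heq x
    rwa [extend_apply' _ _ _ hx, extend_apply' _ _ _ hx] at this
  have hon : ∀ m : ℕ, ∀ d : Fin l, d.1 = m → w (h d) = w' (h d) := by
    intro m
    induction m using Nat.strong_induction_on with
    | _ m ih =>
      intro d hd
      rw [← hw, ← hw']
      by_cases hx : ∃ d', h d' = g d
      · obtain ⟨d', hd'⟩ := hx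
        rw [← hd']
        exact ih d'.1 (by have := hgh d d' hd'.symm; omega) d' rfl
      · exact hoff _ hx
  have hw2 : w = w' := by
    funext x
    by_cases hx : ∃ d, h d = x
    · obtain ⟨d, rfl⟩ := hx
      exact hon _ d rfl
    · exact hoff x hx
  rw [hc, hw2]

theorem head_count {P A : Type*} [Fintype P] [DecidableEq P] [Fintype A] [DecidableEq A]
    {k : ℕ} (g h : Fin k → P) (hi : Injective h) (hgh : ∀ d d', g d ≠ h d') :
    (univ.filter (fun w : P → A => ∀ d, w (g d) ≠ w (h d))).card * Fintype.card A ^ k =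
      Fintype.card A ^ Fintype.card P * (Fintype.card A - 1) ^ k := by
  have e1 : Fintype.card A ^ k = (univ : Finset (Fin k → A)).card := by simp
  rw [e1, ← card_product]
  have e3 : Fintype.card A ^ Fintype.card P * (Fintype.card A - 1) ^ k =
      ((univ : Finset (P → A)).sigma
        (fun w => Fintype.piFinset (fun d : Fin k => (univ : Finset A).erase (w (g d))))).card := by
    rw [card_sigma]
    simp [Fintype.card_piFinset]
  rw [e3]
  have hg : ∀ (w : P → A) (c : Fin k → A) d, extend h c w (g d) = w (g d) := by
    intro w c d
    apply extend_apply'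
    rintro ⟨d', hd'⟩
    exact hgh d d' hd'.symm
  have hinv : ∀ (w : P → A) (c : Fin k → A), extend h (w ∘ h) (extend h c w) = w := by
    intro w c
    funext x
    by_cases hx : ∃ d, h d = x
    · obtain ⟨d, rfl⟩ := hx
      rw [hi.extend_apply]; rfl
    · rw [extend_apply' _ _ _ hx, extend_apply' _ _ _ hx]
  refine card_nbij' (fun p => ⟨extend h p.2 p.1, p.1 ∘ h⟩) (fun p => (extend h p.2 p.1, p.1 ∘ h))
    ?_ ?_ ?_ ?_
  · rintro ⟨w, c⟩ hw
    simp only [coe_product, coe_filter, mem_univ, true_and, coe_univ, Set.mem_prod,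
      Set.mem_ofPred_eq, Set.mem_univ, and_true] at hw
    simp only [coe_sigma, Set.mem_sigma_iff, coe_univ, Set.mem_univ, true_and, mem_coe,
      Fintype.mem_piFinset, mem_erase, mem_univ, and_true, comp_apply, hg]
    exact fun d => (hw d).symm
  · rintro ⟨w, c⟩ hw
    simp only [coe_sigma, Set.mem_sigma_iff, coe_univ, Set.mem_univ, true_and, mem_coe,
      Fintype.mem_piFinset, mem_erase, mem_univ, and_true] at hw
    simp only [coe_product, coe_filter, mem_univ, true_and, coe_univ, Set.mem_prod,
      Set.mem_ofPred_eq, Set.mem_univ, and_true, hg, hi.extend_apply]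
    exact fun d => (hw d).symm
  · rintro ⟨w, c⟩ _
    simp only [hinv, Prod.mk.injEq, true_and]
    funext d
    simp [hi.extend_apply]
  · rintro ⟨w, c⟩ _
    simp only [hinv]
    congr 1
    funext d
    simp [hi.extend_apply]

theorem comp_bound {ι : Type*} [Fintype ι] [DecidableEq ι] [Nonempty ι] (n m : ℕ)
    (hm : m ≤ n / Fintype.card ι) (i : ι) :
    ((piAntidiag (univ : Finset ι) n).filter (fun L => L i < m)).card * (n / Fintype.card ι) ≤
      (piAntidiag (univ : Finset ι) n).card * (Fintype.card ι * m) := by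
  classical
  have hr : 0 < Fintype.card ι := Fintype.card_pos
  set M := n / Fintype.card ι with hM
  have hex : ∀ L : ι → ℕ, ∃ j, ∑ x, L x = n → M ≤ L j := by
    intro L
    by_contra hcon
    push Not at hcon
    obtain ⟨i₀⟩ := (inferInstance : Nonempty ι)
    have hs := (hcon i₀).1
    have : ∑ x, L x < ∑ x : ι, M := sum_lt_sum_of_nonempty ⟨i₀, mem_univ _⟩ (fun x _ => (hcon x).2)
    simp only [sum_const, card_univ, smul_eq_mul] at this
    have := Nat.mul_div_le n (Fintype.card ι)
    rw [← hM] at this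
    omega
  choose J hJ using hex
  have e1 : (M : ℕ) = (range M).card := by simp
  have e2 : Fintype.card ι * m = ((univ : Finset ι) ×ˢ range m).card := by simp
  rw [e2]
  conv_lhs => rw [e1]
  rw [← card_product, ← card_product]
  apply card_le_card_of_injOn (fun p => (fun x => if x = i then p.1 i + p.2 else
    if x = J p.1 then p.1 x - p.2 else p.1 x, (J p.1, p.1 i)))
  · rintro ⟨L, s⟩ h
    simp only [coe_product, Set.mem_prod, coe_filter, Set.mem_ofPred_eq, mem_piAntidiag, mem_univ,
      implies_true, and_true, coe_range, Set.mem_Iio, mem_coe, coe_univ, Set.mem_univ,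
      true_and] at h ⊢
    obtain ⟨⟨hs, hLi⟩, hsM⟩ := h
    refine ⟨?_, hLi⟩
    have hj := hJ L hs
    have hji : J L ≠ i := by rintro h; rw [h] at hj; omega
    rw [← hs]
    rw [← add_sum_erase _ _ (mem_univ i), ← add_sum_erase _ L (mem_univ i)]
    have hmem : J L ∈ univ.erase i := by simp [hji]
    rw [← add_sum_erase _ _ hmem, ← add_sum_erase _ L hmem]
    have : ∑ x ∈ (univ.erase i).erase (J L), (if x = i then L i + s else
        if x = J L then L x - s else L x) = ∑ x ∈ (univ.erase i).erase (J L), L x := by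
      apply sum_congr rfl
      intro x hx
      simp only [mem_erase, mem_univ, and_true] at hx
      simp [hx.1, hx.2]
    rw [this]
    simp only [if_true, hji, if_false]
    omega
  · rintro ⟨L, s⟩ h ⟨L', s'⟩ h' heq
    simp only [coe_product, Set.mem_prod, coe_filter, Set.mem_ofPred_eq, mem_piAntidiag, mem_univ,
      implies_true, and_true, coe_range, Set.mem_Iio, mem_coe, Prod.mk.injEq] at h h' heq
    obtain ⟨h1, h2, h3⟩ := heq
    have hj := hJ L h.1.1
    have hj' := hJ L' h'.1.1
    have hs : s = s' := by
      have := congrFun h1 i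
      simp at this
      omega
    subst hs
    rw [Prod.mk.injEq]
    refine ⟨?_, rfl⟩
    funext x
    by_cases hx : x = i
    · rw [hx, h3]
    have := congrFun h1 x
    simp only [hx, if_false, ← h2] at this
    by_cases hx2 : x = J L
    · simp only [hx2, if_true] at this ⊢
      rw [← h2] at hj'
      omega
    · simpa [hx2] using this

end Counting

section Assembly

open Finset Function

abbrev PPos {ι : Type*} (L : ι → ℕ) : Type _ := Σ i, Fin (L i)

abbrev YY (ι A : Type*) : Type _ := Σ L : ι → ℕ, (PPos L → A)

def WW {ι A : Type*} (y : YY ι A) (i : ι) : List A := List.ofFn (fun d => y.2 ⟨i, d⟩)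

theorem WW_length {ι A : Type*} (y : YY ι A) (i : ι) : (WW y i).length = y.1 i := by
  simp [WW]

theorem WW_bij {ι A : Type*} : Bijective (WW : YY ι A → ι → List A) := by
  constructor
  · rintro ⟨L, w⟩ ⟨L', w'⟩ h
    have hL : L = L' := by
      funext i
      have := congrArg List.length (congrFun h i)
      simpa [WW_length] using this
    subst hL
    congr 1
    funext ⟨i, d⟩
    have := congrFun h i
    simp only [WW] at this
    exact congrFun (List.ofFn_injective this) d
  · intro v
    refine ⟨⟨fun i => (v i).length, fun x => (v x.1).get x.2⟩, ?_⟩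
    funext i
    simp [WW]

theorem WW_get {ι A : Type*} (y : YY ι A) (i : ι) (d : ℕ) (hd : d < y.1 i) :
    (WW y i)[d]? = some (y.2 ⟨i, ⟨d, hd⟩⟩) := by
  simp [WW, hd]

def XX (ι A : Type*) [Fintype ι] [DecidableEq ι] [Fintype A] [DecidableEq A] (n : ℕ) :
    Finset (YY ι A) :=
  (piAntidiag (univ : Finset ι) n).sigma (fun _ => univ)

theorem card_PPos {ι : Type*} [Fintype ι] [DecidableEq ι] {n : ℕ} {L : ι → ℕ}
    (hL : L ∈ piAntidiag (univ : Finset ι) n) : Fintype.card (PPos L) = n := by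
  simp at hL
  simp [hL]

variable {ι A : Type*} [Fintype ι] [DecidableEq ι] [Fintype A] [DecidableEq A]

theorem mem_XX {n : ℕ} {y : YY ι A} : y ∈ XX ι A n ↔ ∑ i, (WW y i).length = n := by
  simp [XX, WW_length]

theorem sigma_card {n : ℕ} (S : Finset (ι → ℕ)) (hS : S ⊆ piAntidiag univ n) :
    (S.sigma (fun L => (univ : Finset (PPos L → A)))).card = S.card * Fintype.card A ^ n := by
  rw [card_sigma, sum_const_nat]
  intro L hL
  rw [card_univ, Fintype.card_fun, card_PPos (hS hL)]

def Clash (l : ℕ) (L : ι → ℕ) (a b : PPos L) (w : PPos L → A) : Prop :=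
  a.2.1 + l ≤ L a.1 ∧ b.2.1 + l ≤ L b.1 ∧
    ∀ d < l, (WW ⟨L, w⟩ a.1)[a.2.1 + d]? = (WW ⟨L, w⟩ b.1)[b.2.1 + d]?

def GoodY (l : ℕ) (y : YY ι A) : Prop :=
  (∀ i, 3 * l ≤ y.1 i) ∧ ∀ a b : PPos y.1, a ≠ b → ¬ Clash l y.1 a b y.2

open Classical in
theorem clash_card (l : ℕ) (L : ι → ℕ) (a b : PPos L) (hab : a ≠ b) :
    (univ.filter (fun w : PPos L → A => Clash l L a b w)).card * Fintype.card A ^ l ≤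
      Fintype.card A ^ Fintype.card (PPos L) := by
  have key : ∀ a b : PPos L, a.2.1 + l ≤ L a.1 → b.2.1 + l ≤ L b.1 →
      (a.1 = b.1 → a.2.1 < b.2.1) →
      (univ.filter (fun w : PPos L → A => Clash l L a b w)).card * Fintype.card A ^ l ≤
      Fintype.card A ^ Fintype.card (PPos L) := by
    rintro ⟨i, s⟩ ⟨j, t⟩ hs ht hst
    simp only at hs ht hst
    refine le_trans (Nat.mul_le_mul_right _ (card_le_card ?_))
      (overlap_count (l := l) (fun d => (⟨i, ⟨s.1 + d.1, by omega⟩⟩ : PPos L))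
        (fun d => (⟨j, ⟨t.1 + d.1, by omega⟩⟩ : PPos L)) ?_ ?_)
    · intro w hw
      simp only [mem_filter, mem_univ, true_and] at hw ⊢
      intro d
      have := hw.2.2 d.1 d.2
      simp only at this
      rw [WW_get _ _ _ (show s.1 + d.1 < L i by omega), WW_get _ _ _ (show t.1 + d.1 < L j by omega)] at this
      exact Option.some_injective _ this
    · intro d d' h
      simp only [Sigma.mk.injEq, heq_eq_eq, true_and, Fin.mk.injEq] at h
      ext; omega
    · intro d d' h
      have hij : i = j := congrArg Sigma.fst h
      subst hij
      simp only [Sigma.mk.injEq, heq_eq_eq, true_and, Fin.mk.injEq] at h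
      have := hst rfl
      rw [Fin.lt_def]; omega
  by_cases h1 : a.2.1 + l ≤ L a.1 ∧ b.2.1 + l ≤ L b.1
  · by_cases h2 : a.1 = b.1 → a.2.1 < b.2.1
    · exact key a b h1.1 h1.2 h2
    · have h3 : b.1 = a.1 → b.2.1 < a.2.1 := by
        push Not at h2
        obtain ⟨i, s⟩ := a
        obtain ⟨j, t⟩ := b
        simp only at h2 ⊢
        obtain ⟨rfl, h2⟩ := h2
        intro _
        rcases h2.lt_or_eq with h | h
        · exact h
        · exact absurd (by rw [Fin.ext h]) hab
      refine le_trans (Nat.mul_le_mul_right _ (card_le_card ?_)) (key b a h1.2 h1.1 h3)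
      intro w hw
      simp only [mem_filter, mem_univ, true_and] at hw ⊢
      exact ⟨hw.2.1, hw.1, fun d hd => (hw.2.2 d hd).symm⟩
  · have : univ.filter (fun w : PPos L → A => Clash l L a b w) = ∅ := by
      rw [filter_eq_empty_iff]
      intro w _ hw
      exact h1 ⟨hw.1, hw.2.1⟩
    rw [this]; simp

open Classical in
theorem clash_total (l : ℕ) (L : ι → ℕ) :
    (univ.filter (fun w : PPos L → A => ∃ a b, a ≠ b ∧ Clash l L a b w)).card
        * Fintype.card A ^ l ≤
      Fintype.card (PPos L) ^ 2 * Fintype.card A ^ Fintype.card (PPos L) := by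
  have hsub : univ.filter (fun w : PPos L → A => ∃ a b, a ≠ b ∧ Clash l L a b w) ⊆
      (univ : Finset (PPos L × PPos L)).biUnion
        (fun p => univ.filter (fun w : PPos L → A => p.1 ≠ p.2 ∧ Clash l L p.1 p.2 w)) := by
    intro w hw
    simp only [mem_filter, mem_univ, true_and] at hw
    obtain ⟨a, b, h⟩ := hw
    simp only [mem_biUnion, mem_univ, true_and, mem_filter]
    exact ⟨(a, b), h⟩
  refine le_trans (Nat.mul_le_mul_right _ ((card_le_card hsub).trans card_biUnion_le)) ?_
  rw [sum_mul]
  refine le_trans (sum_le_card_nsmul _ _ (Fintype.card A ^ Fintype.card (PPos L)) ?_) ?_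
  · rintro ⟨a, b⟩ _
    by_cases hab : a = b
    · simp [hab]
    · simpa [hab] using clash_card (A := A) l L a b hab
  · simp [sq]

open Classical in
theorem bad_card [Nonempty ι] (n l : ℕ) (hl : 3 * l ≤ n / Fintype.card ι) (hn : 0 < n / Fintype.card ι)
    (hA : 0 < Fintype.card A) :
    (((XX ι A n).filter (fun y => ¬ GoodY l y)).card : ℝ) ≤
      ((XX ι A n).card : ℝ) * ((Fintype.card ι ^ 2 * (3 * l) : ℝ) / (n / Fintype.card ι : ℕ) +
        (n : ℝ) ^ 2 / (Fintype.card A : ℝ) ^ l) := by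
  set r := Fintype.card ι
  set q := Fintype.card A
  set C := piAntidiag (univ : Finset ι) n with hC
  set S1 : Finset (YY ι A) := (C.filter (fun L => ∃ i, L i < 3 * l)).sigma (fun L => univ)
  set S2 : Finset (YY ι A) := C.sigma
    (fun L => univ.filter (fun w : PPos L → A => ∃ a b, a ≠ b ∧ Clash l L a b w))
  have hsub : (XX ι A n).filter (fun y => ¬ GoodY l y) ⊆ S1 ∪ S2 := by
    intro y hy
    simp only [mem_filter, XX, mem_sigma, mem_univ, and_true] at hy
    simp only [S1, S2, mem_union, mem_sigma, mem_filter, mem_univ, and_true, true_and]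
    have h2 := hy.2
    simp only [GoodY, not_and_or, not_forall, not_not, not_le] at h2
    rcases h2 with h2 | ⟨a, b, hab, h2⟩
    · exact Or.inl ⟨hy.1, h2⟩
    · exact Or.inr ⟨hy.1, a, b, hab, h2⟩
  have hX : (XX ι A n).card = C.card * q ^ n := sigma_card _ (Subset.refl _)
  have h1 : S1.card = (C.filter (fun L => ∃ i, L i < 3 * l)).card * q ^ n :=
    sigma_card _ (filter_subset _ _)
  have h1' : (C.filter (fun L => ∃ i, L i < 3 * l)).card * (n / r) ≤ C.card * (r ^ 2 * (3 * l)) := by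
    have : C.filter (fun L => ∃ i, L i < 3 * l) ⊆
        (univ : Finset ι).biUnion (fun i => C.filter (fun L => L i < 3 * l)) := by
      intro L hL
      simp only [mem_filter, mem_biUnion, mem_univ, true_and] at hL ⊢
      exact ⟨hL.2.choose, hL.1, hL.2.choose_spec⟩
    refine le_trans (Nat.mul_le_mul_right _ ((card_le_card this).trans card_biUnion_le)) ?_
    rw [sum_mul]
    refine le_trans (sum_le_card_nsmul _ _ (C.card * (r * (3 * l)))
      (fun i _ => comp_bound n (3 * l) hl i)) ?_
    rw [card_univ, smul_eq_mul]
    apply le_of_eq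
    change r * _ = _
    ring
  have h2 : S2.card * q ^ l ≤ C.card * (n ^ 2 * q ^ n) := by
    rw [card_sigma, sum_mul]
    refine le_trans (sum_le_card_nsmul _ _ (n ^ 2 * q ^ n) ?_) (by simp)
    intro L hL
    have := clash_total (A := A) l L
    rwa [card_PPos hL] at this
  have hle : (((XX ι A n).filter (fun y => ¬ GoodY l y)).card : ℝ) ≤ S1.card + S2.card := by
    exact_mod_cast (card_le_card hsub).trans (card_union_le _ _)
  refine hle.trans ?_
  rw [mul_add]
  have hq : (0 : ℝ) < q := by exact_mod_cast hA
  have hn' : (0 : ℝ) < ((n / r : ℕ) : ℝ) := by exact_mod_cast hn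
  apply add_le_add
  · rw [mul_div_assoc', le_div_iff₀ hn', h1, hX]
    have : ((C.filter (fun L => ∃ i, L i < 3 * l)).card * (n / r : ℕ) : ℝ) ≤
      C.card * (r ^ 2 * (3 * l)) := by exact_mod_cast h1'
    push_cast
    have hqn : (0 : ℝ) ≤ (q : ℝ) ^ n := by positivity
    calc _ = ((C.filter (fun L => ∃ i, L i < 3 * l)).card * (n / r : ℕ) : ℝ) * (q : ℝ) ^ n := by ring
      _ ≤ (C.card * (r ^ 2 * (3 * l))) * (q : ℝ) ^ n := by gcongr
      _ = _ := by ring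
  · rw [mul_div_assoc', le_div_iff₀ (by positivity), hX]
    calc (S2.card * q ^ l : ℝ) ≤ C.card * (n ^ 2 * q ^ n) := by exact_mod_cast h2
      _ = _ := by push_cast; ring

def HeadY {k : ℕ} (y : YY (Fin k × Bool) A) : Prop :=
  ∀ i, (WW y (i, false))[0]? ≠ (WW y (i, true))[0]?

open Classical in
theorem headY_card {k : ℕ} (n : ℕ) :
    ((XX (Fin k × Bool) A n).filter (fun y => (∀ i, 1 ≤ y.1 i) ∧ HeadY y)).card
      * Fintype.card A ^ k =
    ((XX (Fin k × Bool) A n).filter (fun y => ∀ i, 1 ≤ y.1 i)).card * (Fintype.card A - 1) ^ k := by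
  set C := piAntidiag (univ : Finset (Fin k × Bool)) n with hC
  have e1 : (XX (Fin k × Bool) A n).filter (fun y => ∀ i, 1 ≤ y.1 i) =
      (C.filter (fun L => ∀ i, 1 ≤ L i)).sigma (fun L => univ) := by
    ext y; simp [XX, hC]
  have e2 : (XX (Fin k × Bool) A n).filter (fun y => (∀ i, 1 ≤ y.1 i) ∧ HeadY y) =
      (C.filter (fun L => ∀ i, 1 ≤ L i)).sigma
        (fun L => univ.filter (fun w : PPos L → A => HeadY (⟨L, w⟩ : YY (Fin k × Bool) A))) := by
    ext y; simp [XX, hC, and_assoc]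
  rw [e1, e2, sigma_card (n := n) _ (filter_subset _ _), card_sigma, sum_mul, mul_assoc]
  apply sum_const_nat
  intro L hL
  simp only [mem_filter] at hL
  have hL1 := hL.2
  have := head_count (A := A) (k := k) (fun i => (⟨(i, false), ⟨0, hL1 _⟩⟩ : PPos L))
    (fun i => (⟨(i, true), ⟨0, hL1 _⟩⟩ : PPos L))
    (by
      intro i j h
      have := congrArg Sigma.fst h
      simpa using this)
    (by
      intro i j h
      have := congrArg Sigma.fst h
      simp at this)
  rw [card_PPos hL.1] at this
  rw [← this]
  congr 2
  ext w
  rw [mem_filter, mem_filter]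
  simp only [mem_univ, true_and, HeadY]
  refine forall_congr' fun i => ?_
  rw [WW_get _ _ _ (hL1 _), WW_get _ _ _ (hL1 _)]
  simp

/-- the tuple of relations -/
def FF {k : ℕ} (y : YY (Fin k × Bool) A) (i : Fin k) : FreeMonoid A × FreeMonoid A :=
  (FreeMonoid.ofList (WW y (i, false)), FreeMonoid.ofList (WW y (i, true)))

theorem FF_bij {k : ℕ} : Bijective (FF : YY (Fin k × Bool) A → Fin k → FreeMonoid A × FreeMonoid A) := by
  constructor
  · intro y y' h
    apply WW_bij.1
    funext ⟨i, b⟩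
    have := congrFun h i
    simp only [FF, Prod.mk.injEq] at this
    cases b
    · exact this.1
    · exact this.2
  · intro f
    obtain ⟨y, hy⟩ := WW_bij.2 (fun x : Fin k × Bool =>
      if x.2 then (f x.1).2.toList else (f x.1).1.toList)
    refine ⟨y, ?_⟩
    funext i
    simp [FF, hy]

theorem mem_XX_FF {k n : ℕ} {y : YY (Fin k × Bool) A} :
    y ∈ XX (Fin k × Bool) A n ↔ ∑ i, ((FF y i).1.length + (FF y i).2.length) = n := by
  rw [mem_XX, Fintype.sum_prod_type]
  simp only [Fintype.sum_bool]
  have : ∀ i, (FF y i).1.length + (FF y i).2.length =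
      (WW y (i, true)).length + (WW y (i, false)).length := by
    intro i; rw [add_comm]; rfl
  simp only [this]

theorem card_inj_tuples {α : Type*} (k : ℕ) (P : Finset α → Prop) [DecidableEq α] :
    Nat.card {f : Fin k → α // Injective f ∧ P (univ.image f)} =
      Nat.card {R : Finset α // R.card = k ∧ P R} * k.factorial := by
  have e : ∀ R : {R : Finset α // R.card = k ∧ P R}, Nonempty (Fin k ≃ R.1) := by
    intro R
    exact ⟨(Fintype.equivFinOfCardEq (by simp [R.2.1])).symm⟩
  have e0 := fun R => Classical.choice (e R)
  let E1 : (Σ R : {R : Finset α // R.card = k ∧ P R}, (Fin k ≃ R.1)) ≃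
      {R : Finset α // R.card = k ∧ P R} × Equiv.Perm (Fin k) :=
    (Equiv.sigmaCongrRight (fun R => Equiv.equivCongr (Equiv.refl _) (e0 R).symm)).trans
      (Equiv.sigmaEquivProd _ _)
  have c1 := Nat.card_congr E1
  rw [Nat.card_prod, Nat.card_eq_fintype_card (α := Equiv.Perm (Fin k)), Fintype.card_perm,
    Fintype.card_fin] at c1
  rw [← c1]
  symm
  have him : ∀ (R : Finset α) (e : Fin k ≃ R), univ.image (fun i => (e i : α)) = R := by
    intro R e
    ext x
    simp only [mem_image, mem_univ, true_and]
    constructor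
    · rintro ⟨i, rfl⟩; exact (e i).2
    · intro hx; exact ⟨e.symm ⟨x, hx⟩, by simp⟩
  apply Nat.card_congr
  refine Equiv.ofBijective (fun x => ⟨fun i => (x.2 i : α),
    Subtype.val_injective.comp x.2.injective, by rw [him]; exact x.1.2.2⟩) ⟨?_, ?_⟩
  · rintro ⟨⟨R, hR⟩, e⟩ ⟨⟨R', hR'⟩, e'⟩ h
    simp only [Subtype.mk.injEq] at h
    have : R = R' := by rw [← him R e, ← him R' e', h]
    subst this
    congr 1
    ext i
    exact congrFun h i
  · rintro ⟨f, hf, hP⟩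
    refine ⟨⟨⟨univ.image f, by rw [card_image_of_injective _ hf]; simp, hP⟩,
      Equiv.ofBijective (fun i => ⟨f i, by simp⟩) ⟨?_, ?_⟩⟩, rfl⟩
    · intro i j h
      exact hf (by simpa using h)
    · rintro ⟨x, hx⟩
      simp only [mem_image, mem_univ, true_and] at hx
      obtain ⟨i, rfl⟩ := hx
      exact ⟨i, rfl⟩

open Classical in
theorem presCount_eq (k n : ℕ) (P : Set (FreeMonoid A × FreeMonoid A) → Prop) :
    presCount (A := A) k n P * k.factorial =
      ((XX (Fin k × Bool) A n).filter
        (fun y => Injective (FF y) ∧ P (Set.range (FF y)))).card := by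
  rw [presCount]
  rw [← card_inj_tuples k (fun R : Finset (FreeMonoid A × FreeMonoid A) =>
    ∑ p ∈ R, (p.1.length + p.2.length) = n ∧ P (↑R : Set (FreeMonoid A × FreeMonoid A)))]
  rw [← Nat.card_eq_finsetCard]
  symm
  apply Nat.card_congr
  refine (Equiv.ofBijective FF FF_bij).subtypeEquiv ?_
  intro y
  rw [mem_filter, mem_XX_FF, Equiv.ofBijective_apply]
  constructor
  · rintro ⟨h1, h2, h3⟩
    refine ⟨h2, ?_, by simpa using h3⟩
    rw [sum_image (fun a _ b _ h => h2 h), h1]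
  · rintro ⟨h2, h1, h3⟩
    rw [sum_image (fun a _ b _ h => h2 h)] at h1
    exact ⟨h1, h2, by simpa using h3⟩

end Assembly

section Final

open Finset Function Filter Topology

variable {A : Type*} [Fintype A] [DecidableEq A]

theorem goodY_ov {k l : ℕ} {y : YY (Fin k × Bool) A} (hl : 1 ≤ l) (hy : GoodY l y)
    (a b : Fin k × Bool) (i j : ℕ) (hi : i + l ≤ (WW y a).length) (hj : j + l ≤ (WW y b).length)
    (h : ∀ d < l, (WW y a)[i + d]? = (WW y b)[j + d]?) : a = b ∧ i = j := by
  rw [WW_length] at hi hj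
  by_contra hcon
  refine hy.2 ⟨a, ⟨i, by omega⟩⟩ ⟨b, ⟨j, by omega⟩⟩ ?_ ⟨hi, hj, h⟩
  intro heq
  apply hcon
  have h1 : a = b := congrArg Sigma.fst heq
  subst h1
  simp only [Sigma.mk.injEq, heq_eq_eq, true_and, Fin.mk.injEq] at heq
  exact ⟨rfl, heq⟩

theorem goodY_inj {k l : ℕ} {y : YY (Fin k × Bool) A} (hl : 1 ≤ l) (hy : GoodY l y)
    (a b : Fin k × Bool) (h : WW y a = WW y b) : a = b := by
  have h1 := hy.1 a
  have h2 := hy.1 b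
  exact (goodY_ov hl hy a b 0 0 (by rw [WW_length]; omega) (by rw [WW_length]; omega)
    (fun d _ => by rw [h])).1

theorem PQ_FF {k : ℕ} {y : YY (Fin k × Bool) A} {u v : List A}
    (h : PQ (Set.range (FF y)) u v) : ∃ i b, u = WW y (i, b) ∧ v = WW y (i, !b) := by
  rcases h with ⟨i, h⟩ | ⟨i, h⟩
  · refine ⟨i, false, ?_⟩
    simp only [FF, Prod.mk.injEq] at h
    exact ⟨(FreeMonoid.ofList.injective h.1).symm, (FreeMonoid.ofList.injective h.2).symm⟩
  · refine ⟨i, true, ?_⟩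
    simp only [FF, Prod.mk.injEq] at h
    exact ⟨(FreeMonoid.ofList.injective h.2).symm, (FreeMonoid.ofList.injective h.1).symm⟩

theorem goodY_goodQ {k l : ℕ} {y : YY (Fin k × Bool) A} (hl : 1 ≤ l) (hy : GoodY l y) :
    GoodQ (PQ (Set.range (FF y))) l where
  symm u v h := h.symm
  pos := hl
  len u v h := by
    obtain ⟨i, b, rfl, -⟩ := PQ_FF h
    rw [WW_length]; exact hy.1 _
  ov u u' w w' h1 h2 i j hi hj h := by
    obtain ⟨a, b, rfl, rfl⟩ := PQ_FF h1
    obtain ⟨a', b', rfl, rfl⟩ := PQ_FF h2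
    obtain ⟨h3, h4⟩ := goodY_ov hl hy _ _ i j hi hj h
    simp only [Prod.mk.injEq] at h3
    obtain ⟨rfl, rfl⟩ := h3
    exact ⟨rfl, rfl, h4⟩

def LC (R : Set (FreeMonoid A × FreeMonoid A)) : Prop :=
  ∀ x y z : (presCon R).Quotient, x * y = x * z → y = z

def TRs (_ : Set (FreeMonoid A × FreeMonoid A)) : Prop := True

theorem goodY_inj' {k l : ℕ} {y : YY (Fin k × Bool) A} (hl : 1 ≤ l) (hy : GoodY l y) :
    Injective (FF y) := by
  intro i j h
  simp only [FF, Prod.mk.injEq] at h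
  have := goodY_inj hl hy _ _ (FreeMonoid.ofList.injective h.1)
  simpa using this

theorem goodY_LC {k l : ℕ} {y : YY (Fin k × Bool) A} (hl : 1 ≤ l) (hy : GoodY l y) :
    LC (Set.range (FF y)) ↔ HeadY y := by
  rw [LC, leftCanc_iff _ (goodY_goodQ hl hy)]
  · simp only [Set.forall_mem_range]; rfl
  · rintro _ ⟨i, rfl⟩ h
    have := goodY_inj hl hy _ _ (FreeMonoid.ofList.injective h)
    simp at this

def revE : FreeMonoid A ≃ FreeMonoid A where
  toFun x := FreeMonoid.ofList x.toList.reverse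
  invFun x := FreeMonoid.ofList x.toList.reverse
  left_inv x := by simp
  right_inv x := by simp

def revR : Finset (FreeMonoid A × FreeMonoid A) ≃ Finset (FreeMonoid A × FreeMonoid A) :=
  (revE.prodCongr revE).finsetCongr

theorem mem_revR (R : Finset (FreeMonoid A × FreeMonoid A)) (u v : List A) :
    (FreeMonoid.ofList u, FreeMonoid.ofList v) ∈ revR R ↔
      (FreeMonoid.ofList u.reverse, FreeMonoid.ofList v.reverse) ∈ R := by
  simp only [revR, Equiv.finsetCongr_apply, mem_map_equiv]
  rfl

theorem QEq_rev (R : Finset (FreeMonoid A × FreeMonoid A)) (u v : List A)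
    (h : QEq (PQ (R : Set (FreeMonoid A × FreeMonoid A))) u v) :
    QEq (PQ (revR R : Set (FreeMonoid A × FreeMonoid A))) u.reverse v.reverse := by
  induction h with
  | refl => exact Relation.ReflTransGen.refl
  | tail _ h2 ih =>
    refine ih.tail ?_
    obtain ⟨p, u, v, s, hq, rfl, rfl⟩ := h2
    refine ⟨s.reverse, u.reverse, v.reverse, p.reverse, ?_, by simp, by simp⟩
    simpa only [PQ, mem_coe, mem_revR, List.reverse_reverse] using hq

theorem revR_revR (R : Finset (FreeMonoid A × FreeMonoid A)) : revR (revR R) = R := by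
  ext ⟨u, v⟩
  refine (mem_revR (revR R) u.toList v.toList).trans ((mem_revR _ _ _).trans ?_)
  rw [List.reverse_reverse, List.reverse_reverse]
  rfl

theorem QEq_rev_iff (R : Finset (FreeMonoid A × FreeMonoid A)) (u v : List A) :
    QEq (PQ (R : Set (FreeMonoid A × FreeMonoid A))) u v ↔
    QEq (PQ (revR R : Set (FreeMonoid A × FreeMonoid A))) u.reverse v.reverse := by
  refine ⟨QEq_rev R u v, fun h => ?_⟩
  have := QEq_rev _ _ _ h
  simpa [revR_revR] using this

theorem LC_words (R : Set (FreeMonoid A × FreeMonoid A)) :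
    LC R ↔ ∀ x y z : List A, QEq (PQ R) (x ++ y) (x ++ z) → QEq (PQ R) y z := by
  constructor
  · intro h x y z hxy
    have := h (FreeMonoid.ofList x : FreeMonoid A) (FreeMonoid.ofList y : FreeMonoid A)
      (FreeMonoid.ofList z : FreeMonoid A)
    rw [← Con.coe_mul, ← Con.coe_mul, Con.eq, Con.eq, presCon_iff, presCon_iff] at this
    exact this hxy
  · intro h x y z
    induction x using Con.induction_on with | _ x
    induction y using Con.induction_on with | _ y
    induction z using Con.induction_on with | _ z
    rw [← Con.coe_mul, ← Con.coe_mul, Con.eq, Con.eq, presCon_iff, presCon_iff]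
    exact h x.toList y.toList z.toList

theorem RC_words (R : Set (FreeMonoid A × FreeMonoid A)) :
    (∀ x y z : (presCon R).Quotient, y * x = z * x → y = z) ↔
      ∀ x y z : List A, QEq (PQ R) (y ++ x) (z ++ x) → QEq (PQ R) y z := by
  constructor
  · intro h x y z hxy
    have := h (FreeMonoid.ofList x : FreeMonoid A) (FreeMonoid.ofList y : FreeMonoid A)
      (FreeMonoid.ofList z : FreeMonoid A)
    rw [← Con.coe_mul, ← Con.coe_mul, Con.eq, Con.eq, presCon_iff, presCon_iff] at this
    exact this hxy
  · intro h x y z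
    induction x using Con.induction_on with | _ x
    induction y using Con.induction_on with | _ y
    induction z using Con.induction_on with | _ z
    rw [← Con.coe_mul, ← Con.coe_mul, Con.eq, Con.eq, presCon_iff, presCon_iff]
    exact h x.toList y.toList z.toList

theorem RC_iff (R : Finset (FreeMonoid A × FreeMonoid A)) :
    (∀ x y z : (presCon (R : Set (FreeMonoid A × FreeMonoid A))).Quotient,
      y * x = z * x → y = z) ↔ LC (revR R : Set (FreeMonoid A × FreeMonoid A)) := by
  rw [RC_words, LC_words]
  constructor
  · intro h x y z hx
    have := h x.reverse y.reverse z.reverse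
    rw [QEq_rev_iff, QEq_rev_iff R y.reverse] at this
    simp only [List.reverse_append, List.reverse_reverse] at this
    exact this hx
  · intro h x y z
    rw [QEq_rev_iff, QEq_rev_iff R y]
    simp only [List.reverse_append]
    exact h _ _ _

theorem presCount_RC (k n : ℕ) :
    presCount (A := A) k n (fun R => ∀ x y z : (presCon R).Quotient, y * x = z * x → y = z) =
      presCount (A := A) k n LC := by
  unfold presCount
  apply Nat.card_congr
  refine revR.subtypeEquiv ?_
  intro R
  beta_reduce
  rw [RC_iff]
  have h1 : (revR R).card = R.card := by simp [revR]
  have h2 : ∑ p ∈ revR R, (p.1.length + p.2.length) = ∑ p ∈ R, (p.1.length + p.2.length) := by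
    simp only [revR, Equiv.finsetCongr_apply, sum_map]
    apply sum_congr rfl
    intro p _
    change p.1.toList.reverse.length + p.2.toList.reverse.length = _
    rw [List.length_reverse, List.length_reverse]; rfl
  rw [h1, h2]

theorem err_tendsto (r q : ℕ) (hr : 0 < r) (hq : 2 ≤ q) :
    Tendsto (fun n : ℕ => ((r : ℝ) ^ 2 * (3 * (Nat.sqrt n : ℕ))) / ((n / r : ℕ) : ℝ) +
        (n : ℝ) ^ 2 / (q : ℝ) ^ (Nat.sqrt n)) atTop (𝓝 0) := by
  have hs : Tendsto Nat.sqrt atTop atTop := by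
    refine tendsto_atTop.2 fun b => ?_
    filter_upwards [eventually_ge_atTop (b * b)] with n hn
    exact Nat.le_sqrt.2 hn
  have hb1 : Tendsto (fun s : ℕ => 6 * (r : ℝ) ^ 3 / (s : ℝ)) atTop (𝓝 0) :=
    tendsto_const_div_atTop_nhds_zero_nat _
  have hb2 : Tendsto (fun s : ℕ => 81 * ((s : ℝ) ^ 4 * (1 / 2 : ℝ) ^ s)) atTop (𝓝 0) := by
    have := (tendsto_pow_const_mul_const_pow_of_lt_one 4 (r := (1 / 2 : ℝ)) (by norm_num)
      (by norm_num)).const_mul 81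
    simpa using this
  have hb := (hb1.comp hs).add (hb2.comp hs)
  rw [add_zero] at hb
  refine squeeze_zero' (Eventually.of_forall fun n => by positivity) ?_ hb
  filter_upwards [eventually_ge_atTop (2 * r + 1)] with n hn
  have hn1 : 1 ≤ n := by omega
  have s1 : 1 ≤ Nat.sqrt n := Nat.le_sqrt.2 (by omega)
  have s2 : Nat.sqrt n * Nat.sqrt n ≤ n := Nat.sqrt_le n
  have s3 : n ≤ Nat.sqrt n * Nat.sqrt n + Nat.sqrt n + Nat.sqrt n := Nat.sqrt_le_add n
  have d1 : n ≤ 2 * (r * (n / r)) := by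
    have := Nat.div_add_mod n r
    have := Nat.mod_lt n hr
    omega
  have d0 : 0 < n / r := Nat.div_pos (by omega) hr
  simp only [comp_apply]
  generalize Nat.sqrt n = s at *
  generalize n / r = M at *
  have S1 : (1 : ℝ) ≤ s := by exact_mod_cast s1
  have S2 : (s : ℝ) * s ≤ n := by exact_mod_cast s2
  have S3 : (n : ℝ) ≤ s * s + s + s := by exact_mod_cast s3
  have D1 : (n : ℝ) ≤ 2 * (r * M) := by exact_mod_cast d1
  have D0 : (0 : ℝ) < M := by exact_mod_cast d0
  apply add_le_add
  · rw [div_le_div_iff₀ D0 (by linarith)]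
    have : (s : ℝ) * s ≤ 2 * (r * M) := S2.trans D1
    calc (r : ℝ) ^ 2 * (3 * s) * s = 3 * (r : ℝ) ^ 2 * (s * s) := by ring
      _ ≤ 3 * (r : ℝ) ^ 2 * (2 * (r * M)) := by gcongr
      _ = _ := by ring
  · have hn3 : (n : ℝ) ≤ 3 * s ^ 2 := by nlinarith
    have hq2 : (2 : ℝ) ≤ q := by exact_mod_cast hq
    calc (n : ℝ) ^ 2 / (q : ℝ) ^ s ≤ (3 * s ^ 2) ^ 2 / (2 : ℝ) ^ s := by gcongr
      _ = 9 * ((s : ℝ) ^ 4 * (1 / 2 : ℝ) ^ s) := by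
        rw [div_pow, one_pow]; ring
      _ ≤ _ := by
        have : 0 ≤ (s : ℝ) ^ 4 * (1 / 2 : ℝ) ^ s := by positivity
        linarith

theorem arith_aux {ρ X B G N0 N1 Xp Hp e : ℝ} (hρ0 : 0 ≤ ρ) (hρ1 : ρ ≤ 1) (hB0 : 0 ≤ B)
    (hb : B ≤ X * e) (hH : Hp = ρ * Xp) (r0 : G + B = X) (r1 : G ≤ N0) (r2 : N0 ≤ X) (r3 : G ≤ Xp)
    (r4 : Xp ≤ X) (r5 : Hp ≤ N1 + B) (r6 : N1 ≤ Hp + B) :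
    X * (1 - e) ≤ N0 ∧ N0 ≤ X ∧ X * (ρ - 2 * e) ≤ N1 ∧ N1 ≤ X * (ρ + e) := by
  have t1 : ρ * Xp ≤ ρ * X := by gcongr
  have t2 : ρ * (X - B) ≤ ρ * Xp := by gcongr; linarith
  have t3 : ρ * B ≤ B := by nlinarith
  refine ⟨by linarith, r2, by linarith, by linarith⟩

set_option maxHeartbeats 1000000 in
open Classical in
theorem main_LC (hA : 2 ≤ Fintype.card A) (k : ℕ) (hk : 1 ≤ k) :
    Tendsto (fun n : ℕ => (presCount (A := A) k n LC : ℝ) /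
        (presCount (A := A) k n (fun _ => True) : ℝ)) atTop
      (𝓝 (((Fintype.card A - 1 : ℝ) / (Fintype.card A : ℝ)) ^ k)) := by
  set q := Fintype.card A with hqdef
  set ρ : ℝ := ((q - 1 : ℝ) / (q : ℝ)) ^ k with hρ
  have : NeZero k := ⟨by omega⟩
  set r := Fintype.card (Fin k × Bool) with hr
  have hr0 : 0 < r := Fintype.card_pos
  set X := fun n => XX (Fin k × Bool) A n
  set err : ℕ → ℝ := fun n => ((r : ℝ) ^ 2 * (3 * (Nat.sqrt n : ℕ))) / ((n / r : ℕ) : ℝ) +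
        (n : ℝ) ^ 2 / (q : ℝ) ^ (Nat.sqrt n) with herr
  have herrt : Tendsto err atTop (𝓝 0) := err_tendsto r q hr0 hA
  set N1 : ℕ → ℕ := fun n => ((X n).filter (fun y => Injective (FF y) ∧ LC (Set.range (FF y)))).card
  set N0 : ℕ → ℕ := fun n => ((X n).filter (fun y => Injective (FF y) ∧ TRs (Set.range (FF y)))).card
  have hq0 : (0 : ℝ) < q := by exact_mod_cast (by omega : 0 < q)
  have hq1 : (1 : ℝ) ≤ q := by exact_mod_cast (by omega : 1 ≤ q)
  have hρ0 : 0 ≤ ρ := by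
    apply pow_nonneg; apply div_nonneg <;> linarith
  have hρ1 : ρ ≤ 1 := by
    apply pow_le_one₀
    · apply div_nonneg <;> linarith
    · rw [div_le_one hq0]; linarith
  have hXpos : ∀ n, 0 < ((X n).card : ℝ) := by
    intro n
    have : (X n).card = (piAntidiag (univ : Finset (Fin k × Bool)) n).card * q ^ n :=
      sigma_card _ (Subset.refl _)
    rw [this]
    have h1 : 0 < (piAntidiag (univ : Finset (Fin k × Bool)) n).card := by
      rw [card_pos]
      refine ⟨Pi.single (0, true) n, ?_⟩
      rw [mem_piAntidiag]
      exact ⟨by simp, by simp⟩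
    have : 0 < q ^ n := by positivity
    exact_mod_cast Nat.mul_pos h1 this
  have bounds : ∀ᶠ n in atTop, (X n).card * (1 - err n) ≤ N0 n ∧ (N0 n : ℝ) ≤ (X n).card ∧
      (X n).card * (ρ - 2 * err n) ≤ N1 n ∧ (N1 n : ℝ) ≤ (X n).card * (ρ + err n) := by
    filter_upwards [eventually_ge_atTop ((3 * (r + r)) ^ 2 + 1), eventually_ge_atTop r] with n hn hnr
    have s1 : 1 ≤ Nat.sqrt n := Nat.le_sqrt.2 (by nlinarith)
    have s2 : Nat.sqrt n * Nat.sqrt n ≤ n := Nat.sqrt_le n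
    have s4 : 3 * (r + r) ≤ Nat.sqrt n := Nat.le_sqrt.2 (by nlinarith)
    have hl : 3 * Nat.sqrt n ≤ n / r := by
      rw [Nat.le_div_iff_mul_le hr0]
      nlinarith
    have hd0 : 0 < n / r := Nat.div_pos hnr hr0
    set l := Nat.sqrt n with hldef
    have hbad := bad_card (ι := Fin k × Bool) (A := A) n l hl hd0 (by omega)
    set B := ((X n).filter (fun y => ¬ GoodY l y)).card with hB
    have hbad' : (B : ℝ) ≤ (X n).card * err n := hbad
    set G := ((X n).filter (fun y => GoodY l y)).card with hG
    have hGB : G + B = (X n).card := card_filter_add_card_filter_not _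
    set Xp := ((X n).filter (fun y => ∀ i, 1 ≤ y.1 i)).card with hXp
    set Hp := ((X n).filter (fun y => (∀ i, 1 ≤ y.1 i) ∧ HeadY y)).card with hHp
    have hH : Hp * q ^ k = Xp * (q - 1) ^ k := headY_card n
    have hHr : (Hp : ℝ) = ρ * Xp := by
      have : (Hp : ℝ) * q ^ k = Xp * (q - 1) ^ k := by
        have h := congrArg (Nat.cast : ℕ → ℝ) hH
        push_cast [Nat.cast_sub (show 1 ≤ q by omega)] at h
        exact h
      rw [hρ, div_pow, div_mul_eq_mul_div, eq_div_iff (by positivity), this]; ring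
    have hGpos : ∀ y : YY (Fin k × Bool) A, GoodY l y → ∀ i, 1 ≤ y.1 i := by
      intro y hy i
      have := hy.1 i; omega
    have c1 : G ≤ N0 n := by
      apply card_le_card
      intro y
      simp only [mem_filter]
      exact fun h => ⟨h.1, goodY_inj' s1 h.2, trivial⟩
    have c2 : N0 n ≤ (X n).card := card_filter_le _ _
    have c3 : G ≤ Xp := by
      apply card_le_card
      intro y
      simp only [mem_filter]
      exact fun h => ⟨h.1, hGpos y h.2⟩
    have c4 : Xp ≤ (X n).card := card_filter_le _ _
    have c5 : Hp ≤ N1 n + B := by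
      refine le_trans (card_le_card ?_) (card_union_le _ _)
      intro y
      simp only [mem_filter, mem_union]
      rintro ⟨h1, h2, h3⟩
      by_cases hg : GoodY l y
      · exact Or.inl ⟨h1, goodY_inj' s1 hg, (goodY_LC s1 hg).2 h3⟩
      · exact Or.inr ⟨h1, hg⟩
    have c6 : N1 n ≤ Hp + B := by
      refine le_trans (card_le_card ?_) (card_union_le _ _)
      intro y
      simp only [mem_filter, mem_union]
      rintro ⟨h1, h2, h3⟩
      by_cases hg : GoodY l y
      · exact Or.inl ⟨h1, hGpos y hg, (goodY_LC s1 hg).1 h3⟩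
      · exact Or.inr ⟨h1, hg⟩
    have r0 : (G : ℝ) + B = (X n).card := by exact_mod_cast hGB
    have r1 : (G : ℝ) ≤ N0 n := by exact_mod_cast c1
    have r2 : (N0 n : ℝ) ≤ (X n).card := by exact_mod_cast c2
    have r3 : (G : ℝ) ≤ Xp := by exact_mod_cast c3
    have r4 : (Xp : ℝ) ≤ (X n).card := by exact_mod_cast c4
    have r5 : (Hp : ℝ) ≤ N1 n + B := by exact_mod_cast c5
    have r6 : (N1 n : ℝ) ≤ Hp + B := by exact_mod_cast c6
    exact arith_aux hρ0 hρ1 (Nat.cast_nonneg B) hbad' hHr r0 r1 r2 r3 r4 r5 r6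
  have L0 : Tendsto (fun n => (N0 n : ℝ) / (X n).card) atTop (𝓝 1) := by
    have h1 : Tendsto (fun n => 1 - err n) atTop (𝓝 1) := by simpa using herrt.const_sub 1
    refine tendsto_of_tendsto_of_tendsto_of_le_of_le' h1 tendsto_const_nhds ?_ ?_
    · filter_upwards [bounds] with n hn
      rw [le_div_iff₀ (hXpos n), mul_comm]; exact hn.1
    · filter_upwards [bounds] with n hn
      rw [div_le_iff₀ (hXpos n), one_mul]; exact hn.2.1
  have L1 : Tendsto (fun n => (N1 n : ℝ) / (X n).card) atTop (𝓝 ρ) := by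
    have h1 : Tendsto (fun n => ρ - 2 * err n) atTop (𝓝 ρ) := by
      simpa using (herrt.const_mul 2).const_sub ρ
    have h2 : Tendsto (fun n => ρ + err n) atTop (𝓝 ρ) := by
      simpa using herrt.const_add ρ
    refine tendsto_of_tendsto_of_tendsto_of_le_of_le' h1 h2 ?_ ?_
    · filter_upwards [bounds] with n hn
      rw [le_div_iff₀ (hXpos n), mul_comm]; exact hn.2.2.1
    · filter_upwards [bounds] with n hn
      rw [div_le_iff₀ (hXpos n), mul_comm]; exact hn.2.2.2
  have L := L1.div L0 one_ne_zero
  rw [div_one] at L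
  refine L.congr fun n => ?_
  have p1 : (presCount (A := A) k n LC : ℝ) * (k.factorial : ℝ) = N1 n := by
    exact_mod_cast presCount_eq k n LC
  have p0 : (presCount (A := A) k n (fun _ => True) : ℝ) * (k.factorial : ℝ) = N0 n := by
    have h := presCount_eq (A := A) k n TRs
    exact_mod_cast h
  have hf : (k.factorial : ℝ) ≠ 0 := by exact_mod_cast k.factorial_ne_zero
  simp only [Pi.div_apply]
  rw [div_div_div_cancel_right₀ (hXpos n).ne', ← p1, ← p0, mul_div_mul_right _ _ hf]

end Final

/-- **Theorem.** For a finite alphabet `A` with `|A| ≥ 2` and a positive integer `k`,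
the proportion of `A`-generated `k`-relation presentations of sum relation length `n`
presenting a left cancellative monoid, and likewise the proportion presenting a right
cancellative monoid, both tend to `((|A|-1)/|A|)^k` as `n → ∞`. -/
theorem statement16 {A : Type*} [Fintype A] (hA : 2 ≤ Fintype.card A)
    (k : ℕ) (hk : 1 ≤ k) :
    Filter.Tendsto (fun n : ℕ =>
        (presCount (A := A) k n (fun R =>
          ∀ x y z : (presCon R).Quotient, x * y = x * z → y = z) : ℝ) /
        (presCount (A := A) k n (fun _ => True) : ℝ))
      Filter.atTop
      (nhds (((Fintype.card A - 1 : ℝ) / (Fintype.card A : ℝ)) ^ k)) ∧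
    Filter.Tendsto (fun n : ℕ =>
        (presCount (A := A) k n (fun R =>
          ∀ x y z : (presCon R).Quotient, y * x = z * x → y = z) : ℝ) /
        (presCount (A := A) k n (fun _ => True) : ℝ))
      Filter.atTop
      (nhds (((Fintype.card A - 1 : ℝ) / (Fintype.card A : ℝ)) ^ k)) := by
  classical
  refine ⟨main_LC hA k hk, ?_⟩
  simp only [presCount_RC]
  exact main_LC hA k hk
end

section
/- Let A be a finite alphabet with |A| ≥ 2 and let k be a positive integer. For each n, among all presentations ⟨A|R⟩ where R is a set of exactly k relations and the sum relation length is n, let p_C(n) denote the proportion of those presentations whose presented monoid is cancellative (both left and right cancellative). Then p_C(n) → ((|A|-1)/|A|)^{2k} as n → ∞. -/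
open FreeMonoid

namespace SmallOv

/-- One rewriting step. -/
def Step {A : Type*} (rel : List A → List A → Prop) (w w' : List A) : Prop :=
  ∃ p s r r', rel r r' ∧ w = p ++ r ++ s ∧ w' = p ++ r' ++ s

/-- Derivations of a given length. -/
inductive Der {A : Type*} (rel : List A → List A → Prop) : ℕ → List A → List A → Prop
  | nil (w : List A) : Der rel 0 w w
  | cons {n : ℕ} {w w1 w2 : List A} : Step rel w w1 → Der rel n w1 w2 → Der rel (n+1) w w2

/-- Our (strong) small overlap hypothesis. -/
structure SO {A : Type*} (rel : List A → List A → Prop) (l : ℕ) : Prop where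
  pos : 1 ≤ l
  symm : ∀ {r r'}, rel r r' → rel r' r
  len : ∀ {r r'}, rel r r' → 3 * l ≤ r.length
  uniq : ∀ {r r' r''}, rel r r' → rel r r'' → r' = r''
  ne : ∀ {r r'}, rel r r' → r ≠ r'
  ov : ∀ {u u' v v' p q p' q' x}, rel u u' → rel v v' → u = p ++ x ++ q → v = p' ++ x ++ q' →
    l ≤ x.length → u = v ∧ p.length = p'.length

variable {A : Type*} {rel : List A → List A → Prop} {l : ℕ}

theorem Der.trans {n m : ℕ} {u v w : List A} (h : Der rel n u v) (h' : Der rel m v w) :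
    Der rel (n + m) u w := by
  induction h with
  | nil w => simpa using h'
  | cons s d ih =>
    have := Der.cons s (ih h')
    rwa [Nat.add_right_comm] at this

theorem Der.app {n : ℕ} {u v : List A} (x y : List A) (h : Der rel n u v) :
    Der rel n (x ++ u ++ y) (x ++ v ++ y) := by
  induction h with
  | nil w => exact Der.nil _
  | cons s d ih =>
    obtain ⟨p, s, r, r', h1, rfl, rfl⟩ := s
    exact Der.cons ⟨x ++ p, s ++ y, r, r', h1, by simp, by simp⟩ ih

theorem Der.appl {n : ℕ} {u v : List A} (x : List A) (h : Der rel n u v) :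
    Der rel n (x ++ u) (x ++ v) := by
  simpa using h.app x []

theorem Der.symm (hs : ∀ {r r'}, rel r r' → rel r' r) {n : ℕ} {u v : List A}
    (h : Der rel n u v) : Der rel n v u := by
  induction h with
  | nil w => exact Der.nil _
  | cons s d ih =>
    obtain ⟨p, s, r, r', h1, rfl, rfl⟩ := s
    exact ih.trans (Der.cons ⟨p, s, r', r, hs h1, rfl, rfl⟩ (Der.nil _))

theorem Der.decomp {n : ℕ} {W z : List A} (h : Der rel n W z) : ∀ {x w : List A}, W = x ++ w →
    (∃ z', z = x ++ z' ∧ Der rel n w z') ∨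
    (∃ i j w1 p r r' s, i + j + 1 = n ∧ Der rel i w w1 ∧ rel r r' ∧ x ++ w1 = p ++ r ++ s ∧
      p.length < x.length ∧ Der rel j (p ++ r' ++ s) z) := by
  induction h with
  | nil W => intro x w h; exact Or.inl ⟨w, h, Der.nil _⟩
  | @cons n W W1 z s d ih =>
    intro x w hW
    obtain ⟨p, s, r, r', h1, h2, h3⟩ := s
    by_cases hp : p.length < x.length
    · right
      exact ⟨0, n, w, p, r, r', s, by omega, Der.nil _, h1, by rw [← hW, h2], hp, h3 ▸ d⟩
    · have : x <+: p := by
        apply List.prefix_of_prefix_length_le (l₃ := W)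
        · exact ⟨w, hW.symm⟩
        · exact ⟨r ++ s, by simp [h2]⟩
        · omega
      obtain ⟨p2, rfl⟩ := this
      have hw : w = p2 ++ r ++ s := by
        have : x ++ w = x ++ (p2 ++ r ++ s) := by rw [← hW, h2]; simp
        exact List.append_cancel_left this
      have st : Step rel w (p2 ++ r' ++ s) := ⟨p2, s, r, r', h1, hw, rfl⟩
      rcases ih (x := x) (w := p2 ++ r' ++ s) (by rw [h3]; simp) with ⟨z', hz, hd⟩ | ⟨i, j, w1, q, t, t', s', h4, h5, h6⟩
      · exact Or.inl ⟨z', hz, Der.cons st hd⟩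
      · exact Or.inr ⟨i+1, j, w1, q, t, t', s', by omega, Der.cons st h5, h6⟩

theorem SO.ov' (H : SO rel l) {u u' v v' u1 v1 p q s s' : List A} (hu : rel u u') (hv : rel v v')
    (hu1 : u1 <+: u) (hv1 : v1 <+: v) (hW : p ++ u1 ++ s = q ++ v1 ++ s')
    (h1 : p.length ≤ q.length) (h2 : q.length + l ≤ p.length + u1.length) (h3 : l ≤ v1.length) :
    u = v ∧ p.length = q.length := by
  obtain ⟨u2, rfl⟩ := hu1
  obtain ⟨v2, rfl⟩ := hv1
  have hp : p <+: q := by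
    apply List.prefix_of_prefix_length_le (l₃ := p ++ u1 ++ s)
    · exact ⟨u1 ++ s, by simp⟩
    · exact ⟨v1 ++ s', by simp [hW]⟩
    · exact h1
  obtain ⟨d, rfl⟩ := hp
  have hW' : u1 ++ s = d ++ (v1 ++ s') := by
    apply List.append_cancel_left (as := p); simpa using hW
  simp only [List.length_append] at h2 h1 ⊢
  have hd : d <+: u1 := by
    apply List.prefix_of_prefix_length_le (l₃ := u1 ++ s)
    · exact ⟨_, hW'.symm⟩
    · exact ⟨_, rfl⟩
    · omega
  obtain ⟨e, rfl⟩ := hd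
  have hW2 : e ++ s = v1 ++ s' := by
    apply List.append_cancel_left (as := d); simpa using hW'
  simp only [List.length_append] at h2
  have he : e.take l = v1.take l := by
    have := congrArg (List.take l) hW2
    rwa [List.take_append_of_le_length (by omega), List.take_append_of_le_length (by omega)] at this
  have := H.ov (p := d) (x := e.take l) (q := e.drop l ++ u2) (p' := []) (q' := v1.drop l ++ v2) hu hv
    (by rw [List.append_assoc d, List.append_assoc d, ← List.append_assoc (e.take l), List.take_append_drop])
    (by rw [he, List.append_assoc [], ← List.append_assoc (v1.take l), List.take_append_drop]; simp)
    (by simp; omega)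
  refine ⟨this.1, ?_⟩
  have := this.2
  simp at this
  simp [this]

theorem SO.keep (H : SO rel l) (n : ℕ) : ∀ {b : A} {v0 v' y z : List A}, rel (b :: v0) v' →
    Der rel n (v0 ++ y) z → ∃ v1 z', z = v1 ++ z' ∧ v1 <+: v0 ∧ v0.length + 1 ≤ v1.length + l := by
  induction n using Nat.strong_induction_on with
  | _ n ih =>
  intro b v0 v' y z hv hd
  have hl := H.pos
  rcases hd.decomp rfl with ⟨z', hz, -⟩ | ⟨i, j, w1, p, r, r', s, hn, h1, hr, he, hp, h2⟩
  · exact ⟨v0, z', hz, List.prefix_refl _, by omega⟩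
  have hrl := H.len hr
  have hrl' := H.len (H.symm hr)
  have hvl := H.len hv
  have hpv : p <+: v0 := by
    apply List.prefix_of_prefix_length_le (l₃ := v0 ++ w1)
    · exact ⟨r ++ s, by simp [he]⟩
    · exact ⟨_, rfl⟩
    · omega
  have hpl : v0.length + 1 ≤ p.length + l := by
    by_contra hc
    have := H.ov' (p := []) (q := b :: p) (u1 := b :: v0) (v1 := r) (s := w1) (s' := s) hv hr
      (List.prefix_refl _) (List.prefix_refl _) (by simpa using he) (by simp) (by simp; omega) (by omega)
    simp at this
  obtain ⟨c, r0', rfl⟩ : ∃ c r0', r' = c :: r0' := by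
    cases r' with
    | nil => simp at hrl'; omega
    | cons c t => exact ⟨c, t, rfl⟩
  rcases h2.decomp (x := p ++ [c]) (w := r0' ++ s) (by simp) with
    ⟨z', hz, -⟩ | ⟨i', j', w2, p2, r2, r2', s2, hn', h3, hr2, he2, hp2, h4⟩
  · exact ⟨p, c :: z', by simpa using hz, hpv, hpl⟩
  obtain ⟨v1, z', rfl, hv1, hv1l⟩ := ih i' (by omega) (H.symm hr) h3
  have hr2l := H.len hr2
  simp only [List.length_cons, List.length_append, List.length_nil] at hp2 hrl' hvl
  have hpp : p2.length + l ≤ p.length ∨ p.length < p2.length + l := by omega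
  have key : p2.length = p.length ∧ r2 = c :: r0' := by
    have h5 : p.length < p2.length + l := by
      by_contra hc
      have := H.ov' (p := []) (q := b :: p2) (u1 := b :: p) (v1 := r2) (s := c :: (v1 ++ z')) (s' := s2) hv hr2
        (by simpa using hpv) (List.prefix_refl _) (by simpa using he2) (by simp)
          (by simp; omega) (by omega)
      simp at this
    have := H.ov' (p := p2) (q := p) (u1 := r2) (v1 := c :: v1) (s := s2) (s' := z') hr2 (H.symm hr)
        (List.prefix_refl _) (by simpa using hv1) (by simpa using he2.symm) (by omega)
          (by omega) (by simp; omega)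
    exact ⟨this.2, this.1⟩
  obtain ⟨k1, rfl⟩ := key
  have hr2' := H.uniq (H.symm hr) hr2
  subst hr2'
  have hp2p : p2 = p := by
    have := congrArg (List.take p.length) he2
    simp [← k1] at this
    simpa [k1] using this.symm
  subst hp2p
  have hv0r : v0 <+: p2 ++ r := by
    apply List.prefix_of_prefix_length_le (l₃ := v0 ++ w1)
    · exact ⟨_, rfl⟩
    · exact ⟨s, by simp [he]⟩
    · simp; omega
  obtain ⟨e, he'⟩ := hv0r
  exact ih j' (by omega) (y := e ++ s2) hv (by rw [← he'] at h4; simpa using h4)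

theorem SO.keep_eq (H : SO rel l) {n : ℕ} {b : A} {v0 v' y w2 r2 r2' s2 : List A} (hv : rel (b :: v0) v')
    (hr2 : rel r2 r2') (hd : Der rel n (v0 ++ y) w2) (he : b :: w2 = r2 ++ s2) : r2 = b :: v0 := by
  obtain ⟨v1, z', rfl, hv1, hv1l⟩ := H.keep n hv hd
  have h1 := H.len hr2
  have h2 := H.len hv
  simp at h2
  exact (H.ov' (p := []) (q := []) (u1 := r2) (v1 := b :: v1) (s := s2) (s' := z') hr2 hv
    (List.prefix_refl _) (by simpa using hv1) (by simpa using he.symm) (by simp) (by simp; omega)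
    (by simp; omega)).1

theorem SO.cancel (H : SO rel l) (hd : ∀ {a b r r'}, rel (a :: r) (b :: r') → a ≠ b) (n : ℕ) :
    ∀ {a : A} {w w' : List A}, Der rel n (a :: w) (a :: w') → ∃ m ≤ n, Der rel m w w' := by
  induction n using Nat.strong_induction_on with
  | _ n ih =>
  have ih' : ∀ m < n, ∀ (x w w' : List A), Der rel m (x ++ w) (x ++ w') → ∃ m' ≤ m, Der rel m' w w' := by
    intro m hm x
    induction x generalizing m with
    | nil => intro w w' h; exact ⟨m, le_rfl, h⟩
    | cons a x ihx =>
      intro w w' h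
      obtain ⟨m1, h1, h2⟩ := ih m hm h
      obtain ⟨m2, h3, h4⟩ := ihx m1 (by omega) w w' h2
      exact ⟨m2, by omega, h4⟩
  have hl := H.pos
  intro a w w' h
  rcases h.decomp (x := [a]) (w := w) rfl with ⟨z', hz, hD⟩ | ⟨i, j, w1, p, r, r', s, hn, h1, hr, he, hp, h2⟩
  · simp at hz; subst hz; exact ⟨n, le_rfl, hD⟩
  obtain rfl : p = [] := by
    apply List.eq_nil_of_length_eq_zero; simp at hp; simp [hp]
  have hrl := H.len hr
  have hrl' := H.len (H.symm hr)
  obtain ⟨c, r0, rfl⟩ : ∃ c r0, r = c :: r0 := by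
    cases r with
    | nil => simp at hrl; omega
    | cons c t => exact ⟨c, t, rfl⟩
  obtain ⟨b, r0', rfl⟩ : ∃ c r0', r' = c :: r0' := by
    cases r' with
    | nil => simp at hrl'; omega
    | cons c t => exact ⟨c, t, rfl⟩
  simp at he
  obtain ⟨rfl, rfl⟩ := he
  have hab := hd hr
  rcases h2.decomp (x := [b]) (w := r0' ++ s) (by simp) with ⟨z', hz, -⟩ | ⟨i', j', w2, p, r2, r2', s2, hn', h3, hr2, he2, hp2, h4⟩
  · simp at hz; exact absurd hz.1 hab
  obtain rfl : p = [] := by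
    apply List.eq_nil_of_length_eq_zero; simp at hp2; simp [hp2]
  have := H.keep_eq (H.symm hr) hr2 h3 (by simpa using he2)
  subst this
  have := H.uniq (H.symm hr) hr2
  subst this
  simp at he2
  subst he2
  obtain ⟨m, hm, h5⟩ := ih' i' (by omega) _ _ _ h3
  have h6 := (h1.trans (h5.appl r0)).appl [a]
  have h7 : Der rel (i + m + j') (a :: w) (a :: w') := Der.trans h6 (by simpa using h4)
  obtain ⟨m', hm', h8⟩ := ih (i + m + j') (by omega) h7
  exact ⟨m', by omega, h8⟩

theorem SO.cancel' (H : SO rel l) (hd : ∀ {a b r r'}, rel (a :: r) (b :: r') → a ≠ b) {n : ℕ}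
    {x w w' : List A} (h : Der rel n (x ++ w) (x ++ w')) : ∃ m, Der rel m w w' := by
  induction x generalizing n with
  | nil => exact ⟨n, h⟩
  | cons a x ih =>
    obtain ⟨m, -, h1⟩ := H.cancel hd n h
    exact ih h1

theorem SO.not_cancel (H : SO rel l) {a : A} {u v : List A} {n : ℕ} (h : rel (a :: u) (a :: v)) :
    ¬ Der rel n u v := by
  intro hD
  cases hD with
  | nil => exact H.ne h rfl
  | cons st d =>
    obtain ⟨p, s, r, r', h1, h2, h3⟩ := st
    have h4 := H.len h1
    have := H.ov' (p := []) (q := a :: p) (u1 := a :: u) (v1 := r) (s := []) (s' := s) h h1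
      (List.prefix_refl _) (List.prefix_refl _) (by simp [h2]) (by simp) 
      (by simp [h2]; have := H.pos; omega) (by omega)
    simp at this

theorem SO.left_iff (H : SO rel l) :
    (∀ x y z : List A, (∃ n, Der rel n (x ++ y) (x ++ z)) → ∃ n, Der rel n y z) ↔
    ∀ r r', rel r r' → r.head? ≠ r'.head? := by
  constructor
  · intro h r r' hr hh
    have h1 := H.len hr
    have h2 := H.len (H.symm hr)
    have h3 := H.pos
    cases r with
    | nil => simp at h1; omega
    | cons a r =>
    cases r' with
    | nil => simp at h2; omega
    | cons b r' =>
    simp at hh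
    subst hh
    obtain ⟨n, hn⟩ := h [a] r r' ⟨1, Der.cons ⟨[], [], _, _, hr, by simp, by simp⟩ (Der.nil _)⟩
    exact H.not_cancel hr hn
  · rintro h x y z ⟨n, hn⟩
    apply H.cancel' _ hn
    rintro a b r r' hr rfl
    exact h _ _ hr (by simp)

/-- The reversed relation. -/
def revRel (rel : List A → List A → Prop) (u v : List A) : Prop := rel u.reverse v.reverse

theorem SO.rev (H : SO rel l) : SO (revRel rel) l where
  pos := H.pos
  symm h := H.symm h
  len h := by simpa using H.len h
  uniq h h' := List.reverse_injective (H.uniq h h')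
  ne h h' := H.ne h (congrArg _ h')
  ov := by
    intro u u' v v' p q p' q' x hu hv h1 h2 hx
    have := H.ov (p := q.reverse) (x := x.reverse) (q := p.reverse) (p' := q'.reverse)
      (q' := p'.reverse) hu hv (by simp [h1]) (by simp [h2]) (by simpa)
    simp at this
    refine ⟨this.1, ?_⟩
    have h3 := congrArg List.length this.1
    simp [h1, h2] at h3
    omega

theorem Der.rev {n : ℕ} {u v : List A} (h : Der rel n u v) : Der (revRel rel) n u.reverse v.reverse := by
  induction h with
  | nil w => exact Der.nil _
  | cons s d ih =>
    obtain ⟨p, s, r, r', h1, rfl, rfl⟩ := s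
    exact Der.cons ⟨s.reverse, p.reverse, r.reverse, r'.reverse, by simpa [revRel] using h1, by simp, by simp⟩ ih

theorem Der.rev' {n : ℕ} {u v : List A} (h : Der (revRel rel) n u v) : Der rel n u.reverse v.reverse := by
  induction h with
  | nil w => exact Der.nil _
  | cons s d ih =>
    obtain ⟨p, s, r, r', h1, rfl, rfl⟩ := s
    exact Der.cons ⟨s.reverse, p.reverse, r.reverse, r'.reverse, h1, by simp, by simp⟩ ih

theorem SO.right_iff (H : SO rel l) :
    (∀ x y z : List A, (∃ n, Der rel n (y ++ x) (z ++ x)) → ∃ n, Der rel n y z) ↔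
    ∀ r r', rel r r' → r.getLast? ≠ r'.getLast? := by
  have := H.rev.left_iff
  have h1 : (∀ x y z : List A, (∃ n, Der rel n (y ++ x) (z ++ x)) → ∃ n, Der rel n y z) ↔
    (∀ x y z : List A, (∃ n, Der (revRel rel) n (x ++ y) (x ++ z)) → ∃ n, Der (revRel rel) n y z) := by
    constructor
    · rintro h x y z ⟨n, hn⟩
      obtain ⟨m, hm⟩ := h x.reverse y.reverse z.reverse ⟨n, by simpa using hn.rev'⟩
      exact ⟨m, by simpa using hm.rev⟩
    · rintro h x y z ⟨n, hn⟩
      obtain ⟨m, hm⟩ := h x.reverse y.reverse z.reverse ⟨n, by simpa using hn.rev⟩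
      exact ⟨m, by simpa using hm.rev'⟩
  rw [h1, this]
  constructor
  · intro h r r' hr
    simpa using h r.reverse r'.reverse (by simpa [revRel] using hr)
  · intro h r r' hr
    simpa using h _ _ hr

/-- The symmetric relation attached to a presentation. -/
def symRel (R : Set (FreeMonoid A × FreeMonoid A)) (u v : List A) : Prop :=
  (FreeMonoid.ofList u, FreeMonoid.ofList v) ∈ R ∨ (FreeMonoid.ofList v, FreeMonoid.ofList u) ∈ R

theorem symRel_symm {R : Set (FreeMonoid A × FreeMonoid A)} {u v : List A} (h : symRel R u v) :
    symRel R v u := Or.symm h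

theorem presCon_iff (R : Set (FreeMonoid A × FreeMonoid A)) (u v : FreeMonoid A) :
    presCon R u v ↔ ∃ n, Der (symRel R) n u.toList v.toList := by
  constructor
  · let c : Con (FreeMonoid A) :=
      { r := fun u v => ∃ n, Der (symRel R) n u.toList v.toList
        iseqv := ⟨fun x => ⟨0, Der.nil _⟩, fun ⟨n, h⟩ => ⟨n, h.symm symRel_symm⟩,
          fun ⟨n, h⟩ ⟨m, h'⟩ => ⟨n + m, h.trans h'⟩⟩
        mul' := by
          rintro w x y z ⟨n, h⟩ ⟨m, h'⟩
          refine ⟨n + m, ?_⟩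
          have h1 := h.app [] y.toList
          have h2 := h'.appl x.toList
          simpa using h1.trans h2 }
    have : presCon R ≤ c := by
      apply Con.conGen_le.2
      intro u v h
      exact ⟨1, Der.cons ⟨[], [], u.toList, v.toList, Or.inl h, by simp, by simp⟩ (Der.nil _)⟩
    exact fun h => this h
  · rintro ⟨n, h⟩
    suffices ∀ u v : List A, Der (symRel R) n u v → presCon R (FreeMonoid.ofList u) (FreeMonoid.ofList v) from
      this _ _ h
    clear h
    intro u v h
    induction h with
    | nil w => exact (presCon R).refl _
    | cons s d ih =>
      refine (presCon R).trans ?_ ih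
      obtain ⟨p, s, r, r', h1, rfl, rfl⟩ := s
      have : presCon R (FreeMonoid.ofList r) (FreeMonoid.ofList r') := by
        rcases h1 with h1 | h1
        · exact ConGen.Rel.of _ _ h1
        · exact (presCon R).symm (ConGen.Rel.of _ _ h1)
      simp only [FreeMonoid.ofList_append]
      exact (presCon R).mul ((presCon R).mul ((presCon R).refl _) this) ((presCon R).refl _)

/-- Cancellativity of the presented monoid. -/
def Canc (R : Set (FreeMonoid A × FreeMonoid A)) : Prop :=
  (∀ x y z : (presCon R).Quotient, x * y = x * z → y = z) ∧
          (∀ x y z : (presCon R).Quotient, y * x = z * x → y = z)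

theorem canc_iff {R : Set (FreeMonoid A × FreeMonoid A)} (H : SO (symRel R) l) :
    Canc R ↔ ∀ r r', symRel R r r' → r.head? ≠ r'.head? ∧ r.getLast? ≠ r'.getLast? := by
  have key : Canc R ↔
     (∀ x y z : List A, (∃ n, Der (symRel R) n (x ++ y) (x ++ z)) → ∃ n, Der (symRel R) n y z) ∧
     (∀ x y z : List A, (∃ n, Der (symRel R) n (y ++ x) (z ++ x)) → ∃ n, Der (symRel R) n y z) := by
    unfold Canc
    refine and_congr ?_ ?_
    · constructor
      · intro h x y z hn
        have := h (FreeMonoid.ofList x : FreeMonoid A) (FreeMonoid.ofList y : FreeMonoid A) (FreeMonoid.ofList z : FreeMonoid A)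
        simp only [← Con.coe_mul, Con.eq, presCon_iff] at this
        exact this hn
      · intro h x y z
        induction x using Con.induction_on with | _ x
        induction y using Con.induction_on with | _ y
        induction z using Con.induction_on with | _ z
        simp only [← Con.coe_mul, Con.eq, presCon_iff]
        exact h _ _ _
    · constructor
      · intro h x y z hn
        have := h (FreeMonoid.ofList x : FreeMonoid A) (FreeMonoid.ofList y : FreeMonoid A) (FreeMonoid.ofList z : FreeMonoid A)
        simp only [← Con.coe_mul, Con.eq, presCon_iff] at this
        exact this hn
      · intro h x y z
        induction x using Con.induction_on with | _ x
        induction y using Con.induction_on with | _ y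
        induction z using Con.induction_on with | _ z
        simp only [← Con.coe_mul, Con.eq, presCon_iff]
        exact h _ _ _
  rw [key, H.left_iff, H.right_iff]
  constructor
  · intro h r r' hr
    exact ⟨h.1 r r' hr, h.2 r r' hr⟩
  · intro h
    exact ⟨fun r r' hr => (h r r' hr).1, fun r r' hr => (h r r' hr).2⟩

variable {k : ℕ}

/-- The `i`-th relation of a tuple of words. -/
def pr (f : Fin k × Bool → List A) (i : Fin k) : FreeMonoid A × FreeMonoid A :=
  (FreeMonoid.ofList (f (i, false)), FreeMonoid.ofList (f (i, true)))

/-- No repeated factors of length `l`. -/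
def RF (l : ℕ) (f : Fin k × Bool → List A) : Prop :=
  ∀ i j p q p' q' x, f i = p ++ x ++ q → f j = p' ++ x ++ q' → x.length = l →
    i = j ∧ p.length = p'.length

/-- Both ends of each relation differ. -/
def DE (f : Fin k × Bool → List A) : Prop :=
  ∀ i : Fin k, (f (i, false)).head? ≠ (f (i, true)).head? ∧
    (f (i, false)).getLast? ≠ (f (i, true)).getLast?

theorem symRel_pr {f : Fin k × Bool → List A} {u v : List A} :
    symRel (Set.range (pr f)) u v ↔ ∃ i b, u = f (i, b) ∧ v = f (i, !b) := by
  unfold symRel pr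
  simp only [Set.mem_range, Prod.mk.injEq, EmbeddingLike.apply_eq_iff_eq]
  constructor
  · rintro (⟨i, rfl, rfl⟩ | ⟨i, rfl, rfl⟩)
    · exact ⟨i, false, rfl, rfl⟩
    · exact ⟨i, true, rfl, rfl⟩
  · rintro ⟨i, b | b, rfl, rfl⟩
    · exact Or.inl ⟨i, rfl, rfl⟩
    · exact Or.inr ⟨i, rfl, rfl⟩

theorem RF.inj {f : Fin k × Bool → List A} (hl : ∀ i, 3 * l ≤ (f i).length)
    (h : RF l f) : Function.Injective f := by
  intro i j hij
  have h1 := hl i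
  exact (h i j [] ((f i).drop l) [] ((f j).drop l) ((f i).take l) (by simp) (by simp [hij])
    (by simp; omega)).1

theorem RF.SO {f : Fin k × Bool → List A} (hp : 1 ≤ l) (hl : ∀ i, 3 * l ≤ (f i).length)
    (h : RF l f) : SO (symRel (Set.range (pr f))) l where
  pos := hp
  symm := symRel_symm
  len := by
    intro r r' hr
    obtain ⟨i, b, rfl, rfl⟩ := symRel_pr.1 hr
    exact hl _
  uniq := by
    intro r r' r'' h1 h2
    obtain ⟨i, b, rfl, rfl⟩ := symRel_pr.1 h1
    obtain ⟨j, c, h3, rfl⟩ := symRel_pr.1 h2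
    have := h.inj hl h3
    simp at this
    rw [this.1, this.2]
  ne := by
    intro r r' h1 h2
    obtain ⟨i, b, rfl, rfl⟩ := symRel_pr.1 h1
    have := h.inj hl h2
    simp at this
  ov := by
    intro u u' v v' p q p' q' x hu hv h1 h2 h3
    obtain ⟨i, b, rfl, rfl⟩ := symRel_pr.1 hu
    obtain ⟨j, c, rfl, rfl⟩ := symRel_pr.1 hv
    have := h (i, b) (j, c) p (x.drop l ++ q) p' (x.drop l ++ q') (x.take l)
      (by rw [h1, List.append_assoc p, List.append_assoc p, ← List.append_assoc (x.take l), List.take_append_drop])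
      (by rw [h2, List.append_assoc p', List.append_assoc p', ← List.append_assoc (x.take l), List.take_append_drop])
      (by simpa using h3)
    rw [this.1]
    exact ⟨rfl, this.2⟩

theorem RF.canc {f : Fin k × Bool → List A} (hp : 1 ≤ l) (hl : ∀ i, 3 * l ≤ (f i).length)
    (h : RF l f) : Canc (Set.range (pr f)) ↔ DE f := by
  rw [canc_iff (h.SO hp hl)]
  constructor
  · intro H i
    exact H _ _ (symRel_pr.2 ⟨i, false, rfl, rfl⟩)
  · intro H r r' hr
    obtain ⟨i, b | b, rfl, rfl⟩ := symRel_pr.1 hr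
    · exact H i
    · exact ⟨(H i).1.symm, (H i).2.symm⟩

theorem RF.pr_inj {f : Fin k × Bool → List A} (hl : ∀ i, 3 * l ≤ (f i).length)
    (h : RF l f) : Function.Injective (pr f) := by
  intro i j hij
  unfold pr at hij
  simp only [Prod.mk.injEq, EmbeddingLike.apply_eq_iff_eq] at hij
  have := h.inj hl hij.1
  simpa using this

/-- Tuples of total length `n`. -/
def Om (A : Type*) (k n : ℕ) : Set (Fin k × Bool → List A) := {f | ∑ i, (f i).length = n}

/-- Tuples of given lengths. -/
def OmL (A : Type*) {ι : Type*} (lam : ι → ℕ) : Set (ι → List A) := {f | ∀ i, (f i).length = lam i}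

/-- tuples are pairs of functions. -/
def tupEquiv (A : Type*) (k : ℕ) : (Fin k × Bool → List A) ≃ (Fin k → FreeMonoid A × FreeMonoid A) where
  toFun := pr
  invFun h x := if x.2 then (h x.1).2.toList else (h x.1).1.toList
  left_inv f := by
    funext ⟨i, b⟩
    cases b <;> simp [pr]
  right_inv h := by
    funext i
    simp [pr]

theorem sum_pr (f : Fin k × Bool → List A) :
    ∑ i, (f i).length = ∑ i, ((pr f i).1.length + (pr f i).2.length) := by
  rw [Fintype.sum_prod_type]
  simp [pr, FreeMonoid.length, add_comm]

open Classical in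
theorem presCount_mul (n : ℕ) (P : Set (FreeMonoid A × FreeMonoid A) → Prop) :
    presCount k n P * k.factorial =
      (Om A k n ∩ {f | Function.Injective (pr f) ∧ P (Set.range (pr f))}).ncard := by
  unfold presCount
  set X := {R : Finset (FreeMonoid A × FreeMonoid A) //
    R.card = k ∧ ∑ p ∈ R, (p.1.length + p.2.length) = n ∧
    P (↑R : Set (FreeMonoid A × FreeMonoid A))}
  set Y := (Om A k n ∩ {f | Function.Injective (pr f) ∧ P (Set.range (pr f))})
  rw [← Nat.card_coe_set_eq]
  let φ : Y → X := fun y => ⟨Finset.univ.image (pr y.1), by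
    rw [Finset.card_image_of_injective _ y.2.2.1]; simp, by
    rw [Finset.sum_image (fun a _ b _ h => y.2.2.1 h), ← sum_pr]; exact y.2.1, by
    have := y.2.2.2
    simpa using this⟩
  have e1 : ∀ R : X, {y : Y // φ y = R} ≃ (Fin k ↪ R.1) := fun R =>
    { toFun := fun y => ⟨fun i => ⟨pr y.1.1 i, by
          have := congrArg Subtype.val y.2
          rw [← this]; simp [φ]⟩, by
          intro i j h
          simp at h
          exact y.1.2.2.1 h⟩
      invFun := fun e => by
        have hinj : Function.Injective (fun i => (e i).1) := fun i j h => e.injective (Subtype.ext h)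
        have him : Finset.univ.image (fun i => (e i).1) = R.1 := by
          apply Finset.eq_of_subset_of_card_le
          · intro x; simp only [Finset.mem_image]; rintro ⟨i, -, rfl⟩; exact (e i).2
          · rw [Finset.card_image_of_injective _ hinj, R.2.1]; simp
        have hpr : pr ((tupEquiv A k).symm (fun i => (e i).1)) = fun i => (e i).1 :=
          (tupEquiv A k).apply_symm_apply _
        refine ⟨⟨(tupEquiv A k).symm (fun i => (e i).1), ?_, ?_, ?_⟩, ?_⟩
        · show ∑ i, _ = n
          rw [sum_pr, hpr]
          refine Eq.trans ?_ R.2.2.1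
          exact (Finset.sum_image (f := fun p : FreeMonoid A × FreeMonoid A => p.1.length + p.2.length)
            (fun a _ b _ h => hinj h)).symm.trans (Finset.sum_congr him fun _ _ => rfl)
        · rw [hpr]; exact hinj
        · rw [hpr]
          have h1 : Set.range (fun i => (e i).1) = ((R.1 : Finset _) : Set _) := by
            have := congrArg (fun F : Finset (FreeMonoid A × FreeMonoid A) => (F : Set (FreeMonoid A × FreeMonoid A))) him
            simpa using this
          exact h1.symm ▸ R.2.2.2
        · apply Subtype.ext
          simp only [φ]
          rw [hpr, him]
      left_inv := by
        rintro ⟨⟨y, hy⟩, h⟩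
        apply Subtype.ext
        apply Subtype.ext
        exact (tupEquiv A k).symm_apply_apply y
      right_inv := by
        intro e
        ext i : 2
        exact congrFun ((tupEquiv A k).apply_symm_apply (fun i => (e i).1)) i }
  have e2 : ∀ R : X, Nonempty ((Fin k ↪ R.1) ≃ Equiv.Perm (Fin k)) := fun R => by
    apply Fintype.card_eq.1
    rw [Fintype.card_embedding_eq, Fintype.card_perm]
    simp [R.2.1, Nat.descFactorial_self]
  have e3 : Y ≃ X × Equiv.Perm (Fin k) :=
    (Equiv.sigmaFiberEquiv φ).symm.trans
      ((Equiv.sigmaCongrRight fun R => (e1 R).trans (e2 R).some).trans (Equiv.sigmaEquivProd _ _))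
  rw [Nat.card_congr e3, Nat.card_prod]
  simp [Fintype.card_perm]

section counting

set_option linter.unusedSectionVars false

variable {ι : Type*} [Fintype ι] [DecidableEq ι]

/-- Length vectors. -/
def Lam (ι : Type*) [Fintype ι] [DecidableEq ι] (n : ℕ) : Finset (ι → ℕ) :=
  Finset.piAntidiag (Finset.univ : Finset ι) n

theorem mem_Lam {n : ℕ} {lam : ι → ℕ} : lam ∈ Lam ι n ↔ ∑ i, lam i = n := by
  simp [Lam]

theorem card_piA (s : Finset ι) (n : ℕ) : (Finset.piAntidiag s n).card = (s.card).multichoose n := by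
  rw [← Finset.card_finsuppAntidiag_nat_eq_multichoose]
  simp [Finset.finsuppAntidiag]

theorem card_Lam_fix (hm : 2 ≤ Fintype.card ι) (n j : ℕ) (i : ι) :
    ((Lam ι n).filter (fun lam => lam i = j)).card * n ≤ (Lam ι n).card * Fintype.card ι := by
  obtain ⟨M, hM⟩ : ∃ M, Fintype.card ι = M + 2 := ⟨Fintype.card ι - 2, by omega⟩
  by_cases hj : n < j
  · have : (Lam ι n).filter (fun lam => lam i = j) = ∅ := by
      apply Finset.filter_eq_empty_iff.2
      intro lam hl hij
      rw [mem_Lam] at hl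
      have := Finset.single_le_sum (f := lam) (fun _ _ => Nat.zero_le _) (Finset.mem_univ i)
      omega
    simp [this]
  push Not at hj
  have h1 : ((Lam ι n).filter (fun lam => lam i = j)).card ≤
      (Finset.piAntidiag (Finset.univ.erase i) (n - j)).card := by
    apply Finset.card_le_card_of_injOn (fun lam => Function.update lam i 0)
    · intro lam hl
      simp only [Finset.coe_filter, Set.mem_ofPred_eq, mem_Lam] at hl
      simp only [Finset.mem_coe, Finset.mem_piAntidiag]
      constructor
      · have h2 : ∑ x ∈ Finset.univ.erase i, Function.update lam i 0 x = ∑ x ∈ Finset.univ.erase i, lam x := by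
          apply Finset.sum_congr rfl
          intro x hx
          rw [Function.update_of_ne (Finset.ne_of_mem_erase hx)]
        have h3 := Finset.add_sum_erase Finset.univ lam (Finset.mem_univ i)
        show ∑ x ∈ Finset.univ.erase i, Function.update lam i 0 x = _
        omega
      · intro x hx
        by_cases hxi : x = i
        · subst hxi; simp at hx
        · simp [hxi]
    · intro f hf g hg hfg
      simp only [Finset.coe_filter, Set.mem_ofPred_eq] at hf hg
      funext x
      by_cases hxi : x = i
      · subst hxi; rw [hf.2, hg.2]
      · have := congrFun hfg x
        simpa [hxi] using this
  rw [card_piA, Finset.card_erase_of_mem (Finset.mem_univ i), Finset.card_univ, hM] at h1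
  rw [Lam, card_piA, Finset.card_univ, hM]
  rw [Nat.multichoose_eq] at h1 ⊢
  have e1 : M + 2 - 1 + (n - j) - 1 = M + (n - j) := by omega
  have e2 : M + 2 + n - 1 = M + n + 1 := by omega
  have h4 : (M + n + 1).choose n = (M + n + 1).choose (M + 1) := by
    rw [← Nat.choose_symm_of_eq_add]; omega
  have h5 : (M + (n - j)).choose (n - j) = (M + (n-j)).choose M := by
    rw [← Nat.choose_symm_of_eq_add]; omega
  have h6 : (M + (n-j)).choose M ≤ (M + n).choose M := Nat.choose_le_choose _ (by omega)
  have h7 := Nat.add_one_mul_choose_eq (M + n) M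
  rw [e1, h5] at h1
  rw [e2, h4]
  calc _ ≤ (M + n).choose M * n := Nat.mul_le_mul_right _ (h1.trans h6)
    _ ≤ (M + n + 1) * (M + n).choose M := by
        rw [mul_comm]; exact Nat.mul_le_mul_right _ (by omega)
    _ = (M + n + 1).choose (M + 1) * (M + 1) := h7
    _ ≤ _ := Nat.mul_le_mul_left _ (by omega)

theorem card_Lam_short (hm : 2 ≤ Fintype.card ι) (n L : ℕ) :
    ((Lam ι n).filter (fun lam => ∃ i, lam i < L)).card * n ≤
      (Lam ι n).card * (Fintype.card ι ^ 2 * L) := by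
  have h1 : (Lam ι n).filter (fun lam => ∃ i, lam i < L) ⊆
      (Finset.univ ×ˢ Finset.range L).biUnion
        (fun x : ι × ℕ => (Lam ι n).filter (fun lam => lam x.1 = x.2)) := by
    intro lam hl
    simp only [Finset.mem_filter, Finset.mem_biUnion, Finset.mem_product, Finset.mem_univ, true_and,
      Finset.mem_range, Prod.exists] at hl ⊢
    obtain ⟨h1, i, h2⟩ := hl
    exact ⟨i, lam i, h2, h1, rfl⟩
  calc _ ≤ (∑ x ∈ (Finset.univ ×ˢ Finset.range L : Finset (ι × ℕ)),
        ((Lam ι n).filter (fun lam => lam x.1 = x.2)).card) * n :=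
        Nat.mul_le_mul_right _ ((Finset.card_le_card h1).trans Finset.card_biUnion_le)
    _ = ∑ x ∈ (Finset.univ ×ˢ Finset.range L : Finset (ι × ℕ)),
        ((Lam ι n).filter (fun lam => lam x.1 = x.2)).card * n := by rw [Finset.sum_mul]
    _ ≤ ∑ x ∈ (Finset.univ ×ˢ Finset.range L : Finset (ι × ℕ)), (Lam ι n).card * Fintype.card ι :=
        Finset.sum_le_sum fun x _ => card_Lam_fix hm _ _ _
    _ = _ := by
      simp [Finset.card_product]; ring

variable [Fintype A]

theorem card_words (s : ℕ) : Nat.card {u : List A | u.length = s} = Fintype.card A ^ s := by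
  have : Nat.card {u : List A | u.length = s} = Nat.card (List.Vector A s) := rfl
  rw [this, Nat.card_eq_fintype_card, card_vector]

theorem OmL_eq (lam : ι → ℕ) : OmL A lam = Set.pi Set.univ (fun i => {u : List A | u.length = lam i}) := by
  ext f; simp [OmL]

theorem OmL_finite (lam : ι → ℕ) : (OmL A lam).Finite := by
  rw [OmL_eq]
  exact Set.Finite.pi fun i => List.finite_length_eq A (lam i)

theorem OmL_ncard (lam : ι → ℕ) : (OmL A lam).ncard = Fintype.card A ^ (∑ i, lam i) := by
  rw [OmL_eq, ← Nat.card_coe_set_eq, Nat.card_congr (Equiv.Set.univPi _), Nat.card_pi]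
  simp only [card_words]
  rw [Finset.prod_pow_eq_pow_sum]

theorem OmL_rep_ncard (lam : ι → ℕ) {i j : ι} {p q l : ℕ} (hj : q + l ≤ lam j)
    (hne : i ≠ j ∨ p < q) :
    (OmL A lam ∩ {f | ∀ t < l, (f i)[p + t]? = (f j)[q + t]?}).ncard * Fintype.card A ^ l ≤
      Fintype.card A ^ (∑ i, lam i) := by
  have h1 : (OmL A lam ∩ {f | ∀ t < l, (f i)[p + t]? = (f j)[q + t]?}).ncard ≤
      (OmL A (Function.update lam j (lam j - l))).ncard := by
    apply Set.ncard_le_ncard_of_injOn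
      (fun f => Function.update f j ((f j).take q ++ (f j).drop (q + l))) _ _ (OmL_finite _)
    · rintro f ⟨hf, -⟩ x
      have h := hf x
      by_cases hx : x = j
      · subst hx; simp [h]; omega
      · simp [hx, h]
    · rintro f ⟨hf, hfb⟩ g ⟨hg, hgb⟩ hfg
      have hfj := hf j
      have hgj := hg j
      have hother : ∀ x, x ≠ j → f x = g x := by
        intro x hx
        have := congrFun hfg x
        simpa [hx] using this
      have hjj := congrFun hfg j
      simp only [Function.update_self] at hjj
      obtain ⟨ht, hd⟩ := List.append_inj hjj (by simp [hfj, hgj])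
      have hout : ∀ s, s < q ∨ q + l ≤ s → (f j)[s]? = (g j)[s]? := by
        rintro s (hs | hs)
        · have := congrArg (fun u => u[s]?) ht
          simpa [List.getElem?_take, hs] using this
        · have := congrArg (fun u => u[s - (q + l)]?) hd
          simp only [List.getElem?_drop] at this
          rwa [Nat.add_sub_cancel' hs] at this
      have hin : ∀ t, t < l → (f j)[q + t]? = (g j)[q + t]? := by
        intro t
        induction t using Nat.strong_induction_on with
        | _ t ih =>
          intro htl
          rw [← hfb t htl, ← hgb t htl]
          by_cases hij : i = j
          · subst hij
            have hpq : p < q := by tauto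
            by_cases hc : p + t < q
            · exact hout _ (Or.inl hc)
            · have := ih (p + t - q) (by omega) (by omega)
              rwa [Nat.add_sub_cancel' (by omega)] at this
          · rw [hother i hij]
      funext x
      by_cases hx : x = j
      · subst hx
        apply List.ext_getElem?
        intro s
        by_cases hs : s < q ∨ q + l ≤ s
        · exact hout s hs
        · have := hin (s - q) (by omega)
          rwa [Nat.add_sub_cancel' (by omega)] at this
      · exact hother x hx
  rw [OmL_ncard] at h1
  have h2 : ∑ x, Function.update lam j (lam j - l) x + l = ∑ x, lam x := by
    rw [← Finset.add_sum_erase Finset.univ lam (Finset.mem_univ j),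
      ← Finset.add_sum_erase Finset.univ (Function.update lam j (lam j - l)) (Finset.mem_univ j)]
    have : ∑ x ∈ Finset.univ.erase j, Function.update lam j (lam j - l) x = ∑ x ∈ Finset.univ.erase j, lam x := by
      apply Finset.sum_congr rfl
      intro x hx
      rw [Function.update_of_ne (Finset.ne_of_mem_erase hx)]
    rw [this]; simp; omega
  calc _ ≤ _ := Nat.mul_le_mul_right _ h1
    _ = _ := by rw [← pow_add, h2]

end counting

section counting2

set_option linter.unusedSectionVars false

variable [Fintype A]

/-- Pairs of words with distinct ends. -/
def PS (A : Type*) (s t : ℕ) : Set (List A × List A) :=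
  {p | p.1.length = s ∧ p.2.length = t ∧ p.1.head? ≠ p.2.head? ∧ p.1.getLast? ≠ p.2.getLast?}

open Classical in
theorem card_OD : Nat.card {x : A × A // x.1 ≠ x.2} = Fintype.card A * (Fintype.card A - 1) := by
  have : Nat.card {x : A × A // x.1 ≠ x.2} = (Finset.univ.offDiag : Finset (A × A)).card := by
    rw [Nat.card_eq_fintype_card, Fintype.card_subtype]
    congr 1
    ext x; simp [Finset.mem_offDiag]
  rw [this, Finset.offDiag_card, Finset.card_univ, Nat.mul_sub, mul_one]

theorem split_word {u : List A} {s : ℕ} (h : u.length = s + 2) : ∃ a m c, u = a :: (m ++ [c]) ∧ m.length = s := by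
  cases u with
  | nil => simp at h
  | cons a u =>
    rcases List.eq_nil_or_concat u with rfl | ⟨m, c, rfl⟩
    · simp at h
    · simp at h
      exact ⟨a, m, c, by simp, by omega⟩

theorem card_PS (s t : ℕ) : Nat.card (PS A (s + 2) (t + 2)) =
    (Fintype.card A * (Fintype.card A - 1)) ^ 2 * (Fintype.card A ^ s * Fintype.card A ^ t) := by
  let F : ({x : A × A // x.1 ≠ x.2} × {x : A × A // x.1 ≠ x.2}) ×
      ({u : List A | u.length = s} × {u : List A | u.length = t}) → PS A (s + 2) (t + 2) := fun x =>
    ⟨(x.1.1.1.1 :: (x.2.1.1 ++ [x.1.2.1.1]), x.1.1.1.2 :: (x.2.2.1 ++ [x.1.2.1.2])), by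
      obtain ⟨⟨⟨⟨a, b⟩, hab⟩, ⟨⟨c, d⟩, hcd⟩⟩, ⟨⟨u, hu⟩, ⟨v, hv⟩⟩⟩ := x
      simp only [Set.mem_ofPred_eq] at hu hv
      refine ⟨by simp [hu], by simp [hv], by simpa using hab, ?_⟩
      simp only [← List.cons_append, List.getLast?_append]
      simpa using hcd⟩
  have hF : Function.Bijective F := by
    constructor
    · rintro ⟨⟨⟨⟨a, b⟩, hab⟩, ⟨⟨c, d⟩, hcd⟩⟩, ⟨⟨u, hu⟩, ⟨v, hv⟩⟩⟩ ⟨⟨⟨⟨a', b'⟩, hab'⟩, ⟨⟨c', d'⟩, hcd'⟩⟩, ⟨⟨u', hu'⟩, ⟨v', hv'⟩⟩⟩ h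
      simp only [Set.mem_ofPred_eq] at hu hv hu' hv'
      simp only [F, Subtype.mk.injEq, Prod.mk.injEq, List.cons.injEq] at h
      obtain ⟨⟨rfl, h1⟩, ⟨rfl, h2⟩⟩ := h
      obtain ⟨rfl, h3⟩ := List.append_inj h1 (by omega)
      obtain ⟨rfl, h4⟩ := List.append_inj h2 (by omega)
      simp at h3 h4
      subst h3 h4
      rfl
    · rintro ⟨⟨u, v⟩, hu, hv, h1, h2⟩
      obtain ⟨a, m, c, rfl, hm⟩ := split_word hu
      obtain ⟨b, m', d, rfl, hm'⟩ := split_word hv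
      simp only [← List.cons_append, List.getLast?_append] at h2
      exact ⟨⟨⟨⟨⟨a, b⟩, by simpa using h1⟩, ⟨⟨c, d⟩, by simpa using h2⟩⟩, ⟨⟨m, hm⟩, ⟨m', hm'⟩⟩⟩, rfl⟩
  rw [← Nat.card_congr (Equiv.ofBijective F hF), Nat.card_prod, Nat.card_prod, Nat.card_prod, card_OD,
    card_words, card_words, sq]

theorem OmL_DE_ncard (hA : 2 ≤ Fintype.card A) (lam : Fin k × Bool → ℕ) (h2 : ∀ i, 2 ≤ lam i) :
    ((OmL A lam ∩ {f | DE f}).ncard : ℝ) = (Fintype.card A : ℝ) ^ (∑ i, lam i) *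
      (((Fintype.card A - 1 : ℝ) / (Fintype.card A : ℝ)) ^ (2 * k)) := by
  have e : ↥(OmL A lam ∩ {f | DE f}) ≃ ((i : Fin k) → PS A (lam (i, false)) (lam (i, true))) :=
    { toFun := fun f i => ⟨(f.1 (i, false), f.1 (i, true)), f.2.1 _, f.2.1 _, (f.2.2 i).1, (f.2.2 i).2⟩
      invFun := fun g => ⟨fun x => if x.2 then (g x.1).1.2 else (g x.1).1.1, by
        constructor
        · rintro ⟨i, b⟩
          cases b
          · simpa using (g i).2.1
          · simpa using (g i).2.2.1
        · intro i
          simpa using (g i).2.2.2⟩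
      left_inv := by
        intro f
        apply Subtype.ext
        funext ⟨i, b⟩
        cases b <;> simp
      right_inv := by
        intro g
        funext i
        apply Subtype.ext
        simp }
  rw [← Nat.card_coe_set_eq, Nat.card_congr e, Nat.card_pi]
  have ha : (Fintype.card A : ℝ) ≠ 0 := by positivity
  have h3 : ∀ i : Fin k, ((Nat.card (PS A (lam (i, false)) (lam (i, true))) : ℕ) : ℝ) =
      (Fintype.card A : ℝ) ^ (lam (i, false) + lam (i, true)) *
        (((Fintype.card A - 1 : ℝ) / (Fintype.card A : ℝ)) ^ 2) := by
    intro i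
    obtain ⟨s, hs⟩ := Nat.exists_eq_add_of_le (h2 (i, false))
    obtain ⟨t, ht⟩ := Nat.exists_eq_add_of_le (h2 (i, true))
    rw [hs, ht, add_comm 2 s, add_comm 2 t, card_PS]
    push_cast [Nat.cast_sub (show 1 ≤ Fintype.card A by omega)]
    field_simp
    ring
  rw [Nat.cast_prod]
  simp only [h3]
  rw [Finset.prod_mul_distrib, Finset.prod_pow_eq_pow_sum, Finset.prod_const, Finset.card_univ,
    Fintype.card_fin, ← pow_mul, Fintype.sum_prod_type]
  simp [add_comm]

theorem mem_OmL_len {f : Fin k × Bool → List A} {lam : Fin k × Bool → ℕ} (h : f ∈ OmL A lam) :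
    (fun i => (f i).length) = lam := funext h

theorem Om_eq (n : ℕ) : Om A k n = ⋃ lam ∈ Lam (Fin k × Bool) n, OmL A lam := by
  ext f
  simp only [Set.mem_iUnion, exists_prop, mem_Lam]
  constructor
  · intro h
    exact ⟨fun i => (f i).length, h, fun i => rfl⟩
  · rintro ⟨lam, h, hf⟩
    rw [← mem_OmL_len hf] at h
    exact h

theorem Om_finite (n : ℕ) : (Om A k n).Finite := by
  rw [Om_eq]
  exact Set.Finite.biUnion (Finset.finite_toSet _) fun lam _ => OmL_finite lam

theorem Om_inter_ncard (n : ℕ) (B : Set (Fin k × Bool → List A)) :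
    (Om A k n ∩ B).ncard = ∑ lam ∈ Lam (Fin k × Bool) n, (OmL A lam ∩ B).ncard := by
  rw [Om_eq, Set.iUnion₂_inter]
  have := (Finset.finite_toSet (Lam (Fin k × Bool) n)).ncard_biUnion (s := fun lam => OmL A lam ∩ B)
    (fun lam _ => (OmL_finite lam).inter_of_left _) (by
      intro x _ y _ hxy
      apply Set.disjoint_left.2
      rintro f ⟨h1, -⟩ ⟨h2, -⟩
      exact hxy (by rw [← mem_OmL_len h1, ← mem_OmL_len h2]))
  rw [finsum_mem_coe_finset] at this
  exact this

theorem Om_ncard (n : ℕ) : (Om A k n).ncard = (Lam (Fin k × Bool) n).card * Fintype.card A ^ n := by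
  have := Om_inter_ncard (A := A) (k := k) n Set.univ
  simp only [Set.inter_univ] at this
  rw [this, Finset.sum_congr rfl (g := fun _ => Fintype.card A ^ n), Finset.sum_const, smul_eq_mul]
  intro lam hl
  rw [OmL_ncard, mem_Lam.1 hl]

/-- Some word is short. -/
def Short (A : Type*) (k L : ℕ) : Set (Fin k × Bool → List A) := {f | ∃ i, (f i).length < L}

theorem Short_ncard (hk : 1 ≤ k) (n L : ℕ) :
    (Om A k n ∩ Short A k L).ncard * n ≤ (Om A k n).ncard * ((2 * k) ^ 2 * L) := by
  have h1 : (Om A k n ∩ Short A k L).ncard ≤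
      ((Lam (Fin k × Bool) n).filter (fun lam => ∃ i, lam i < L)).card * Fintype.card A ^ n := by
    rw [Om_inter_ncard, ← smul_eq_mul, ← Finset.sum_const, Finset.sum_filter]
    apply Finset.sum_le_sum
    intro lam hl
    split_ifs with h
    · rw [← mem_Lam.1 hl, ← OmL_ncard]
      exact Set.ncard_le_ncard Set.inter_subset_left (OmL_finite _)
    · rw [Nat.le_zero, Set.ncard_eq_zero ((OmL_finite _).inter_of_left _)]
      apply Set.eq_empty_of_forall_notMem
      rintro f ⟨hf, i, hi⟩
      exact h ⟨i, by rw [← hf i]; exact hi⟩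
  have h2 := card_Lam_short (ι := Fin k × Bool) (by simp; omega) n L
  rw [Om_ncard]
  have h3 : Fintype.card (Fin k × Bool) = 2 * k := by simp [mul_comm]
  rw [h3] at h2
  calc _ ≤ _ := Nat.mul_le_mul_right n h1
    _ = ((Lam (Fin k × Bool) n).filter (fun lam => ∃ i, lam i < L)).card * n * Fintype.card A ^ n := by ring
    _ ≤ _ := Nat.mul_le_mul_right _ h2
    _ = _ := by ring

theorem not_RF {f : Fin k × Bool → List A} {l : ℕ} (h : ¬ RF l f) :
    ∃ i j p q, p + l ≤ (f i).length ∧ q + l ≤ (f j).length ∧ (i ≠ j ∨ p < q) ∧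
      ∀ t < l, (f i)[p + t]? = (f j)[q + t]? := by
  unfold RF at h
  push Not at h
  obtain ⟨i, j, p, q, p', q', x, h1, h2, h3, h4⟩ := h
  have key : ∀ t < l, (f i)[p.length + t]? = (f j)[p'.length + t]? := by
    intro t ht
    rw [h1, h2, List.append_assoc, List.append_assoc]
    rw [List.getElem?_append_right (l₁ := p) (by omega), List.getElem?_append_right (l₁ := p') (by omega)]
    simp only [Nat.add_sub_cancel_left]
    rw [List.getElem?_append_left (l₁ := x) (by omega), List.getElem?_append_left (l₁ := x) (by omega)]
  have hi : p.length + l ≤ (f i).length := by rw [h1]; simp; omega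
  have hj : p'.length + l ≤ (f j).length := by rw [h2]; simp; omega
  by_cases hij : i = j
  · have := h4 hij
    rcases lt_or_gt_of_ne this with h5 | h5
    · exact ⟨i, j, _, _, hi, hj, Or.inr h5, key⟩
    · exact ⟨j, i, _, _, hj, hi, Or.inr h5, fun t ht => (key t ht).symm⟩
  · exact ⟨i, j, _, _, hi, hj, Or.inl hij, key⟩

theorem RF_ncard (n l : ℕ) :
    (Om A k n ∩ {f | ¬ RF l f}).ncard * Fintype.card A ^ l ≤
      (Om A k n).ncard * ((2 * k) ^ 2 * (n + 1) ^ 2) := by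
  rw [Om_ncard, Om_inter_ncard, Finset.sum_mul, mul_assoc, ← smul_eq_mul (a := (Lam (Fin k × Bool) n).card),
    ← Finset.sum_const]
  apply Finset.sum_le_sum
  intro lam hl
  have hl' := mem_Lam.1 hl
  let I : Finset ((Fin k × Bool) × (Fin k × Bool) × ℕ × ℕ) :=
    Finset.univ ×ˢ Finset.univ ×ˢ Finset.range (n + 1) ×ˢ Finset.range (n + 1)
  let B : (Fin k × Bool) × (Fin k × Bool) × ℕ × ℕ → Set (Fin k × Bool → List A) := fun x =>
    {f | x.2.2.2 + l ≤ lam x.2.1 ∧ (x.1 ≠ x.2.1 ∨ x.2.2.1 < x.2.2.2)} ∩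
    (OmL A lam ∩ {f | ∀ t < l, (f x.1)[x.2.2.1 + t]? = (f x.2.1)[x.2.2.2 + t]?})
  have hsub : OmL A lam ∩ {f | ¬ RF l f} ⊆ ⋃ x ∈ I, B x := by
    rintro f ⟨hf, hr⟩
    obtain ⟨i, j, p, q, h1, h2, h3, h4⟩ := not_RF hr
    have hi := Finset.single_le_sum (f := lam) (fun _ _ => Nat.zero_le _) (Finset.mem_univ i)
    have hj := Finset.single_le_sum (f := lam) (fun _ _ => Nat.zero_le _) (Finset.mem_univ j)
    rw [hf i] at h1
    rw [hf j] at h2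
    simp only [Set.mem_iUnion]
    refine ⟨(i, j, p, q), ?_, ⟨h2, h3⟩, hf, h4⟩
    simp only [I, Finset.mem_product, Finset.mem_univ, Finset.mem_range, true_and]
    omega
  have hB : ∀ x ∈ I, (B x).ncard * Fintype.card A ^ l ≤ Fintype.card A ^ n := by
    intro x _
    by_cases hx : x.2.2.2 + l ≤ lam x.2.1 ∧ (x.1 ≠ x.2.1 ∨ x.2.2.1 < x.2.2.2)
    · have := OmL_rep_ncard (A := A) lam hx.1 hx.2
      rw [hl'] at this
      refine le_trans (Nat.mul_le_mul_right _ ?_) this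
      exact Set.ncard_le_ncard Set.inter_subset_right ((OmL_finite _).inter_of_left _)
    · have : B x = ∅ := by
        apply Set.eq_empty_of_forall_notMem
        rintro f ⟨h, -⟩
        exact hx h
      simp [this]
  have hfin : (⋃ x ∈ I, B x).Finite :=
    Set.Finite.biUnion (Finset.finite_toSet _) fun x _ => ((OmL_finite _).inter_of_left _).inter_of_right _
  calc _ ≤ (∑ x ∈ I, (B x).ncard) * Fintype.card A ^ l :=
        Nat.mul_le_mul_right _ ((Set.ncard_le_ncard hsub hfin).trans (Finset.set_ncard_biUnion_le _ _))
    _ = ∑ x ∈ I, (B x).ncard * Fintype.card A ^ l := Finset.sum_mul _ _ _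
    _ ≤ ∑ x ∈ I, Fintype.card A ^ n := Finset.sum_le_sum hB
    _ = _ := by
      simp [I, Finset.card_product]; ring

/-- DE count, up to short words. -/
theorem DE_ncard (hA : 2 ≤ Fintype.card A) (n L : ℕ) (hL : 2 ≤ L) :
    |((Om A k n ∩ {f | DE f}).ncard : ℝ) - (Om A k n).ncard *
      (((Fintype.card A - 1 : ℝ) / (Fintype.card A : ℝ)) ^ (2 * k))| ≤ (Om A k n ∩ Short A k L).ncard := by
  have h0 := Om_inter_ncard (A := A) (k := k) n Set.univ
  simp only [Set.inter_univ] at h0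
  rw [h0, Om_inter_ncard, Om_inter_ncard]
  push_cast
  rw [Finset.sum_mul, ← Finset.sum_sub_distrib]
  refine (Finset.abs_sum_le_sum_abs _ _).trans (Finset.sum_le_sum ?_)
  intro lam hl
  set c := (((Fintype.card A - 1 : ℝ) / (Fintype.card A : ℝ)) ^ (2 * k)) with hc
  have ha : (2 : ℝ) ≤ Fintype.card A := by exact_mod_cast hA
  have hc0 : 0 ≤ c := pow_nonneg (div_nonneg (by linarith) (by linarith)) _
  have hc1 : c ≤ 1 := pow_le_one₀ (div_nonneg (by linarith) (by linarith))
    ((div_le_one (by linarith)).2 (by linarith))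
  by_cases hs : ∃ i, lam i < L
  · have h1 : OmL A lam ∩ Short A k L = OmL A lam := by
      apply Set.inter_eq_left.2
      intro f hf
      obtain ⟨i, hi⟩ := hs
      exact ⟨i, by rw [hf i]; exact hi⟩
    rw [h1]
    have h2 : ((OmL A lam ∩ {f | DE f}).ncard : ℝ) ≤ (OmL A lam).ncard := by
      exact_mod_cast Set.ncard_le_ncard Set.inter_subset_left (OmL_finite _)
    have h3 : (0 : ℝ) ≤ (OmL A lam ∩ {f | DE f}).ncard := by positivity
    have h4 : (0 : ℝ) ≤ (OmL A lam).ncard := by positivity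
    rw [abs_le]
    constructor <;> nlinarith
  · push Not at hs
    rw [OmL_DE_ncard hA lam (fun i => hL.trans (hs i)), OmL_ncard]
    push_cast
    rw [sub_self, abs_zero]
    positivity

end counting2

section final

variable [Fintype A]

/-- The piece length bound. -/
def ell (n : ℕ) : ℕ := 3 * (Nat.log 2 n + 1)

theorem ell_pow {a : ℕ} (ha : 2 ≤ a) (n : ℕ) : (n + 1) ^ 3 ≤ a ^ ell n := by
  have h1 : n + 1 ≤ 2 ^ (Nat.log 2 n + 1) := Nat.lt_pow_succ_log_self (by norm_num) n
  calc (n + 1) ^ 3 ≤ (2 ^ (Nat.log 2 n + 1)) ^ 3 := Nat.pow_le_pow_left h1 3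
    _ = 2 ^ ell n := by rw [← pow_mul, ell, mul_comm]
    _ ≤ _ := Nat.pow_le_pow_left ha _

theorem ell_tendsto : Filter.Tendsto (fun n : ℕ => (ell n : ℝ) / n) Filter.atTop (nhds 0) := by
  have h1 : Filter.Tendsto (fun n : ℕ => Real.log n / n) Filter.atTop (nhds 0) :=
    (Real.isLittleO_log_id_atTop.tendsto_div_nhds_zero).comp tendsto_natCast_atTop_atTop
  have h2 : Filter.Tendsto (fun n : ℕ => 3 / Real.log 2 * (Real.log n / n) + 3 * (1 / (n : ℝ)))
      Filter.atTop (nhds (3 / Real.log 2 * 0 + 3 * 0)) :=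
    (h1.const_mul _).add (tendsto_one_div_atTop_nhds_zero_nat.const_mul _)
  simp only [mul_zero, add_zero] at h2
  refine squeeze_zero (fun n => by positivity) (fun n => ?_) h2
  have h3 : (Nat.log 2 n : ℝ) ≤ Real.log n / Real.log 2 := by
    simpa [Real.logb] using Real.natLog_le_logb n 2
  calc (ell n : ℝ) / n = 3 * (Nat.log 2 n + 1) / n := by simp [ell]
    _ ≤ 3 * (Real.log n / Real.log 2 + 1) / n := by gcongr
    _ = _ := by ring

/-- The number of exceptional tuples. -/
noncomputable def exc (A : Type*) (k n : ℕ) : ℝ :=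
  (Om A k n ∩ Short A k (3 * ell n)).ncard + (Om A k n ∩ {f | ¬ RF (ell n) f}).ncard

theorem Om_pos (hA : 2 ≤ Fintype.card A) (hk : 1 ≤ k) (n : ℕ) : (0 : ℝ) < (Om A k n).ncard := by
  rw [Om_ncard]
  have h : (Lam (Fin k × Bool) n).Nonempty := by
    refine ⟨Pi.single (⟨0, by omega⟩, false) n, ?_⟩
    rw [mem_Lam]
    simp
  have := h.card_pos
  have ha : 0 < Fintype.card A := by omega
  positivity

theorem exc_tendsto (hA : 2 ≤ Fintype.card A) (hk : 1 ≤ k) :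
    Filter.Tendsto (fun n : ℕ => exc A k n / (Om A k n).ncard) Filter.atTop (nhds 0) := by
  have h2 : Filter.Tendsto (fun n : ℕ => (2 * k : ℝ) ^ 2 * 3 * ((ell n : ℝ) / n) + (2 * k : ℝ) ^ 2 * (1 / ((n : ℝ) + 1)))
      Filter.atTop (nhds ((2 * k : ℝ) ^ 2 * 3 * 0 + (2 * k : ℝ) ^ 2 * 0)) :=
    (ell_tendsto.const_mul _).add (tendsto_one_div_add_atTop_nhds_zero_nat.const_mul _)
  simp only [mul_zero, add_zero] at h2
  refine squeeze_zero' (Filter.Eventually.of_forall fun n => by unfold exc; positivity) ?_ h2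
  filter_upwards [Filter.eventually_ge_atTop 1] with n hn
  have hT := Om_pos hA hk n
  have hn' : (0 : ℝ) < n := by exact_mod_cast hn
  unfold exc
  rw [add_div]
  apply add_le_add
  · have h3 : ((Om A k n ∩ Short A k (3 * ell n)).ncard : ℝ) * n ≤
        (Om A k n).ncard * ((2 * k) ^ 2 * (3 * ell n)) := by
      exact_mod_cast Short_ncard (A := A) hk n (3 * ell n)
    rw [div_le_iff₀ hT]
    have : (2 * k : ℝ) ^ 2 * 3 * ((ell n : ℝ) / n) * (Om A k n).ncard =
      ((Om A k n).ncard * ((2 * k) ^ 2 * (3 * ell n))) / n := by ring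
    rw [this, le_div_iff₀ hn']
    exact h3
  · have h3 : ((Om A k n ∩ {f | ¬ RF (ell n) f}).ncard : ℝ) * (Fintype.card A : ℝ) ^ (ell n) ≤
      (Om A k n).ncard * ((2 * k) ^ 2 * (n + 1) ^ 2) := by
      exact_mod_cast RF_ncard (A := A) (k := k) n (ell n)
    have h4 : ((n : ℝ) + 1) ^ 3 ≤ (Fintype.card A : ℝ) ^ (ell n) := by
      exact_mod_cast ell_pow hA n
    have h5 : ((Om A k n ∩ {f | ¬ RF (ell n) f}).ncard : ℝ) * ((n : ℝ) + 1) ^ 3 ≤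
      (Om A k n).ncard * ((2 * k) ^ 2 * (n + 1) ^ 2) :=
      (mul_le_mul_of_nonneg_left h4 (by positivity)).trans h3
    rw [div_le_iff₀ hT]
    have h6 : (0 : ℝ) < ((n : ℝ) + 1) ^ 3 := by positivity
    refine le_of_mul_le_mul_right (h5.trans (le_of_eq ?_)) h6
    field_simp

theorem ncard_le_exc {B C : Set (Fin k × Bool → List A)} (n : ℕ)
    (h : ∀ f, (∀ i, 3 * ell n ≤ (f i).length) → RF (ell n) f → f ∈ B → f ∈ C) :
    ((Om A k n ∩ B).ncard : ℝ) ≤ (Om A k n ∩ C).ncard + exc A k n := by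
  have hsub : Om A k n ∩ B ⊆ (Om A k n ∩ C) ∪ ((Om A k n ∩ Short A k (3 * ell n)) ∪
      (Om A k n ∩ {f | ¬ RF (ell n) f})) := by
    rintro f ⟨h1, h2⟩
    by_cases h3 : f ∈ Short A k (3 * ell n)
    · exact Or.inr (Or.inl ⟨h1, h3⟩)
    by_cases h4 : RF (ell n) f
    · refine Or.inl ⟨h1, h f ?_ h4 h2⟩
      intro i
      by_contra hc
      exact h3 ⟨i, by omega⟩
    · exact Or.inr (Or.inr ⟨h1, h4⟩)
  have hfin := Om_finite (A := A) (k := k) n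
  have h5 := Set.ncard_le_ncard hsub ((hfin.inter_of_left _).union
    ((hfin.inter_of_left _).union (hfin.inter_of_left _)))
  have h6 := (h5.trans (Set.ncard_union_le _ _)).trans (Nat.add_le_add_left (Set.ncard_union_le _ _) _)
  unfold exc
  exact_mod_cast h6

theorem main (hA : 2 ≤ Fintype.card A) (hk : 1 ≤ k) :
    Filter.Tendsto (fun n : ℕ => (presCount (A := A) k n Canc : ℝ) /
        (presCount (A := A) k n (fun _ => True) : ℝ)) Filter.atTop
      (nhds (((Fintype.card A - 1 : ℝ) / (Fintype.card A : ℝ)) ^ (2 * k))) := by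
  set c := ((Fintype.card A - 1 : ℝ) / (Fintype.card A : ℝ)) ^ (2 * k) with hc
  have hfac : (k.factorial : ℝ) ≠ 0 := by exact_mod_cast k.factorial_ne_zero
  have hell : ∀ n, 3 ≤ ell n := fun n => by unfold ell; omega
  set T : ℕ → ℝ := fun n => (Om A k n).ncard with hTdef
  set X : ℕ → ℝ := fun n => (Om A k n ∩ {f | Function.Injective (pr f) ∧ Canc (Set.range (pr f))}).ncard with hX
  set I : ℕ → ℝ := fun n => (Om A k n ∩ {f | Function.Injective (pr f) ∧ True}).ncard with hI
  have hT : ∀ n, 0 < T n := Om_pos hA hk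
  have hEq : ∀ n, (presCount (A := A) k n Canc : ℝ) / (presCount (A := A) k n (fun _ => True) : ℝ) =
      (X n / T n) / (I n / T n) := by
    intro n
    have h1 : (presCount (A := A) k n Canc : ℝ) * k.factorial = X n := by
      simp only [hX, hI]
      exact_mod_cast presCount_mul (A := A) (k := k) n Canc
    have h2 : (presCount (A := A) k n (fun _ => True) : ℝ) * k.factorial = I n := by
      simp only [hX, hI]
      exact_mod_cast presCount_mul (A := A) (k := k) n (fun _ => True)
    rw [div_div_div_cancel_right₀ (hT n).ne', ← h1, ← h2, mul_div_mul_right _ _ hfac]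
  have hE := exc_tendsto hA hk
  have hIlim : Filter.Tendsto (fun n => I n / T n) Filter.atTop (nhds 1) := by
    have h1 : Filter.Tendsto (fun n => 1 - exc A k n / T n) Filter.atTop (nhds (1 - 0)) := hE.const_sub 1
    rw [sub_zero] at h1
    refine tendsto_of_tendsto_of_tendsto_of_le_of_le h1 tendsto_const_nhds (fun n => ?_) (fun n => ?_)
    · have h2 := ncard_le_exc (A := A) (k := k) (B := Set.univ)
        (C := {f | Function.Injective (pr f) ∧ True}) n (fun f h1 h2 _ => ⟨h2.pr_inj h1, trivial⟩)
      rw [Set.inter_univ] at h2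
      show 1 - exc A k n / T n ≤ I n / T n
      rw [sub_le_iff_le_add, ← add_div, le_div_iff₀ (hT n), one_mul]
      exact h2
    · show I n / T n ≤ 1
      rw [div_le_one (hT n)]
      simp only [hI, hTdef]
      exact_mod_cast Set.ncard_le_ncard Set.inter_subset_left (Om_finite n)
  have hXlim : Filter.Tendsto (fun n => X n / T n) Filter.atTop (nhds c) := by
    rw [tendsto_iff_norm_sub_tendsto_zero]
    have h1 : Filter.Tendsto (fun n => 2 * (exc A k n / T n)) Filter.atTop (nhds (2 * 0)) := hE.const_mul 2
    rw [mul_zero] at h1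
    refine squeeze_zero (fun n => norm_nonneg _) (fun n => ?_) h1
    have h2 := ncard_le_exc (A := A) (k := k) (B := {f | DE f})
        (C := {f | Function.Injective (pr f) ∧ Canc (Set.range (pr f))}) n
        (fun f h1 h2 h3 => ⟨h2.pr_inj h1, (h2.canc (by have := hell n; omega) h1).2 h3⟩)
    have h3 := ncard_le_exc (A := A) (k := k) (C := {f | DE f})
        (B := {f | Function.Injective (pr f) ∧ Canc (Set.range (pr f))}) n
        (fun f h1 h2 h3 => (h2.canc (by have := hell n; omega) h1).1 h3.2)
    have h4 := DE_ncard (k := k) hA n (3 * ell n) (by have := hell n; omega)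
    have h5 : ((Om A k n ∩ Short A k (3 * ell n)).ncard : ℝ) ≤ exc A k n := by
      unfold exc
      have : (0 : ℝ) ≤ (Om A k n ∩ {f | ¬ RF (ell n) f}).ncard := by positivity
      linarith
    have h6 : X n / T n - c = (X n - T n * c) / T n := by
      have := (hT n).ne'
      field_simp
    rw [h6, Real.norm_eq_abs, abs_div, abs_of_pos (hT n), ← mul_div_assoc]
    apply div_le_div_of_nonneg_right _ (hT n).le
    rw [abs_le] at h4 ⊢
    simp only [hX, hTdef]
    constructor <;> linarith [h4.1, h4.2]
  have := hXlim.div hIlim one_ne_zero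
  rw [div_one] at this
  exact this.congr fun n => (hEq n).symm

end final

end SmallOv

/-- **Theorem.** For a finite alphabet `A` with `|A| ≥ 2` and a positive integer `k`,
the proportion of `A`-generated `k`-relation presentations of sum relation length `n`
presenting a cancellative monoid tends to `((|A|-1)/|A|)^(2k)` as `n → ∞`. -/
theorem statement17 {A : Type*} [Fintype A] (hA : 2 ≤ Fintype.card A)
    (k : ℕ) (hk : 1 ≤ k) :
    Filter.Tendsto (fun n : ℕ =>
        (presCount (A := A) k n (fun R =>
          (∀ x y z : (presCon R).Quotient, x * y = x * z → y = z) ∧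
          (∀ x y z : (presCon R).Quotient, y * x = z * x → y = z)) : ℝ) /
        (presCount (A := A) k n (fun _ => True) : ℝ))
      Filter.atTop
      (nhds (((Fintype.card A - 1 : ℝ) / (Fintype.card A : ℝ)) ^ (2 * k))) := by
  exact SmallOv.main hA hk
end

section
/- Let 𝒞 be any class of monoids closed under isomorphism, let A be a finite alphabet with |A| ≥ 2, and let k be a positive integer. For each n, let q(n) denote the proportion of ordered presentations over A with k relations and sum relation length n (i.e., sequences of k pairs of words over A whose total length is n) presenting a monoid in 𝒞, and let p(n) denote the proportion of unordered presentations over A with k relations and sum relation length n (i.e., multisets of k pairs of words over A of total length n) presenting a monoid in 𝒞. Then q(n) − p(n) → 0 as n → ∞. -/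
open FreeMonoid

/-- The number of ordered presentations over `A` with `k` relations and sum relation
length `n` (sequences of `k` pairs of words) whose presented monoid satisfies `P`. -/
noncomputable def orderedCount (A : Type) (k n : ℕ)
    (P : (Q : Type) → [inst : Monoid Q] → Prop) : ℕ :=
  Nat.card {f : Fin k → FreeMonoid A × FreeMonoid A //
    (∑ i, ((f i).1.length + (f i).2.length)) = n ∧
    P (presCon (Set.range f)).Quotient}

/-- The number of unordered presentations over `A` with `k` relations and sum relation
length `n` (multisets of `k` pairs of words) whose presented monoid satisfies `P`. -/
noncomputable def unorderedCount (A : Type) (k n : ℕ)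
    (P : (Q : Type) → [inst : Monoid Q] → Prop) : ℕ :=
  Nat.card {R : Multiset (FreeMonoid A × FreeMonoid A) //
    Multiset.card R = k ∧ (R.map fun p => p.1.length + p.2.length).sum = n ∧
    P (presCon {p | p ∈ R}).Quotient}


open Classical in
lemma exists_perm_aux {X : Type} {k : ℕ} (f g : Fin k → X)
    (h : Finset.univ.val.map f = Finset.univ.val.map g) :
    ∃ σ : Equiv.Perm (Fin k), g = f ∘ σ := by
  have hc : ∀ c, Nonempty ({a // g a = c} ≃ {b // f b = c}) := by
    intro c
    have := congrArg (Multiset.count c) h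
    rw [Multiset.count_map, Multiset.count_map] at this
    refine Fintype.card_eq.1 ?_
    rw [Fintype.card_subtype, Fintype.card_subtype]
    simp only [Finset.card, Finset.filter_val]
    simpa [eq_comm] using this.symm
  refine ⟨Equiv.ofFiberEquiv (fun c => (hc c).some), ?_⟩
  funext a
  exact (Equiv.ofFiberEquiv_map _ a).symm

open Classical in
lemma image_card_aux {X : Type} {k : ℕ} (S : Finset (Fin k → X))
    (hS : ∀ f ∈ S, ∀ σ : Equiv.Perm (Fin k), f ∘ σ ∈ S) :
    S.card ≤ k.factorial * (S.image fun f => Finset.univ.val.map f).card ∧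
    k.factorial * (S.image fun f => Finset.univ.val.map f).card ≤
      S.card + k.factorial * (S.filter fun f => ¬ Function.Injective f).card := by
  set mk : (Fin k → X) → Multiset X := fun f => Finset.univ.val.map f with hmk
  have hfib : ∀ f ∈ S, (S.filter fun g => mk g = mk f) =
      Finset.univ.image (fun σ : Equiv.Perm (Fin k) => f ∘ σ) := by
    intro f hf
    ext g
    simp only [Finset.mem_filter, Finset.mem_image, Finset.mem_univ, true_and]
    constructor
    · rintro ⟨_, h⟩
      obtain ⟨σ, hσ⟩ := exists_perm_aux f g h.symm
      exact ⟨σ, hσ.symm⟩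
    · rintro ⟨σ, rfl⟩
      refine ⟨hS f hf σ, ?_⟩
      simp only [hmk]
      rw [← Multiset.map_map, Multiset.map_univ_val_equiv σ]
  have hcard : (Finset.univ : Finset (Equiv.Perm (Fin k))).card = k.factorial := by
    rw [Finset.card_univ, Fintype.card_perm, Fintype.card_fin]
  have hsum := Finset.card_eq_sum_card_image mk S
  constructor
  · rw [hsum, mul_comm, ← smul_eq_mul, ]
    refine Finset.sum_le_card_nsmul _ _ _ ?_
    intro R hR
    obtain ⟨f, hf, rfl⟩ := Finset.mem_image.1 hR
    rw [hfib f hf, ← hcard]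
    exact Finset.card_image_le
  · have h1 : (S.image mk).filter (fun R => ¬ R.Nodup) ⊆
        (S.filter fun f => ¬ Function.Injective f).image mk := by
      intro R hR
      obtain ⟨hR, hn⟩ := Finset.mem_filter.1 hR
      obtain ⟨f, hf, rfl⟩ := Finset.mem_image.1 hR
      refine Finset.mem_image.2 ⟨f, Finset.mem_filter.2 ⟨hf, fun hi => hn ?_⟩, rfl⟩
      exact Multiset.Nodup.map hi Finset.univ.nodup
    have h2 := (Finset.card_le_card h1).trans Finset.card_image_le
    calc k.factorial * (S.image mk).card
        = ∑ R ∈ S.image mk, k.factorial := by rw [Finset.sum_const, smul_eq_mul, mul_comm]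
      _ ≤ ∑ R ∈ S.image mk, ((S.filter fun g => mk g = R).card +
            if ¬ R.Nodup then k.factorial else 0) := by
          refine Finset.sum_le_sum ?_
          intro R hR
          obtain ⟨f, hf, rfl⟩ := Finset.mem_image.1 hR
          by_cases hi : (mk f).Nodup
          · have hinj : Function.Injective f := by
              intro a b hab
              exact Multiset.inj_on_of_nodup_map hi a (by simp) b (by simp) hab
            rw [hfib f hf, Finset.card_image_of_injective, hcard]
            · omega
            · intro σ τ h
              ext a
              exact congrArg _ (hinj (congrFun h a))
          · simp [hi]
      _ = S.card + k.factorial * ((S.image mk).filter (fun R => ¬ R.Nodup)).card := by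
          rw [Finset.sum_add_distrib, ← hsum, ← Finset.sum_filter, Finset.sum_const,
            smul_eq_mul, mul_comm k.factorial]
      _ ≤ _ := by gcongr

lemma finite_words_aux {I A : Type} [Fintype I] [Finite A] (n : ℕ) :
    {F : I → List A | ∑ i, (F i).length = n}.Finite := by
  refine (Set.Finite.pi' (fun _ : I => List.finite_length_le A n)).subset ?_
  intro F hF i
  simp only [Set.mem_ofPred_eq] at hF ⊢
  rw [← hF]
  exact Finset.single_le_sum (f := fun i => (F i).length) (fun _ _ => Nat.zero_le _)
    (Finset.mem_univ i)

lemma words_count_aux {I A : Type} [Fintype I] [DecidableEq I] [Finite A] (n : ℕ) :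
    Nat.card {F : I → List A // (∑ i, (F i).length = n) ∧
      ∃ x y e, x ≠ y ∧ x ≠ e ∧ y ≠ e ∧ F x = F y ∧ n / Fintype.card I ≤ (F e).length}
      * (n / Fintype.card I + 1) ≤
    Nat.card {F : I → List A // ∑ i, (F i).length = n} * Fintype.card I ^ 3 := by
  have hfin := finite_words_aux (I := I) (A := A) n
  have : Finite {F : I → List A // ∑ i, (F i).length = n} := hfin
  set m := n / Fintype.card I
  have hD : ∀ D : {F : I → List A // (∑ i, (F i).length = n) ∧
      ∃ x y e, x ≠ y ∧ x ≠ e ∧ y ≠ e ∧ F x = F y ∧ m ≤ (F e).length},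
      ∃ x y e, x ≠ y ∧ x ≠ e ∧ y ≠ e ∧ D.1 x = D.1 y ∧ m ≤ (D.1 e).length := fun D => D.2.2
  choose x y e hxy hxe hye hF hm using hD
  let T : (I → List A) → I → I → ℕ → I → List A := fun F x e t =>
    Function.update (Function.update F x (F x ++ (F e).take t)) e ((F e).drop t)
  have hT : ∀ (F : I → List A) (x e : I) (t : ℕ), x ≠ e →
      ∑ i, (T F x e t i).length = ∑ i, (F i).length := by
    intro F x e t h
    rw [← Finset.add_sum_erase _ _ (Finset.mem_univ e),
      ← Finset.add_sum_erase _ (fun i => (F i).length) (Finset.mem_univ e),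
      ← Finset.add_sum_erase _ _ (Finset.mem_erase.2 ⟨h, Finset.mem_univ x⟩),
      ← Finset.add_sum_erase _ (fun i => (F i).length)
        (Finset.mem_erase.2 ⟨h, Finset.mem_univ x⟩)]
    have : ∑ i ∈ (Finset.univ.erase e).erase x, (T F x e t i).length =
        ∑ i ∈ (Finset.univ.erase e).erase x, (F i).length := by
      refine Finset.sum_congr rfl fun i hi => ?_
      simp only [Finset.mem_erase] at hi
      simp [T, hi.1, hi.2.1]
    rw [this]
    simp [T, h]
    omega
  have := Nat.card_le_card_of_injective
    (fun p : {F : I → List A // (∑ i, (F i).length = n) ∧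
      ∃ x y e, x ≠ y ∧ x ≠ e ∧ y ≠ e ∧ F x = F y ∧ m ≤ (F e).length} × Fin (m + 1) =>
      ((⟨T p.1.1 (x p.1) (e p.1) p.2, by rw [hT _ _ _ _ (hxe p.1)]; exact p.1.2.1⟩ :
        {F : I → List A // ∑ i, (F i).length = n}), (x p.1, y p.1, e p.1))) ?_
  · simpa [Nat.card_prod, pow_succ, mul_assoc] using this
  · rintro ⟨D, t⟩ ⟨D', t'⟩ h
    simp only [Prod.mk.injEq, Subtype.mk.injEq] at h
    obtain ⟨h, h1, h2, h3⟩ := h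
    have hFD := hF D
    have hFD' := hF D'
    have a1 := hxy D
    have a2 := hxe D
    have a3 := hye D
    have hmD := hm D
    have hmD' := hm D'
    rw [← h1, ← h2] at hFD'
    rw [← h1, ← h3] at h
    rw [← h3] at hmD'
    generalize x D = X at *
    generalize y D = Y at *
    generalize e D = E at *
    have hY := congrFun h Y
    have hX := congrFun h X
    have hE := congrFun h E
    simp [T, a1.symm, a2, a3] at hY hX hE
    have hXX : D.1 X = D'.1 X := by rw [hFD, hFD', hY]
    rw [hXX] at hX
    have hX := List.append_cancel_left hX
    have hl := congrArg List.length hX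
    rw [List.length_take, List.length_take] at hl
    have ht := t.2
    have ht' := t'.2
    have htt : t.1 = t'.1 := by omega
    have hEE : D.1 E = D'.1 E := by
      rw [← List.take_append_drop t.1 (D.1 E), hX, hE, List.take_append_drop]
    refine Prod.ext (Subtype.ext (funext fun i => ?_)) (Fin.ext htt)
    by_cases hi : i = E
    · subst hi; exact hEE
    by_cases hi' : i = X
    · subst hi'; exact hXX
    have := congrFun h i
    simpa [T, hi, hi'] using this

/-- The word functions attached to a sequence of relations. -/
def relWordsEquiv (A : Type) (k : ℕ) :
    (Fin k → FreeMonoid A × FreeMonoid A) ≃ (Fin k × Bool → List A) where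
  toFun f p := if p.2 then (f p.1).1.toList else (f p.1).2.toList
  invFun F i := (FreeMonoid.ofList (F (i, true)), FreeMonoid.ofList (F (i, false)))
  left_inv f := by funext i; simp
  right_inv F := by
    funext p
    obtain ⟨i, b⟩ := p
    cases b <;> simp

lemma relWords_sum {A : Type} {k : ℕ} (f : Fin k → FreeMonoid A × FreeMonoid A) :
    ∑ p, (relWordsEquiv A k f p).length = ∑ i, ((f i).1.length + (f i).2.length) := by
  rw [Fintype.sum_prod_type]
  refine Finset.sum_congr rfl fun i _ => ?_
  simp [relWordsEquiv, FreeMonoid.length]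

lemma ordered_finite_aux {A : Type} [Finite A] (k n : ℕ) :
    {f : Fin k → FreeMonoid A × FreeMonoid A |
      (∑ i, ((f i).1.length + (f i).2.length)) = n}.Finite := by
  have := (finite_words_aux (I := Fin k × Bool) (A := A) n).preimage
    (relWordsEquiv A k).injective.injOn
  refine this.subset fun f hf => ?_
  simp only [Set.mem_preimage, Set.mem_ofPred_eq] at hf ⊢
  rw [relWords_sum, hf]

lemma noninj_count_aux {A : Type} [Finite A] (k n : ℕ) :
    Nat.card {f : Fin k → FreeMonoid A × FreeMonoid A //
      (∑ i, ((f i).1.length + (f i).2.length)) = n ∧ ¬ Function.Injective f}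
      * (n / (2 * k) + 1) ≤
    Nat.card {f : Fin k → FreeMonoid A × FreeMonoid A //
      (∑ i, ((f i).1.length + (f i).2.length)) = n} * (2 * k) ^ 3 := by
  have hc : Fintype.card (Fin k × Bool) = 2 * k := by simp [mul_comm]
  have h := words_count_aux (I := Fin k × Bool) (A := A) n
  rw [hc] at h
  have hfin := finite_words_aux (I := Fin k × Bool) (A := A) n
  have h1 : Nat.card {F : Fin k × Bool → List A // ∑ i, (F i).length = n} =
      Nat.card {f : Fin k → FreeMonoid A × FreeMonoid A //
      (∑ i, ((f i).1.length + (f i).2.length)) = n} := by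
    refine (Nat.card_congr ((relWordsEquiv A k).subtypeEquiv fun f => ?_)).symm
    rw [relWords_sum]
  rw [h1] at h
  refine le_trans (Nat.mul_le_mul_right _ ?_) h
  have : Finite {F : Fin k × Bool → List A // (∑ i, (F i).length = n) ∧
      ∃ x y e, x ≠ y ∧ x ≠ e ∧ y ≠ e ∧ F x = F y ∧ n / (2 * k) ≤ (F e).length} :=
    hfin.subset fun F hF => hF.1
  refine Nat.card_le_card_of_injective
    (fun f => ⟨relWordsEquiv A k f.1, ?_, ?_⟩) ?_
  · rw [relWords_sum, f.2.1]
  · obtain ⟨f, hf, hn⟩ := f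
    rw [← relWords_sum] at hf
    simp only [Function.Injective, not_forall] at hn
    obtain ⟨i, j, hij, hne⟩ := hn
    have key : ∃ e, n / (2 * k) ≤ (relWordsEquiv A k f e).length := by
      by_contra! hlt
      have : Nonempty (Fin k × Bool) := ⟨(i, true)⟩
      have := Finset.sum_lt_sum_of_nonempty (s := Finset.univ) Finset.univ_nonempty
        (fun e _ => hlt e)
      rw [hf, Finset.sum_const, Finset.card_univ, hc, smul_eq_mul] at this
      have := Nat.mul_div_le n (2 * k)
      omega
    obtain ⟨⟨l, b⟩, he⟩ := key
    by_cases hl : l = i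
    · subst hl
      refine ⟨(l, !b), (j, !b), (l, b), ?_, ?_, ?_, ?_, he⟩
      · simpa using hne
      · simp
      · simp
      · simp [relWordsEquiv, hij]
    · refine ⟨(i, !b), (j, !b), (l, b), ?_, ?_, ?_, ?_, he⟩
      · simpa using hne
      · simp
      · simp
      · simp [relWordsEquiv, hij]
  · intro f g h
    exact Subtype.ext ((relWordsEquiv A k).injective (congrArg Subtype.val h))

open Classical in
lemma counts_aux {A : Type} [Finite A] (k n : ℕ)
    (P : (Q : Type) → [inst : Monoid Q] → Prop) :
    ∃ S : Finset (Fin k → FreeMonoid A × FreeMonoid A),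
      (∀ f, f ∈ S ↔ (∑ i, ((f i).1.length + (f i).2.length)) = n ∧
        P (presCon (Set.range f)).Quotient) ∧
      orderedCount A k n P = S.card ∧
      unorderedCount A k n P = (S.image fun f => Finset.univ.val.map f).card := by
  have hfin : {f : Fin k → FreeMonoid A × FreeMonoid A |
      (∑ i, ((f i).1.length + (f i).2.length)) = n ∧
        P (presCon (Set.range f)).Quotient}.Finite :=
    (ordered_finite_aux k n).subset fun f hf => hf.1
  have hmem : ∀ f, f ∈ hfin.toFinset ↔ (∑ i, ((f i).1.length + (f i).2.length)) = n ∧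
        P (presCon (Set.range f)).Quotient := fun f => by simp
  refine ⟨hfin.toFinset, hmem, ?_, ?_⟩
  · exact Nat.subtype_card _ hmem
  · refine Nat.subtype_card _ fun R => ?_
    have hset : ∀ f : Fin k → FreeMonoid A × FreeMonoid A,
        {p | p ∈ Finset.univ.val.map f} = Set.range f := by
      intro f
      ext p
      simp only [Set.mem_ofPred_eq, Multiset.mem_map, Finset.mem_val, Finset.mem_univ, true_and,
        Set.mem_range]
    rw [Finset.mem_image]
    constructor
    · rintro ⟨f, hf, rfl⟩
      rw [hmem] at hf
      refine ⟨by simp, ?_, ?_⟩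
      · rw [Multiset.map_map]
        exact hf.1
      · rw [hset]
        exact hf.2
    · rintro ⟨h1, h2, h3⟩
      obtain ⟨f, rfl⟩ : ∃ f : Fin k → FreeMonoid A × FreeMonoid A,
          Finset.univ.val.map f = R := by
        subst h1
        induction R using Quotient.inductionOn with
        | _ L =>
          refine ⟨fun i => L.get i, ?_⟩
          rw [Fin.univ_val_map]
          exact congrArg _ (List.ofFn_get L)
      refine ⟨f, (hmem f).2 ⟨?_, ?_⟩, rfl⟩
      · rw [Multiset.map_map] at h2
        exact h2
      · rw [hset] at h3
        exact h3

lemma real_bound_aux (o u O U D K : ℝ) (ho : 0 ≤ o) (hD : 0 ≤ D) (hK : 0 < K)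
    (hO : 0 < O) (hoO : o ≤ O)
    (h1 : o ≤ K * u) (h2 : K * u ≤ o + K * D) (h3 : O ≤ K * U) (h4 : K * U ≤ O + K * D) :
    |o / O - u / U| ≤ K * (D / O) := by
  have hU : 0 < U := by
    by_contra! h
    nlinarith
  rw [div_sub_div _ _ hO.ne' hU.ne', abs_div, abs_of_pos (mul_pos hO hU), mul_div_assoc',
    div_le_div_iff₀ (mul_pos hO hU) hO]
  have hKD : 0 ≤ K * D := by positivity
  have a1 : o * (K * U) ≤ o * (O + K * D) := by gcongr
  have a2 : o * O ≤ (K * u) * O := by gcongr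
  have a3 : o * O ≤ o * (K * U) := by gcongr
  have a4 : (K * u) * O ≤ (o + K * D) * O := by gcongr
  have a5 : o * (K * D) ≤ (K * U) * (K * D) := by gcongr; linarith
  have a6 : O * (K * D) ≤ (K * U) * (K * D) := by gcongr
  have : |o * U - O * u| ≤ K * D * U := by
    rw [abs_le]
    constructor
    · refine le_of_mul_le_mul_left ?_ hK
      linarith
    · refine le_of_mul_le_mul_left ?_ hK
      linarith
  calc _ ≤ K * D * U * O := by gcongr
    _ = _ := by ring

open Classical in
lemma main_bound_aux (C : (Q : Type) → [inst : Monoid Q] → Prop)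
    (A : Type) [Finite A] (k n : ℕ) :
    |(orderedCount A k n C : ℝ) / (orderedCount A k n (fun _ => True) : ℝ) -
        (unorderedCount A k n C : ℝ) / (unorderedCount A k n (fun _ => True) : ℝ)| ≤
      (k.factorial * (2 * k) ^ 3 : ℝ) / ((n / (2 * k) : ℕ) + 1 : ℝ) := by
  obtain ⟨S, hS, ho, hu⟩ := counts_aux (A := A) k n C
  obtain ⟨S', hS', ho', hu'⟩ := counts_aux (A := A) k n (fun _ => True)
  have hsum : ∀ (f : Fin k → FreeMonoid A × FreeMonoid A) (σ : Equiv.Perm (Fin k)),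
      ∑ i, (((f ∘ σ) i).1.length + ((f ∘ σ) i).2.length) =
      ∑ i, ((f i).1.length + (f i).2.length) := fun f σ =>
    Equiv.sum_comp σ (fun i => (f i).1.length + (f i).2.length)
  have hp : ∀ f ∈ S, ∀ σ : Equiv.Perm (Fin k), f ∘ σ ∈ S := by
    intro f hf σ
    rw [hS] at hf ⊢
    rw [hsum, σ.surjective.range_comp]
    exact hf
  have hp' : ∀ f ∈ S', ∀ σ : Equiv.Perm (Fin k), f ∘ σ ∈ S' := by
    intro f hf σ
    rw [hS'] at hf ⊢
    rw [hsum]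
    exact hf
  have hsub : S ⊆ S' := fun f hf => (hS' f).2 ⟨((hS f).1 hf).1, trivial⟩
  obtain ⟨b1, b2⟩ : S.card ≤ k.factorial * (S.image fun f => Finset.univ.val.map f).card ∧
      k.factorial * (S.image fun f => Finset.univ.val.map f).card ≤
      S.card + k.factorial * (S.filter fun f => ¬ Function.Injective f).card := by
    convert image_card_aux S hp
  obtain ⟨b3, b4⟩ : S'.card ≤ k.factorial * (S'.image fun f => Finset.univ.val.map f).card ∧
      k.factorial * (S'.image fun f => Finset.univ.val.map f).card ≤
      S'.card + k.factorial * (S'.filter fun f => ¬ Function.Injective f).card := by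
    convert image_card_aux S' hp'
  have hd : (S.filter fun f => ¬ Function.Injective f).card ≤
      (S'.filter fun f => ¬ Function.Injective f).card :=
    Finset.card_le_card (Finset.filter_subset_filter _ hsub)
  have hD := noninj_count_aux (A := A) k n
  rw [Nat.subtype_card (S'.filter fun f => ¬ Function.Injective f) (by
      intro f; rw [Finset.mem_filter, hS']; simp), Nat.subtype_card S' (by
      intro f; rw [hS']; simp)] at hD
  have b2 := b2.trans (by gcongr : S.card + _ ≤ S.card + k.factorial *
    (S'.filter fun f => ¬ Function.Injective f).card)
  have hle := Finset.card_le_card hsub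
  rw [ho, ho', hu, hu']
  generalize (S'.filter fun f => ¬ Function.Injective f).card = D at *
  generalize (S.image fun f => Finset.univ.val.map f).card = u at *
  generalize (S'.image fun f => Finset.univ.val.map f).card = U at *
  generalize S.card = o at *
  generalize S'.card = O at *
  rcases Nat.eq_zero_or_pos O with h0 | h0
  · subst h0
    have hD0 : D = 0 := by
      rw [zero_mul] at hD
      have := Nat.le_zero.1 hD
      simpa using this
    subst hD0
    have : U = 0 := by
      have hk := k.factorial_pos
      have : k.factorial * U = 0 := by omega
      simpa [hk.ne'] using this
    subst this
    simp
    positivity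
  · have h := real_bound_aux (o := o) (u := u) (O := O) (U := U) (D := D) (K := k.factorial)
      (by positivity) (by positivity) (by exact_mod_cast k.factorial_pos)
      (by exact_mod_cast h0) (by exact_mod_cast hle) (by exact_mod_cast b1)
      (by exact_mod_cast b2) (by exact_mod_cast b3) (by exact_mod_cast b4)
    refine h.trans ?_
    rw [mul_div_assoc]
    refine mul_le_mul_of_nonneg_left ?_ (by positivity)
    rw [div_le_div_iff₀ (by exact_mod_cast h0) (by positivity)]
    have : (D : ℝ) * ((n / (2 * k) : ℕ) + 1) ≤ O * (2 * k) ^ 3 := by exact_mod_cast hD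
    linarith


/-- **Theorem.** Let `𝒞` be any isomorphism-closed class of monoids, `A` a finite
alphabet with `|A| ≥ 2` and `k` a positive integer. Then the proportion of ordered
`A`-generated `k`-relation presentations of sum relation length `n` presenting a monoid
in `𝒞` converges with the corresponding proportion of unordered presentations, as
`n → ∞`. -/
theorem statement18 (C : (Q : Type) → [inst : Monoid Q] → Prop)
    (hC : ∀ (Q Q' : Type) [Monoid Q] [Monoid Q'], (Q ≃* Q') → (C Q ↔ C Q'))
    (A : Type) [Fintype A] (hA : 2 ≤ Fintype.card A) (k : ℕ) (hk : 1 ≤ k) :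
    Filter.Tendsto (fun n : ℕ =>
        (orderedCount A k n C : ℝ) / (orderedCount A k n (fun _ => True) : ℝ) -
        (unorderedCount A k n C : ℝ) / (unorderedCount A k n (fun _ => True) : ℝ))
      Filter.atTop (nhds 0) := by
  have ht : Filter.Tendsto (fun n : ℕ =>
      (k.factorial * (2 * k) ^ 3 : ℝ) / ((n / (2 * k) : ℕ) + 1 : ℝ))
      Filter.atTop (nhds 0) := by
    have h1 : Filter.Tendsto (fun n : ℕ => n / (2 * k)) Filter.atTop Filter.atTop :=
      Nat.tendsto_div_const_atTop (by omega)
    refine Filter.Tendsto.div_atTop tendsto_const_nhds ?_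
    exact Filter.tendsto_atTop_add_const_right _ _
      (tendsto_natCast_atTop_atTop.comp h1)
  exact squeeze_zero_norm (fun n => main_bound_aux C A k n) ht
end
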